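/- arXiv:0804.3169 — 2 statements merged into one kernel-verified Lean document; each statement's English description precedes it below -/
import Mathlib

section
/- Let X be a spectrally negative Lévy process with non-monotone paths such that the law of X_t is atomless for every t>0, and suppose E[e^{θ₀X_1}]<∞ for some θ₀>0. Assume γ>0 and 0<ψ'(γ)<∞. Fix v with 0<v<ψ'(γ) and suppose there exists Γ(v)∈Θ° with ψ'(Γ(v))=v. Then for all sequences t_n→∞ and x_n with (x_n−v t_n)/t_n^{1/2}→0, one has lim_{n→∞} e^{γ x_n} P(τ(x_n) ≤ t_n) = 1. (This is the case 0<v<ψ'(γ) of the paper's main Theorem, whose Cramér constant C_γ equals 1 for spectrally negative processes by Remark 1(a).) -/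
open MeasureTheory ProbabilityTheory Filter Set

/-- A (real-valued) Lévy process: `X 0 = 0` a.s., a.s. càdlàg paths on `[0,∞)`,
and stationary independent increments. -/
structure LevyProcess {Ω : Type*} [MeasurableSpace Ω] (P : Measure Ω)
    (X : ℝ → Ω → ℝ) : Prop where
  meas : ∀ t : ℝ, Measurable (X t)
  init : ∀ᵐ ω ∂P, X 0 ω = 0
  rightCont : ∀ᵐ ω ∂P, ∀ t : ℝ, 0 ≤ t →
    ContinuousWithinAt (fun s => X s ω) (Set.Ici t) t
  leftLimits : ∀ᵐ ω ∂P, ∀ t : ℝ, 0 < t →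
    ∃ l : ℝ, Filter.Tendsto (fun s => X s ω) (nhdsWithin t (Set.Ico 0 t)) (nhds l)
  stat : ∀ s t : ℝ, 0 ≤ s → s ≤ t →
    Measure.map (fun ω => X t ω - X s ω) P = Measure.map (X (t - s)) P
  indep : ∀ s t : ℝ, 0 ≤ s → s ≤ t →
    Indep (⨆ u ∈ Set.Icc (0:ℝ) s, MeasurableSpace.comap (X u) inferInstance)
      (MeasurableSpace.comap (fun ω => X t ω - X s ω) inferInstance) P

/-- The Laplace exponent `ψ(θ) = log E[exp (θ W)]`. -/
noncomputable def laplaceExponent {Ω : Type*} [MeasurableSpace Ω] (P : Measure Ω)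
    (W : Ω → ℝ) (θ : ℝ) : ℝ :=
  Real.log (∫ ω, Real.exp (θ * W ω) ∂P)

/-- The domain `Θ = {θ : E[exp (θ W)] < ∞}` of the Laplace exponent. -/
def laplaceDomain {Ω : Type*} [MeasurableSpace Ω] (P : Measure Ω)
    (W : Ω → ℝ) : Set ℝ :=
  {θ : ℝ | Integrable (fun ω => Real.exp (θ * W ω)) P}

/-- Uniform control of upward increments for a càdlàg path without positive jumps. -/
lemma path_upward (f : ℝ → ℝ)
    (hr : ∀ t : ℝ, 0 ≤ t → ContinuousWithinAt f (Set.Ici t) t)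
    (hl : ∀ t : ℝ, 0 < t → ∃ l : ℝ, Tendsto f (nhdsWithin t (Set.Ico 0 t)) (nhds l))
    (hs : ∀ t : ℝ, 0 < t → f t ≤ Function.leftLim f t)
    (T δ : ℝ) (hδ : 0 < δ) :
    ∃ η > 0, ∀ s u : ℝ, 0 ≤ s → s ≤ u → u ≤ T → u - s < η → f u - f s ≤ δ := by
  have loc : ∀ a : ℝ, 0 ≤ a → ∃ U : Set ℝ, IsOpen U ∧ a ∈ U ∧
      ∀ s ∈ U, ∀ u ∈ U, 0 ≤ s → s ≤ u → f u - f s ≤ δ := by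
    intro a ha
    have h1 : ∀ᶠ s in nhds a, s ∈ Set.Ici a → |f s - f a| < δ / 2 := by
      have := (Metric.tendsto_nhds.1 (hr a ha)) (δ / 2) (by positivity)
      rw [eventually_nhdsWithin_iff] at this
      simpa [Real.dist_eq] using this
    have h2 : ∃ l : ℝ, ∀ᶠ s in nhds a, (s ∈ Set.Ico 0 a → |f s - l| < δ / 2 ∧ f a ≤ l) := by
      rcases ha.eq_or_lt with rfl | ha'
      · exact ⟨0, by simp⟩
      · obtain ⟨l, h⟩ := hl a ha'
        refine ⟨l, ?_⟩
        have hle : f a ≤ l := by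
          have h' : Tendsto f (nhdsWithin a (Set.Iio a)) (nhds l) := by
            rwa [nhdsWithin_Ico_eq_nhdsLT ha'] at h
          have := leftLim_eq_of_tendsto h'
          rw [← this]; exact hs a ha'
        have := (Metric.tendsto_nhds.1 h) (δ / 2) (by positivity)
        rw [eventually_nhdsWithin_iff] at this
        filter_upwards [this] with s hs' hm
        exact ⟨by simpa [Real.dist_eq] using hs' hm, hle⟩
    obtain ⟨l, h2⟩ := h2
    obtain ⟨U, hU, hUo, haU⟩ := eventually_nhds_iff.1 (h1.and h2)
    refine ⟨U, hUo, haU, ?_⟩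
    intro s hsU u huU hs0 hsu
    rcases le_or_gt a s with has | has
    · have e1 := abs_lt.1 ((hU s hsU).1 has)
      have e2 := abs_lt.1 ((hU u huU).1 (has.trans hsu))
      linarith [e1.1, e2.2]
    · obtain ⟨e1, e3⟩ := (hU s hsU).2 ⟨hs0, has⟩
      have e1 := abs_lt.1 e1
      rcases le_or_gt a u with hau | hau
      · have e2 := abs_lt.1 ((hU u huU).1 hau)
        linarith [e1.1, e2.2]
      · have e2 := abs_lt.1 ((hU u huU).2 ⟨hs0.trans hsu, hau⟩).1
        linarith [e1.1, e2.2]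
  choose! U hUo hUa hU using loc
  obtain ⟨η, hη, h⟩ := lebesgue_number_lemma_of_metric (s := Set.Icc 0 T)
    (c := fun i : Set.Icc (0:ℝ) T => U i) isCompact_Icc (fun i => hUo i i.2.1)
    (fun a ha => Set.mem_iUnion.2 ⟨⟨a, ha⟩, hUa a ha.1⟩)
  refine ⟨η, hη, fun s u hs0 hsu huT hlt => ?_⟩
  obtain ⟨i, hi⟩ := h s ⟨hs0, hsu.trans huT⟩
  refine hU i i.2.1 s (hi (Metric.mem_ball_self hη)) u (hi ?_) hs0 hsu
  rw [Metric.mem_ball, Real.dist_eq, abs_of_nonneg (by linarith)]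
  exact hlt

section Levy
variable {Ω : Type*} [MeasurableSpace Ω] {P : Measure Ω} {X : ℝ → Ω → ℝ}

/-- Exponential density `e^{θ X_t}`. -/
noncomputable def expd (X : ℝ → Ω → ℝ) (θ t : ℝ) (ω : Ω) : ENNReal :=
  ENNReal.ofReal (Real.exp (θ * X t ω))

lemma expd_meas (hX : LevyProcess P X) (θ t : ℝ) : Measurable (expd X θ t) := by
  unfold expd
  have := hX.meas t
  fun_prop

/-- the natural filtration -/
@[reducible]
def natF (X : ℝ → Ω → ℝ) (s : ℝ) : MeasurableSpace Ω :=
  ⨆ u ∈ Set.Icc (0:ℝ) s, MeasurableSpace.comap (X u) inferInstance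

lemma natF_le (hX : LevyProcess P X) (s : ℝ) : natF X s ≤ ‹MeasurableSpace Ω› :=
  iSup₂_le fun u _ => (hX.meas u).comap_le

lemma natF_meas {s u : ℝ} (h0 : 0 ≤ u) (hu : u ≤ s) : Measurable[natF X s] (X u) := by
  rw [measurable_iff_comap_le]
  exact le_iSup₂_of_le (f := fun u (_ : u ∈ Set.Icc (0:ℝ) s) =>
    MeasurableSpace.comap (X u) inferInstance) u ⟨h0, hu⟩ le_rfl

lemma setLIntegral_expd (hX : LevyProcess P X) (θ : ℝ) {s t : ℝ} (hs : 0 ≤ s) (hst : s ≤ t)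
    {A : Set Ω} (hA : MeasurableSet[natF X s] A) :
    ∫⁻ ω in A, expd X θ t ω ∂P =
      (∫⁻ ω in A, expd X θ s ω ∂P) * ∫⁻ ω, expd X θ (t - s) ω ∂P := by
  have hA' : MeasurableSet A := natF_le hX s A hA
  have hF : Measurable[natF X s] (A.indicator (expd X θ s)) := by
    refine Measurable.indicator ?_ hA
    unfold expd
    exact ENNReal.measurable_ofReal.comp
      (Real.measurable_exp.comp ((natF_meas hs le_rfl).const_mul θ))
  have hG : Measurable[MeasurableSpace.comap (fun ω => X t ω - X s ω) inferInstance]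
      (fun ω => ENNReal.ofReal (Real.exp (θ * (X t ω - X s ω)))) := by
    exact ENNReal.measurable_ofReal.comp
      (Real.measurable_exp.comp ((comap_measurable _).const_mul θ))
  have key := lintegral_mul_eq_lintegral_mul_lintegral_of_independent_measurableSpace
    (natF_le hX s) (((hX.meas t).sub (hX.meas s)).comap_le) (hX.indep s t hs hst) hF hG
  have e1 : ∫⁻ ω, ENNReal.ofReal (Real.exp (θ * (X t ω - X s ω))) ∂P =
      ∫⁻ ω, expd X θ (t - s) ω ∂P := by
    have hm : Measurable (fun y : ℝ => ENNReal.ofReal (Real.exp (θ * y))) := by fun_prop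
    have a1 := lintegral_map (μ := P) hm ((hX.meas t).sub (hX.meas s))
    have a2 := lintegral_map (μ := P) hm (hX.meas (t - s))
    have a3 := hX.stat s t hs hst
    calc _ = _ := a1.symm
      _ = _ := by
        have : Measure.map (X t - X s) P = Measure.map (X (t - s)) P := a3
        rw [this]
      _ = _ := a2
  rw [e1, lintegral_indicator hA'] at key
  rw [← key, ← lintegral_indicator hA']
  refine lintegral_congr fun ω => ?_
  by_cases h : ω ∈ A
  · simp only [Pi.mul_apply, Set.indicator_of_mem h, expd]
    rw [← ENNReal.ofReal_mul (Real.exp_pos _).le, ← Real.exp_add]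
    congr 2; ring
  · simp [Set.indicator_of_notMem h]

lemma lintegral_expd_add (hX : LevyProcess P X) (θ : ℝ) {s u : ℝ} (hs : 0 ≤ s) (hu : 0 ≤ u) :
    ∫⁻ ω, expd X θ (s + u) ω ∂P =
      (∫⁻ ω, expd X θ s ω ∂P) * ∫⁻ ω, expd X θ u ω ∂P := by
  have := setLIntegral_expd hX θ hs (t := s + u) (by linarith) (A := Set.univ) MeasurableSet.univ
  simpa using this

lemma lintegral_expd_zero [IsProbabilityMeasure P] (hX : LevyProcess P X) (θ : ℝ) :
    ∫⁻ ω, expd X θ 0 ω ∂P = 1 := by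
  have : ∫⁻ ω, expd X θ 0 ω ∂P = ∫⁻ ω, 1 ∂P := by
    refine lintegral_congr_ae ?_
    filter_upwards [hX.init] with ω h
    simp [expd, h]
  simpa using this

lemma lintegral_expd_nat_mul [IsProbabilityMeasure P] (hX : LevyProcess P X) (θ : ℝ) {s : ℝ}
    (hs : 0 ≤ s) (k : ℕ) :
    ∫⁻ ω, expd X θ (k * s) ω ∂P = (∫⁻ ω, expd X θ s ω ∂P) ^ k := by
  induction k with
  | zero => simpa using lintegral_expd_zero hX θ
  | succ k ih =>
    rw [pow_succ, ← ih, ← lintegral_expd_add hX θ (by positivity) hs]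
    push_cast; ring_nf

/-- the first-entrance events along a grid -/
def firstEv (X : ℝ → Ω → ℝ) (s : ℕ → ℝ) (x : ℝ) (k : ℕ) : Set Ω :=
  {ω | x < X (s k) ω ∧ ∀ j < k, X (s j) ω ≤ x}

/-- passage events along a grid -/
def passEv (X : ℝ → Ω → ℝ) (s : ℕ → ℝ) (x : ℝ) (n : ℕ) : Set Ω :=
  {ω | ∃ k ≤ n, x < X (s k) ω}

lemma firstEv_meas {s : ℕ → ℝ} (hs0 : ∀ k, 0 ≤ s k) (hsm : Monotone s) (x : ℝ) (k : ℕ) :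
    MeasurableSet[natF X (s k)] (firstEv X s x k) := by
  have : firstEv X s x k = {ω | x < X (s k) ω} ∩ ⋂ j, ⋂ (_ : j < k), {ω | X (s j) ω ≤ x} := by
    ext ω; simp [firstEv]
  rw [this]
  refine MeasurableSet.inter ?_ ?_
  · exact (natF_meas (hs0 k) le_rfl) measurableSet_Ioi
  · refine MeasurableSet.iInter fun j => MeasurableSet.iInter fun hj => ?_
    exact (natF_meas (hs0 j) (hsm hj.le)) measurableSet_Iic

lemma firstEv_disj (s : ℕ → ℝ) (x : ℝ) : Pairwise (Function.onFun Disjoint (firstEv X s x)) := by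
  intro i j hij
  rw [Function.onFun, Set.disjoint_left]
  rintro ω ⟨h1, h2⟩ ⟨h3, h4⟩
  rcases lt_or_gt_of_ne hij with h | h
  · exact absurd h1 (not_lt.2 (h4 i h))
  · exact absurd h3 (not_lt.2 (h2 j h))

lemma passEv_eq (s : ℕ → ℝ) (x : ℝ) (n : ℕ) :
    passEv X s x n = ⋃ k ∈ Finset.range (n + 1), firstEv X s x k := by
  classical
  ext ω
  simp only [passEv, firstEv, Set.mem_ofPred_eq, Set.mem_iUnion, Finset.mem_range]
  constructor
  · rintro ⟨k, hk, h⟩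
    have hex : ∃ k, x < X (s k) ω := ⟨k, h⟩
    refine ⟨Nat.find hex, ?_, Nat.find_spec hex, fun j hj => not_lt.1 (Nat.find_min hex hj)⟩
    have := Nat.find_min' hex h
    omega
  · rintro ⟨k, hk, h, -⟩
    exact ⟨k, by omega, h⟩

lemma doob_upper (hX : LevyProcess P X) {γ : ℝ} (hγ : 0 < γ) {s : ℕ → ℝ} {T : ℝ} {n : ℕ}
    (hs0 : ∀ k, 0 ≤ s k) (hsm : Monotone s) (hsT : ∀ k ≤ n, s k ≤ T)
    (h1 : ∀ k ≤ n, ∫⁻ ω, expd X γ (T - s k) ω ∂P = 1) (x : ℝ) :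
    ENNReal.ofReal (Real.exp (γ * x)) * P (passEv X s x n) ≤ ∫⁻ ω, expd X γ T ω ∂P := by
  have hm : ∀ k, MeasurableSet (firstEv X s x k) :=
    fun k => natF_le hX _ _ (firstEv_meas hs0 hsm x k)
  have hd : Set.PairwiseDisjoint (↑(Finset.range (n + 1))) (firstEv X s x) :=
    fun i _ j _ hij => firstEv_disj s x hij
  rw [passEv_eq, measure_biUnion_finset hd (fun k _ => hm k), Finset.mul_sum]
  calc _ ≤ ∑ k ∈ Finset.range (n + 1), ∫⁻ ω in firstEv X s x k, expd X γ T ω ∂P := by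
        refine Finset.sum_le_sum fun k hk => ?_
        have hk' : k ≤ n := by simpa [Nat.lt_succ_iff] using hk
        rw [setLIntegral_expd hX γ (hs0 k) (hsT k hk') (firstEv_meas hs0 hsm x k), h1 k hk',
          mul_one, ← setLIntegral_const]
        refine setLIntegral_mono' (hm k) fun ω hω => ?_
        unfold expd
        gcongr
        exact hω.1.le
    _ = ∫⁻ ω in ⋃ k ∈ Finset.range (n + 1), firstEv X s x k, expd X γ T ω ∂P :=
        (lintegral_biUnion_finset hd (fun k _ => hm k) _).symm
    _ ≤ _ := setLIntegral_le_lintegral _ _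

lemma doob_lower (hX : LevyProcess P X) {γ : ℝ} (hγ : 0 < γ) {s : ℕ → ℝ} {T : ℝ} {n : ℕ}
    (hs0 : ∀ k, 0 ≤ s k) (hsm : Monotone s) (hsT : ∀ k ≤ n, s k ≤ T)
    (h1 : ∀ k ≤ n, ∫⁻ ω, expd X γ (T - s k) ω ∂P = 1) (x δ : ℝ) :
    ∫⁻ ω in passEv X s x n, expd X γ T ω ∂P ≤
      ENNReal.ofReal (Real.exp (γ * (x + δ))) * P (passEv X s x n) +
      ∫⁻ ω in {ω | ∃ k ≤ n, ω ∈ firstEv X s x k ∧ x + δ < X (s k) ω}, expd X γ T ω ∂P := by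
  set B : ℕ → Set Ω := fun k => firstEv X s x k ∩ {ω | X (s k) ω ≤ x + δ} with hB
  have hmF : ∀ k, MeasurableSet[natF X (s k)] (B k) := fun k =>
    MeasurableSet.inter (firstEv_meas hs0 hsm x k)
      ((natF_meas (hs0 k) le_rfl) measurableSet_Iic)
  have hm : ∀ k, MeasurableSet (B k) := fun k => natF_le hX _ _ (hmF k)
  have hd : Set.PairwiseDisjoint (↑(Finset.range (n + 1))) B :=
    fun i _ j _ hij => (firstEv_disj s x hij).mono Set.inter_subset_left Set.inter_subset_left
  have hsub : passEv X s x n ⊆ (⋃ k ∈ Finset.range (n + 1), B k) ∪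
      {ω | ∃ k ≤ n, ω ∈ firstEv X s x k ∧ x + δ < X (s k) ω} := by
    rw [passEv_eq]
    intro ω hω
    simp only [Set.mem_iUnion, Finset.mem_range] at hω
    obtain ⟨k, hk, h⟩ := hω
    rcases le_or_gt (X (s k) ω) (x + δ) with h' | h'
    · left
      simp only [Set.mem_iUnion, Finset.mem_range]
      exact ⟨k, hk, h, h'⟩
    · right; exact ⟨k, by omega, h, h'⟩
  have hBs : (⋃ k ∈ Finset.range (n + 1), B k) ⊆ passEv X s x n := by
    rw [passEv_eq]
    exact Set.iUnion₂_mono fun k _ => Set.inter_subset_left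
  refine (lintegral_mono_set hsub).trans ((lintegral_union_le _ _ _).trans ?_)
  gcongr
  calc _ = ∑ k ∈ Finset.range (n + 1), ∫⁻ ω in B k, expd X γ T ω ∂P :=
        lintegral_biUnion_finset hd (fun k _ => hm k) _
    _ ≤ ∑ k ∈ Finset.range (n + 1), ENNReal.ofReal (Real.exp (γ * (x + δ))) * P (B k) := by
        refine Finset.sum_le_sum fun k hk => ?_
        have hk' : k ≤ n := by simpa [Nat.lt_succ_iff] using hk
        rw [setLIntegral_expd hX γ (hs0 k) (hsT k hk') (hmF k), h1 k hk',
          mul_one, ← setLIntegral_const]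
        refine setLIntegral_mono' (hm k) fun ω hω => ?_
        unfold expd
        gcongr
        exact hω.2
    _ = ENNReal.ofReal (Real.exp (γ * (x + δ))) * P (⋃ k ∈ Finset.range (n + 1), B k) := by
        rw [measure_biUnion_finset hd (fun k _ => hm k), Finset.mul_sum]
    _ ≤ _ := by gcongr

/-- dyadic grid on `[0,T]` -/
noncomputable def dgrid (T : ℕ) (N k : ℕ) : ℝ := T * k / 2 ^ N

lemma dgrid_nonneg (T N k : ℕ) : 0 ≤ dgrid T N k := by unfold dgrid; positivity

lemma dgrid_mono (T N : ℕ) : Monotone (dgrid T N) := by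
  intro a b h; unfold dgrid; gcongr

lemma dgrid_le (T N k : ℕ) (hk : k ≤ 2 ^ N) : dgrid T N k ≤ T := by
  unfold dgrid
  have : (k:ℝ) ≤ 2 ^ N := by exact_mod_cast hk
  rw [div_le_iff₀ (by positivity)]
  gcongr

lemma dgrid_top (T N : ℕ) : dgrid T N (2 ^ N) = T := by
  unfold dgrid; push_cast; field_simp

lemma expd_nat [IsProbabilityMeasure P] (hX : LevyProcess P X) {γ : ℝ}
    (h : ∫⁻ ω, expd X γ 1 ω ∂P = 1) (T : ℕ) : ∫⁻ ω, expd X γ T ω ∂P = 1 := by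
  have := lintegral_expd_nat_mul hX γ (s := 1) zero_le_one T
  rw [h] at this; simpa using this

lemma expd_dgrid [IsProbabilityMeasure P] (hX : LevyProcess P X) {γ : ℝ}
    (h : ∫⁻ ω, expd X γ 1 ω ∂P = 1) (T N k : ℕ) (hk : k ≤ 2 ^ N) :
    ∫⁻ ω, expd X γ (T - dgrid T N k) ω ∂P = 1 := by
  have h2 : ∫⁻ ω, expd X γ ((T:ℝ) / 2 ^ N) ω ∂P = 1 := by
    have := lintegral_expd_nat_mul hX γ (s := (T:ℝ) / 2 ^ N) (by positivity) (2 ^ N)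
    have e : ((2 ^ N : ℕ) : ℝ) * ((T:ℝ) / 2 ^ N) = T := by push_cast; field_simp
    rw [e, expd_nat hX h] at this
    refine le_antisymm ?_ ?_
    · by_contra hc
      exact (one_lt_pow₀ (not_le.1 hc) (by positivity)).ne this
    · by_contra hc
      exact (pow_lt_one₀ (by positivity) (not_le.1 hc) (by positivity)).ne this.symm
  have := lintegral_expd_nat_mul hX γ (s := (T:ℝ) / 2 ^ N) (by positivity) (2 ^ N - k)
  rw [h2, one_pow] at this
  rw [← this]
  congr 2
  rw [Nat.cast_sub hk]; unfold dgrid; push_cast; field_simp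

lemma upper_bound [IsProbabilityMeasure P] (hX : LevyProcess P X) {γ : ℝ} (hγ : 0 < γ)
    (h : ∫⁻ ω, expd X γ 1 ω ∂P = 1) (t x : ℝ) :
    ENNReal.ofReal (Real.exp (γ * x)) * P {ω | ∃ s : ℝ, 0 ≤ s ∧ s ≤ t ∧ x < X s ω} ≤ 1 := by
  set T : ℕ := ⌈t⌉₊ + 1 with hT
  have htT : t < T := by
    have := Nat.le_ceil t
    rw [hT]; push_cast; linarith
  have hmono : Monotone fun N => passEv X (dgrid T N) x (2 ^ N) := by
    refine monotone_nat_of_le_succ fun N ω => ?_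
    rintro ⟨k, hk, hω⟩
    refine ⟨2 * k, by rw [pow_succ]; omega, ?_⟩
    have : dgrid T (N + 1) (2 * k) = dgrid T N k := by
      unfold dgrid; push_cast; rw [pow_succ]; field_simp
    rwa [this]
  have hsub : P {ω | ∃ s : ℝ, 0 ≤ s ∧ s ≤ t ∧ x < X s ω} ≤
      P (⋃ N, passEv X (dgrid T N) x (2 ^ N)) := by
    refine measure_mono_ae ?_
    filter_upwards [hX.rightCont] with ω hr
    rintro ⟨s, hs0, hst, hxs⟩
    have hev : ∀ᶠ u in nhdsWithin s (Set.Ici s), x < X u ω :=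
      (hr s hs0).eventually (lt_mem_nhds hxs)
    obtain ⟨b, hb, hbs⟩ := mem_nhdsGE_iff_exists_Ico_subset.1 hev
    have hsT : s < T := hst.trans_lt htT
    have hTpos : (0:ℝ) < T := hs0.trans_lt hsT
    have hmin : 0 < min b T - s := sub_pos.2 (lt_min hb hsT)
    obtain ⟨N, hN⟩ := exists_nat_gt ((T:ℝ) / (min b T - s))
    have hN2 : (T:ℝ) / 2 ^ N < min b T - s := by
      have : (N:ℝ) < 2 ^ N := by exact_mod_cast Nat.lt_two_pow_self
      rw [div_lt_iff₀ hmin] at hN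
      rw [div_lt_iff₀ (by positivity)]
      nlinarith
    set k := ⌈s * 2 ^ N / T⌉₊ with hk
    have k1 : s * 2 ^ N / T ≤ k := Nat.le_ceil _
    have k2 : (k:ℝ) < s * 2 ^ N / T + 1 := Nat.ceil_lt_add_one (by positivity)
    have g1 : s ≤ dgrid T N k := by
      unfold dgrid
      rw [div_le_iff₀ hTpos] at k1
      rw [le_div_iff₀ (by positivity)]; linarith
    have g2 : dgrid T N k < min b T := by
      have : dgrid T N k < s + T / 2 ^ N := by
        unfold dgrid
        have : (T:ℝ) * k / 2 ^ N < T * (s * 2 ^ N / T + 1) / 2 ^ N := by gcongr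
        refine this.trans_eq ?_
        field_simp
      linarith
    refine Set.mem_iUnion.2 ⟨N, k, ?_, hbs ⟨g1, g2.trans_le (min_le_left _ _)⟩⟩
    have g3 := g2.trans_le (min_le_right _ _)
    unfold dgrid at g3
    rw [div_lt_iff₀ (by positivity)] at g3
    have : (k:ℝ) < 2 ^ N := by nlinarith
    exact_mod_cast this.le
  have hlim := tendsto_measure_iUnion_atTop (μ := P) hmono
  have hlim2 := ENNReal.Tendsto.const_mul (a := ENNReal.ofReal (Real.exp (γ * x))) hlim
    (Or.inr ENNReal.ofReal_ne_top)
  refine (mul_le_mul_right hsub _).trans (le_of_tendsto' hlim2 fun N => ?_)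
  rw [← expd_nat hX h T]
  exact doob_upper hX hγ (dgrid_nonneg T N) (dgrid_mono T N) (fun k hk => dgrid_le T N k hk)
    (fun k hk => expd_dgrid hX h T N k hk) x

lemma lower_bound [IsProbabilityMeasure P] (hX : LevyProcess P X)
    (hspec : ∀ᵐ ω ∂P, ∀ t : ℝ, 0 < t → X t ω ≤ Function.leftLim (fun s => X s ω) t)
    {γ : ℝ} (hγ : 0 < γ)
    (h : ∫⁻ ω, expd X γ 1 ω ∂P = 1) (T : ℕ) (x : ℝ) (hx : 0 < x) :
    ∫⁻ ω in {ω | x < X T ω}, expd X γ T ω ∂P ≤ ENNReal.ofReal (Real.exp (γ * x)) *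
      P {ω | ∃ s : ℝ, 0 ≤ s ∧ s ≤ T ∧ x < X s ω} := by
  set E := {ω | ∃ s : ℝ, 0 ≤ s ∧ s ≤ T ∧ x < X s ω} with hE
  have main : ∀ δ > 0, ∫⁻ ω in {ω | x < X T ω}, expd X γ T ω ∂P ≤
      ENNReal.ofReal (Real.exp (γ * (x + δ))) * P E := by
    intro δ hδ
    set O : ℕ → Set Ω := fun N => {ω | ∃ k ≤ 2 ^ N, ω ∈ firstEv X (dgrid T N) x k ∧
      x + δ < X (dgrid T N k) ω} with hO
    have hOm : ∀ N, MeasurableSet (O N) := by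
      intro N
      have : O N = ⋃ k, ⋃ (_ : k ≤ 2 ^ N), (firstEv X (dgrid T N) x k ∩
        {ω | x + δ < X (dgrid T N k) ω}) := by
        ext ω; simp only [hO, Set.mem_iUnion, exists_prop]; rfl
      rw [this]
      refine MeasurableSet.iUnion fun k => MeasurableSet.iUnion fun _ => ?_
      exact (natF_le hX _ _ (firstEv_meas (dgrid_nonneg T N) (dgrid_mono T N) x k)).inter
        (hX.meas _ measurableSet_Ioi)
    have hstep : ∀ N, ∫⁻ ω in {ω | x < X T ω}, expd X γ T ω ∂P ≤
        ENNReal.ofReal (Real.exp (γ * (x + δ))) * P E + ∫⁻ ω in O N, expd X γ T ω ∂P := by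
      intro N
      have s1 : {ω | x < X T ω} ⊆ passEv X (dgrid T N) x (2 ^ N) := fun ω hω =>
        ⟨2 ^ N, le_rfl, by rw [dgrid_top]; exact hω⟩
      have s2 : passEv X (dgrid T N) x (2 ^ N) ⊆ E := by
        rintro ω ⟨k, hk, hω⟩
        exact ⟨_, dgrid_nonneg T N k, dgrid_le T N k hk, hω⟩
      refine (lintegral_mono_set s1).trans ((doob_lower hX hγ (dgrid_nonneg T N) (dgrid_mono T N)
        (fun k hk => dgrid_le T N k hk) (fun k hk => expd_dgrid hX h T N k hk) x δ).trans ?_)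
      gcongr
    have hlim : Tendsto (fun N => ∫⁻ ω in O N, expd X γ T ω ∂P) atTop (nhds 0) := by
      have : Tendsto (fun N => ∫⁻ ω, (O N).indicator (expd X γ T) ω ∂P) atTop
          (nhds (∫⁻ ω, 0 ∂P)) := by
        refine tendsto_lintegral_of_dominated_convergence (expd X γ T)
          (fun N => (expd_meas hX γ T).indicator (hOm N)) ?_ ?_ ?_
        · intro N; exact ae_of_all _ fun ω => Set.indicator_le_self _ _ _
        · rw [expd_nat hX h]; simp
        · filter_upwards [hspec, hX.rightCont, hX.leftLimits, hX.init] with ω h1 h2 h3 h4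
          obtain ⟨η, hη, hp⟩ := path_upward (fun s => X s ω) h2 h3 h1 T δ hδ
          have hNev : ∀ᶠ N : ℕ in atTop, (T:ℝ) / 2 ^ N < η := by
            have : Tendsto (fun N : ℕ => (T:ℝ) / 2 ^ N) atTop (nhds 0) :=
              tendsto_const_nhds.div_atTop (tendsto_pow_atTop_atTop_of_one_lt (by norm_num))
            exact this.eventually (gt_mem_nhds hη)
          refine tendsto_const_nhds.congr' ?_
          filter_upwards [hNev] with N hN
          rw [Set.indicator_of_notMem]
          rintro ⟨k, hk, ⟨hk1, hk2⟩, hk3⟩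
          rcases k with _ | k
          · have : dgrid T N 0 = 0 := by simp [dgrid]
            rw [this, h4] at hk1
            linarith
          · have a1 := hk2 k (Nat.lt_succ_self k)
            have a2 := hp _ _ (dgrid_nonneg T N k) (dgrid_mono T N (Nat.le_succ k))
              (dgrid_le T N _ hk) (by
                have : dgrid T N (k + 1) - dgrid T N k = T / 2 ^ N := by
                  unfold dgrid; push_cast; ring
                rw [Nat.succ_eq_add_one, this]; exact hN)
            simp only [Nat.succ_eq_add_one] at a2
            linarith
      simp only [lintegral_zero] at this
      refine this.congr fun N => lintegral_indicator (hOm N) _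
    have := ge_of_tendsto' (tendsto_const_nhds.add hlim) hstep
    simpa using this
  have hc : Tendsto (fun δ : ℝ => ENNReal.ofReal (Real.exp (γ * (x + δ))) * P E)
      (nhdsWithin 0 (Set.Ioi 0)) (nhds (ENNReal.ofReal (Real.exp (γ * x)) * P E)) := by
    refine ENNReal.Tendsto.mul_const ?_ (Or.inr (measure_ne_top _ _))
    refine ENNReal.tendsto_ofReal ?_
    have : Continuous fun δ : ℝ => Real.exp (γ * (x + δ)) := by fun_prop
    have := this.tendsto 0
    simp only [add_zero] at this
    exact this.mono_left nhdsWithin_le_nhds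
  refine ge_of_tendsto hc ?_
  filter_upwards [self_mem_nhdsWithin] with δ hδ
  exact main δ hδ

lemma lower_tail [IsProbabilityMeasure P] (hX : LevyProcess P X)
    {γ ε a : ℝ} (hε : 0 ≤ ε)
    (h : ∫⁻ ω, expd X γ 1 ω ∂P = 1)
    (ha : ∫⁻ ω, expd X (γ - ε) 1 ω ∂P ≤ ENNReal.ofReal (Real.exp a)) (T : ℕ) (x : ℝ) :
    1 - ENNReal.ofReal (Real.exp (ε * x + T * a)) ≤
      ∫⁻ ω in {ω | x < X T ω}, expd X γ T ω ∂P := by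
  rw [tsub_le_iff_right]
  have hms : MeasurableSet {ω | x < X T ω} := hX.meas T measurableSet_Ioi
  rw [← expd_nat hX h T, ← lintegral_add_compl _ hms]
  gcongr
  calc ∫⁻ ω in {ω | x < X T ω}ᶜ, expd X γ T ω ∂P
      ≤ ∫⁻ ω in {ω | x < X T ω}ᶜ, ENNReal.ofReal (Real.exp (ε * x)) * expd X (γ - ε) T ω ∂P := by
        refine setLIntegral_mono' hms.compl fun ω hω => ?_
        have hω : X T ω ≤ x := not_lt.1 hω
        unfold expd
        rw [← ENNReal.ofReal_mul (Real.exp_pos _).le, ← Real.exp_add]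
        gcongr
        nlinarith
    _ ≤ ∫⁻ ω, ENNReal.ofReal (Real.exp (ε * x)) * expd X (γ - ε) T ω ∂P :=
        setLIntegral_le_lintegral _ _
    _ = ENNReal.ofReal (Real.exp (ε * x)) * (∫⁻ ω, expd X (γ - ε) 1 ω ∂P) ^ T := by
        rw [lintegral_const_mul _ (expd_meas hX _ _)]
        have := lintegral_expd_nat_mul hX (γ - ε) (s := 1) zero_le_one T
        rw [← this, mul_one]
    _ ≤ ENNReal.ofReal (Real.exp (ε * x)) * (ENNReal.ofReal (Real.exp a)) ^ T := by gcongr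
    _ = _ := by
        rw [← ENNReal.ofReal_pow (Real.exp_pos _).le, ← ENNReal.ofReal_mul (Real.exp_pos _).le,
          ← Real.exp_nat_mul, ← Real.exp_add]

lemma lintegral_expd_one [IsProbabilityMeasure P] {θ : ℝ}
    (hθ : θ ∈ laplaceDomain P (X 1)) :
    ∫⁻ ω, expd X θ 1 ω ∂P = ENNReal.ofReal (Real.exp (laplaceExponent P (X 1) θ)) := by
  have hi : Integrable (fun ω => Real.exp (θ * X 1 ω)) P := hθ
  unfold laplaceExponent
  rw [Real.exp_log (integral_exp_pos hi), ofReal_integral_eq_lintegral_ofReal hi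
    (ae_of_all _ fun ω => (Real.exp_pos _).le)]
  rfl

lemma gamma_mem [IsProbabilityMeasure P] (hX : LevyProcess P X) {γ : ℝ}
    (hγ : γ = sSup {θ ∈ laplaceDomain P (X 1) | laplaceExponent P (X 1) θ = 0})
    (hγpos : 0 < γ)
    (hc : ContinuousWithinAt (laplaceExponent P (X 1)) (laplaceDomain P (X 1)) γ) :
    γ ∈ laplaceDomain P (X 1) ∧ laplaceExponent P (X 1) γ = 0 := by
  set S := {θ ∈ laplaceDomain P (X 1) | laplaceExponent P (X 1) θ = 0} with hS
  have hne : S.Nonempty := by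
    by_contra hn
    rw [Set.not_nonempty_iff_eq_empty] at hn
    rw [hn, Real.sSup_empty] at hγ
    linarith
  have hb : BddAbove S := by
    by_contra hn
    rw [Real.sSup_of_not_bddAbove hn] at hγ
    linarith
  have hcl : γ ∈ closure S := hγ ▸ csSup_mem_closure hne hb
  obtain ⟨u, hu, hul⟩ := mem_closure_iff_seq_limit.1 hcl
  have h1 : ∀ n, ∫⁻ ω, expd X (u n) 1 ω ∂P = 1 := by
    intro n
    rw [lintegral_expd_one (hu n).1, (hu n).2]; simp
  have hle : ∫⁻ ω, expd X γ 1 ω ∂P ≤ 1 := by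
    have := lintegral_liminf_le (μ := P) (u := atTop) (f := fun n => expd X (u n) 1)
      (fun n => expd_meas hX (u n) 1)
    simp only [h1, liminf_const] at this
    refine le_trans (le_of_eq ?_) this
    refine lintegral_congr fun ω => ?_
    refine (Tendsto.liminf_eq ?_).symm
    unfold expd
    exact ENNReal.tendsto_ofReal
      ((Real.continuous_exp.tendsto _).comp (hul.mul_const _))
  have hm : γ ∈ laplaceDomain P (X 1) := by
    refine ⟨?_, ?_⟩
    · exact (Real.measurable_exp.comp ((hX.meas 1).const_mul γ)).aestronglyMeasurable
    · rw [hasFiniteIntegral_iff_ofReal (ae_of_all _ fun ω => (Real.exp_pos _).le)]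
      exact hle.trans_lt ENNReal.one_lt_top
  refine ⟨hm, ?_⟩
  have ht : Tendsto u atTop (nhdsWithin γ (laplaceDomain P (X 1))) :=
    tendsto_nhdsWithin_iff.2 ⟨hul, Eventually.of_forall fun n => (hu n).1⟩
  have h2 := Tendsto.comp hc ht
  have h3 : (laplaceExponent P (X 1)) ∘ u = fun _ => 0 := by
    funext n; exact (hu n).2
  rw [h3] at h2
  exact tendsto_nhds_unique h2 tendsto_const_nhds

end Levy

/-- Cramér asymptotics, case `0 < v < ψ'(γ)`, for a spectrally negative Lévy process:
`e^{γ x_n} P(τ(x_n) ≤ t_n) → C_γ = 1` whenever `t_n → ∞` and `x_n = v t_n + o(t_n^{1/2})`.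
Here `{τ(x) ≤ t} = {∃ s ∈ [0,t], X_s > x}`. -/
theorem cramer_finite_time_spectrally_negative_small_v
    {Ω : Type*} [MeasurableSpace Ω] (P : Measure Ω) [IsProbabilityMeasure P]
    (X : ℝ → Ω → ℝ) (hX : LevyProcess P X)
    -- spectrally negative: no positive jumps
    (hspec : ∀ᵐ ω ∂P, ∀ t : ℝ, 0 < t → X t ω ≤ Function.leftLim (fun s => X s ω) t)
    -- non-monotone paths
    (hnonmono : ∀ᵐ ω ∂P, ¬ MonotoneOn (fun t => X t ω) (Set.Ici 0) ∧
      ¬ AntitoneOn (fun t => X t ω) (Set.Ici 0))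
    -- the law of `X t` is atomless for every `t > 0`
    (hatomless : ∀ t : ℝ, 0 < t → ∀ c : ℝ, P {ω | X t ω = c} = 0)
    -- exponential moments: `E[e^{θ₀ X_1}] < ∞` for some `θ₀ > 0`
    (θ₀ : ℝ) (hθ₀pos : 0 < θ₀) (hθ₀ : θ₀ ∈ laplaceDomain P (X 1))
    -- the Cramér exponent `γ = sup{θ ∈ Θ : ψ(θ) = 0} > 0`
    (γ : ℝ)
    (hγ : γ = sSup {θ ∈ laplaceDomain P (X 1) | laplaceExponent P (X 1) θ = 0})
    (hγpos : 0 < γ)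
    -- `0 < ψ'(γ) < ∞`
    (dγ : ℝ)
    (hdγ : HasDerivWithinAt (laplaceExponent P (X 1)) dγ (laplaceDomain P (X 1)) γ)
    (hdγpos : 0 < dγ)
    -- `0 < v < ψ'(γ)`
    (v : ℝ) (hvpos : 0 < v) (hv : v < dγ)
    -- there exists `Γ(v) ∈ Θ°` with `ψ'(Γ(v)) = v`
    (Γv : ℝ) (hΓv : Γv ∈ interior (laplaceDomain P (X 1)))
    (hΓd : HasDerivAt (laplaceExponent P (X 1)) v Γv)
    -- the sequences `t_n → ∞`, `x_n = v t_n + o(t_n^{1/2})`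
    (t x : ℕ → ℝ) (ht : Tendsto t atTop atTop)
    (hx : Tendsto (fun n => (x n - v * t n) / Real.sqrt (t n)) atTop (nhds 0)) :
    Tendsto (fun n => Real.exp (γ * x n) *
        (P {ω | ∃ s : ℝ, 0 ≤ s ∧ s ≤ t n ∧ x n < X s ω}).toReal)
      atTop (nhds 1) := by
  obtain ⟨hγm, hγ0⟩ := gamma_mem hX hγ hγpos hdγ.continuousWithinAt
  have h1 : ∫⁻ ω, expd X γ 1 ω ∂P = 1 := by
    rw [lintegral_expd_one hγm, hγ0]; simp
  have h0m : (0:ℝ) ∈ laplaceDomain P (X 1) := by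
    simp [laplaceDomain]
  have hsubΘ : Set.Ioo 0 γ ⊆ laplaceDomain P (X 1) \ {γ} := by
    intro θ hθ
    refine ⟨?_, hθ.2.ne⟩
    exact integrable_exp_mul_of_le_of_le h0m hγm hθ.1.le hθ.2.le
  obtain ⟨w, hvw, hwd⟩ := exists_between hv
  obtain ⟨θ, hθ, hθw⟩ : ∃ θ ∈ Set.Ioo 0 γ, w < slope (laplaceExponent P (X 1)) γ θ := by
    have hsl := hasDerivWithinAt_iff_tendsto_slope.1 hdγ
    have hsl2 := (hsl.mono_left (nhdsWithin_mono _ hsubΘ)).eventually (lt_mem_nhds hwd)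
    rw [nhdsWithin_Ioo_eq_nhdsLT hγpos] at hsl2
    have hmem : ∀ᶠ θ in nhdsWithin γ (Set.Iio γ), θ ∈ Set.Ioo 0 γ := Ioo_mem_nhdsLT hγpos
    obtain ⟨θ, h⟩ := (hmem.and hsl2).exists
    exact ⟨θ, h⟩
  set ε := γ - θ with hε
  have hεpos : 0 < ε := sub_pos.2 hθ.2
  have hψ : laplaceExponent P (X 1) θ ≤ -(ε * w) := by
    rw [slope_def_field, hγ0, sub_zero, lt_div_iff_of_neg (by linarith [hθ.2])] at hθw
    nlinarith
  have ha : ∫⁻ ω, expd X (γ - ε) 1 ω ∂P ≤ ENNReal.ofReal (Real.exp (-(ε * w))) := by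
    have : γ - ε = θ := by rw [hε]; ring
    rw [this, lintegral_expd_one (hsubΘ hθ).1]
    gcongr
  set E : ℕ → Set Ω := fun n => {ω | ∃ s : ℝ, 0 ≤ s ∧ s ≤ t n ∧ x n < X s ω} with hE
  have hr : 0 < min (v / 2) ((w - v) / 2) := lt_min (by linarith) (by linarith)
  have hev : ∀ᶠ n in atTop, 1 ≤ t n ∧ |x n - v * t n| ≤ min (v / 2) ((w - v) / 2) * t n := by
    have e1 := (Metric.tendsto_nhds.1 hx) _ hr
    filter_upwards [e1, ht.eventually_ge_atTop 1] with n hn1 hn2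
    refine ⟨hn2, ?_⟩
    have hsq : 0 < Real.sqrt (t n) := Real.sqrt_pos.2 (by linarith)
    rw [Real.dist_eq, sub_zero, abs_div, abs_of_pos hsq, div_lt_iff₀ hsq] at hn1
    refine hn1.le.trans ?_
    gcongr
    rw [Real.sqrt_le_left (by linarith)]
    nlinarith
  have hlow : ∀ᶠ n in atTop,
      1 - ENNReal.ofReal (Real.exp (ε * w + -(ε * ((w - v) / 2)) * t n)) ≤
        ENNReal.ofReal (Real.exp (γ * x n)) * P (E n) := by
    filter_upwards [hev] with n ⟨hn1, hn2⟩
    have hb := abs_le.1 hn2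
    have hm1 : min (v / 2) ((w - v) / 2) * t n ≤ v / 2 * t n := by
      gcongr; exact min_le_left _ _
    have hm2 : min (v / 2) ((w - v) / 2) * t n ≤ (w - v) / 2 * t n := by
      gcongr; exact min_le_right _ _
    have hxpos : 0 < x n := by nlinarith [hb.1]
    have hfl : (⌊t n⌋₊ : ℝ) ≤ t n := Nat.floor_le (by linarith)
    have hfl2 : t n < ⌊t n⌋₊ + 1 := Nat.lt_floor_add_one _
    calc _ ≤ 1 - ENNReal.ofReal (Real.exp (ε * x n + (⌊t n⌋₊ : ℝ) * -(ε * w))) := by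
          refine tsub_le_tsub_left (ENNReal.ofReal_le_ofReal (Real.exp_le_exp.2 ?_)) _
          have hw : 0 < w := by linarith
          have : x n - (⌊t n⌋₊ : ℝ) * w ≤ w + -((w - v) / 2) * t n := by nlinarith [hb.2]
          nlinarith [mul_le_mul_of_nonneg_left this hεpos.le]
      _ ≤ _ := lower_tail hX hεpos.le h1 ha _ _
      _ ≤ _ := lower_bound hX hspec hγpos h1 _ _ hxpos
      _ ≤ _ := by
          gcongr
          rintro ω ⟨s, hs0, hs1, hs2⟩
          exact ⟨s, hs0, hs1.trans hfl, hs2⟩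
  have hlim : Tendsto (fun n => 1 -
      ENNReal.ofReal (Real.exp (ε * w + -(ε * ((w - v) / 2)) * t n))) atTop (nhds 1) := by
    have hc : -(ε * ((w - v) / 2)) < 0 := by
      have : 0 < (w - v) / 2 := by linarith
      have := mul_pos hεpos this
      linarith
    have a1 : Tendsto (fun n => ε * w + -(ε * ((w - v) / 2)) * t n) atTop atBot :=
      tendsto_atBot_add_const_left _ _ (ht.const_mul_atTop_of_neg hc)
    have a2 := ENNReal.tendsto_ofReal (Real.tendsto_exp_atBot.comp a1)
    have a3 := ENNReal.Tendsto.sub (tendsto_const_nhds (x := (1:ENNReal))) a2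
      (Or.inl ENNReal.one_ne_top)
    simpa using a3
  have hfin : Tendsto (fun n => ENNReal.ofReal (Real.exp (γ * x n)) * P (E n)) atTop (nhds 1) :=
    tendsto_of_tendsto_of_tendsto_of_le_of_le' hlim tendsto_const_nhds hlow
      (Eventually.of_forall fun n => upper_bound hX hγpos h1 (t n) (x n))
  have hres := (ENNReal.tendsto_toReal ENNReal.one_ne_top).comp hfin
  rw [ENNReal.toReal_one] at hres
  refine hres.congr fun n => ?_
  simp only [Function.comp_apply, ENNReal.toReal_mul]
  rw [ENNReal.toReal_ofReal (Real.exp_pos _).le]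
end

section
/- Assume condition (G) holds and that there exists ζ=(ξ,η) with φ(ζ)=1 and η>0 such that φ is finite in a neighbourhood of ζ and in a neighbourhood of (0,η); let v=E_ζ[S_1]/E_ζ[R_1]. Then V(ζ)>0, and for every a≥0 and b∈ℝ: for all sequences y_n→∞ and x_n>0 with (x_n−v y_n)/y_n^{1/2}→0, one has G_{a,b}(x_n,y_n) / ( x_n^{−1/2} e^{x_n ξ + y_n η} ) → D(a,b), where D(a,b)=C(a,b)·(2π V(ζ))^{−1/2}. -/
open MeasureTheory Filter Set ENNReal

/-- Convolution of two measures on `ℝ × ℝ` (coordinatewise addition). -/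
noncomputable def mconv (μ ν : Measure (ℝ × ℝ)) : Measure (ℝ × ℝ) :=
  Measure.map (fun p : (ℝ × ℝ) × (ℝ × ℝ) => p.1 + p.2) (μ.prod ν)

/-- `n`-fold convolution power `F^{⋆n}` (with `F^{⋆0} = δ_{(0,0)}`). -/
noncomputable def iterConv (F : Measure (ℝ × ℝ)) : ℕ → Measure (ℝ × ℝ)
  | 0 => Measure.dirac 0
  | n + 1 => mconv (iterConv F n) F

/-- Bivariate Laplace transform `φ(u,w) = ∬ e^{-us-wr} F(ds,dr)`. -/
noncomputable def biLaplace (F : Measure (ℝ × ℝ)) (u w : ℝ) : ℝ≥0∞ :=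
  ∫⁻ p, ENNReal.ofReal (Real.exp (-(u * p.1 + w * p.2))) ∂F

/-- Topological support of a measure on `ℝ × ℝ`. -/
def msupport (F : Measure (ℝ × ℝ)) : Set (ℝ × ℝ) :=
  {p | ∀ U : Set (ℝ × ℝ), IsOpen U → p ∈ U → 0 < F U}

/-- `G_{a,b}(x,y) = P(N(x) < ∞, S_{N(x)} > x + a, R_{N(x)} ≤ y + b)` for the (possibly
killed) random walk with step distribution `F` and nonnegative steps: since the first
component is nondecreasing, `N(x) = n + 1` exactly when `S_n ≤ x < S_{n+1}`, so the
probability is the displayed renewal sum. -/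
noncomputable def hoglundG (F : Measure (ℝ × ℝ)) (a b x y : ℝ) : ℝ≥0∞ :=
  ∑' n : ℕ, ∫⁻ p in {p : ℝ × ℝ | p.1 ≤ x},
    F {q : ℝ × ℝ | x + a < p.1 + q.1 ∧ p.2 + q.2 ≤ y + b} ∂(iterConv F n)


namespace Hog

noncomputable def tri (t : ℝ) : ℝ := max (1 - |t|) 0
noncomputable def fej (s : ℝ) : ℝ := Real.sinc (s / 2) ^ 2

lemma continuous_tri : Continuous tri := by unfold tri; fun_prop
lemma continuous_fej : Continuous fej := by
  unfold fej
  exact (Real.continuous_sinc.comp (by fun_prop)).pow 2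

lemma tri_zero_of {t : ℝ} (h : 1 ≤ |t|) : tri t = 0 := by
  unfold tri; exact max_eq_right (by linarith)

lemma hasCompactSupport_tri : HasCompactSupport tri := by
  refine HasCompactSupport.of_support_subset_isCompact (isCompact_Icc (a := -1) (b := (1:ℝ))) ?_
  intro t ht
  by_contra hc
  apply ht
  apply tri_zero_of
  by_contra h
  push Not at h
  exact hc ⟨by linarith [(abs_lt.1 h).1], by linarith [(abs_lt.1 h).2]⟩

lemma tri_nonneg (t : ℝ) : 0 ≤ tri t := le_max_right _ _
lemma tri_neg (t : ℝ) : tri (-t) = tri t := by simp [tri]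
lemma tri_le_one (t : ℝ) : tri t ≤ 1 := max_le (by linarith [abs_nonneg t]) (by norm_num)

lemma half_int (c : ℂ) (hc : c ≠ 0) :
    ∫ t in (0:ℝ)..1, ((1 - t : ℝ) : ℂ) * Complex.exp (c * t) =
      Complex.exp c / c ^ 2 - 1 / c - 1 / c ^ 2 := by
  have hd : ∀ x ∈ Set.uIcc (0:ℝ) 1, HasDerivAt
      (fun t : ℝ => ((1 - t : ℝ) : ℂ) * Complex.exp (c * t) / c + Complex.exp (c * t) / c ^ 2)
      (((1 - x : ℝ) : ℂ) * Complex.exp (c * x)) x := by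
    intro x _
    have h0 : HasDerivAt (fun t : ℝ => c * (t : ℂ)) c x := by
      simpa using (Complex.ofRealCLM.hasDerivAt (x := x)).const_mul c
    have h1 : HasDerivAt (fun t : ℝ => Complex.exp (c * t)) (Complex.exp (c * x) * c) x :=
      h0.cexp
    have h2 : HasDerivAt (fun t : ℝ => ((1 - t : ℝ) : ℂ)) (-1) x := by
      simpa using ((hasDerivAt_id x).const_sub 1).ofReal_comp
    have := ((h2.mul h1).div_const c).add (h1.div_const (c ^ 2))
    refine this.congr_deriv ?_
    field_simp
    ring
  rw [intervalIntegral.integral_eq_sub_of_hasDerivAt hd]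
  · simp
    field_simp
    ring
  · apply Continuous.intervalIntegrable
    fun_prop

lemma integral_tri_mul (g : ℝ → ℂ) (hg : Continuous g) :
    ∫ t : ℝ, (tri t : ℂ) * g t =
      ∫ t in (0:ℝ)..1, ((1 - t : ℝ) : ℂ) * (g t + g (-t)) := by
  have hc : Continuous (fun t : ℝ => (tri t : ℂ) * g t) :=
    (Complex.continuous_ofReal.comp continuous_tri).mul hg
  have h1 : ∫ t : ℝ, (tri t : ℂ) * g t = ∫ t in (-1:ℝ)..1, (tri t : ℂ) * g t := by
    rw [intervalIntegral.integral_of_le (by norm_num)]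
    symm
    apply setIntegral_eq_integral_of_forall_compl_eq_zero
    intro t ht
    rw [tri_zero_of]
    · simp
    · by_contra h
      push Not at h
      exact ht ⟨by linarith [(abs_lt.1 h).1], by linarith [(abs_lt.1 h).2]⟩
  rw [h1, ← intervalIntegral.integral_add_adjacent_intervals (b := 0)
    (hc.intervalIntegrable _ _) (hc.intervalIntegrable _ _)]
  have h2 : ∫ t in (-1:ℝ)..0, (tri t : ℂ) * g t = ∫ t in (0:ℝ)..1, (tri t : ℂ) * g (-t) := by
    have := intervalIntegral.integral_comp_neg (a := 0) (b := 1) (fun t : ℝ => (tri t : ℂ) * g t)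
    simp only [tri_neg, neg_zero] at this
    exact this.symm
  rw [h2, ← intervalIntegral.integral_add]
  · apply intervalIntegral.integral_congr
    intro t ht
    rw [Set.uIcc_of_le (by norm_num)] at ht
    have : tri t = 1 - t := by
      unfold tri
      rw [abs_of_nonneg ht.1]
      exact max_eq_left (by linarith [ht.2])
    simp only [this]
    ring
  · apply Continuous.intervalIntegrable
    exact (Complex.continuous_ofReal.comp continuous_tri).mul (hg.comp continuous_neg)
  · exact hc.intervalIntegrable _ _

lemma tri_fourier (s : ℝ) :
    ∫ t : ℝ, (tri t : ℂ) * Complex.exp (s * t * Complex.I) = (fej s : ℂ) := by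
  rw [integral_tri_mul _ (by fun_prop)]
  by_cases hs : s = 0
  · subst hs
    have : ∫ t in (0:ℝ)..1, ((1 - t : ℝ) : ℂ) * (2:ℂ) = 1 := by
      rw [intervalIntegral.integral_mul_const, intervalIntegral.integral_ofReal,
        intervalIntegral.integral_sub (by simp) (by simp)]
      simp
      norm_num
    simp only [fej, Complex.ofReal_zero, zero_mul, Complex.exp_zero, zero_div, Real.sinc_zero,
      one_pow, Complex.ofReal_one]
    refine Eq.trans ?_ this
    apply intervalIntegral.integral_congr
    intro t _
    simp only
    norm_num
  · have hc : (s * Complex.I : ℂ) ≠ 0 := by simp [hs]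
    have hc' : (-(s * Complex.I) : ℂ) ≠ 0 := by simp [hs]
    have e1 := half_int _ hc
    have e2 := half_int _ hc'
    have : ∫ t in (0:ℝ)..1, ((1 - t : ℝ) : ℂ) *
        (Complex.exp (s * t * Complex.I) + Complex.exp (s * ((-t : ℝ) : ℂ) * Complex.I)) =
        (∫ t in (0:ℝ)..1, ((1 - t : ℝ) : ℂ) * Complex.exp (s * Complex.I * t)) +
        ∫ t in (0:ℝ)..1, ((1 - t : ℝ) : ℂ) * Complex.exp (-(s * Complex.I) * t) := by
      rw [← intervalIntegral.integral_add]
      · apply intervalIntegral.integral_congr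
        intro t _
        simp only [mul_add]
        congr 3
        · ring
        · push_cast; ring
      · apply Continuous.intervalIntegrable; fun_prop
      · apply Continuous.intervalIntegrable; fun_prop
    rw [this, e1, e2]
    have h3 : (fej s : ℂ) = 2 * (1 - Complex.cos s) / s ^ 2 := by
      have hs2 : s / 2 ≠ 0 := by positivity
      have : fej s = 2 * (1 - Real.cos s) / s ^ 2 := by
        unfold fej
        rw [Real.sinc_of_ne_zero hs2]
        have : Real.cos s = 1 - 2 * Real.sin (s / 2) ^ 2 := by
          have := Real.cos_two_mul (s / 2)
          rw [show 2 * (s / 2) = s by ring] at this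
          rw [this, Real.cos_sq']; ring
        rw [this]; field_simp; ring
      rw [this]; push_cast; rfl
    rw [h3, Complex.cos]
    have hs' : (s : ℂ) ≠ 0 := by exact_mod_cast hs
    have hI : (s * Complex.I) ^ 2 = -(s : ℂ) ^ 2 := by rw [mul_pow, Complex.I_sq]; ring
    rw [neg_sq, hI, ← neg_mul]
    field_simp
    ring

lemma fej_nonneg (s : ℝ) : 0 ≤ fej s := sq_nonneg _

lemma fej_le_one (s : ℝ) : fej s ≤ 1 := by
  unfold fej
  have := Real.abs_sinc_le_one (s / 2)
  rw [← sq_abs]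
  nlinarith [abs_nonneg (Real.sinc (s / 2))]

lemma fej_mul_sq (s : ℝ) : fej s * s ^ 2 = 4 * Real.sin (s / 2) ^ 2 := by
  by_cases hs : s = 0
  · subst hs; simp
  · unfold fej
    rw [Real.sinc_of_ne_zero (by positivity)]
    field_simp
    try ring

noncomputable def hh (s : ℝ) : ℝ := fej s + fej (s + Real.pi)

lemma continuous_hh : Continuous hh := by
  unfold hh
  exact continuous_fej.add (continuous_fej.comp (by fun_prop))

lemma hh_upper (s : ℝ) : hh s * (1 + s ^ 2) ≤ 100 := by
  have h1 := fej_mul_sq s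
  have h2 := fej_mul_sq (s + Real.pi)
  have h3 := Real.sin_sq_le_one (s / 2)
  have h4 := Real.sin_sq_le_one ((s + Real.pi) / 2)
  have h5 := fej_le_one s
  have h6 := fej_le_one (s + Real.pi)
  have h7 := fej_nonneg (s + Real.pi)
  have hp := Real.pi_lt_four
  have hp0 := Real.pi_pos
  unfold hh
  have : s ^ 2 ≤ 2 * (s + Real.pi) ^ 2 + 2 * Real.pi ^ 2 := by nlinarith [sq_nonneg (s + 2 * Real.pi)]
  have h8 := mul_le_mul_of_nonneg_left this h7
  have h9 : Real.pi ^ 2 ≤ 16 := by nlinarith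
  have h10 : fej (s + Real.pi) * Real.pi ^ 2 ≤ 16 := by nlinarith [sq_nonneg Real.pi]
  nlinarith

lemma hh_lower : ∃ c > 0, ∀ s, c ≤ hh s * (1 + s ^ 2) := by
  refine ⟨1 / 32, by norm_num, fun s => ?_⟩
  have h1 := fej_mul_sq s
  have h2 := fej_mul_sq (s + Real.pi)
  have hp := Real.pi_lt_four
  have hp0 := Real.pi_pos
  have h3 : Real.sin ((s + Real.pi) / 2) = Real.cos (s / 2) := by
    rw [add_div, Real.sin_add_pi_div_two]
  rw [h3] at h2
  have h4 := Real.sin_sq_add_cos_sq (s / 2)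
  have a := fej_nonneg s
  have b := fej_nonneg (s + Real.pi)
  have h9 : Real.pi ^ 2 ≤ 16 := by nlinarith
  have h5 : (s + Real.pi) ^ 2 ≤ 32 * (1 + s ^ 2) := by nlinarith [sq_nonneg (s - Real.pi)]
  have h6 : s ^ 2 ≤ 32 * (1 + s ^ 2) := by nlinarith [sq_nonneg s]
  have h7 := mul_le_mul_of_nonneg_left h5 b
  have h8 := mul_le_mul_of_nonneg_left h6 a
  unfold hh
  nlinarith

lemma hh_nonneg (s : ℝ) : 0 ≤ hh s := add_nonneg (fej_nonneg _) (fej_nonneg _)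

lemma hh_pos (s : ℝ) : 0 < hh s := by
  obtain ⟨c, hc, h⟩ := hh_lower
  have := h s
  by_contra hn
  have h0 : hh s = 0 := le_antisymm (not_lt.1 hn) (hh_nonneg s)
  rw [h0] at this
  linarith

lemma integrable_of_bound {g : ℝ → ℝ} (hg : Continuous g) (C : ℝ)
    (h : ∀ s, |g s| * (1 + s ^ 2) ≤ C) : Integrable g := by
  refine (integrable_inv_one_add_sq.const_mul C).mono' hg.aestronglyMeasurable ?_
  refine ae_of_all _ fun s => ?_
  have := h s
  rw [Real.norm_eq_abs, ← div_eq_mul_inv, le_div_iff₀ (by positivity)]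
  exact this

lemma integrable_hh : Integrable hh := by
  refine integrable_of_bound continuous_hh 100 fun s => ?_
  rw [abs_of_nonneg (hh_nonneg s)]
  exact hh_upper s

lemma integrable_fej : Integrable fej := by
  refine integrable_hh.mono' continuous_fej.aestronglyMeasurable (ae_of_all _ fun s => ?_)
  rw [Real.norm_eq_abs, abs_of_nonneg (fej_nonneg s)]
  exact le_add_of_nonneg_right (fej_nonneg _)

/-- Fourier inversion for the Fejer kernel. -/
lemma fej_fourier (θ : ℝ) :
    ∫ s : ℝ, (fej s : ℂ) * Complex.exp (θ * s * Complex.I) = 2 * Real.pi * (tri θ : ℂ) := by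
  have hF : FourierTransform.fourier (fun t : ℝ => (tri t : ℂ)) =
      fun w : ℝ => (fej (2 * Real.pi * w) : ℂ) := by
    ext w
    rw [Real.fourier_real_eq_integral_exp_smul, ← tri_fourier]
    have : fej (2 * Real.pi * w) = fej (-(2 * Real.pi * w)) := by
      unfold fej; rw [neg_div, Real.sinc_neg]
    rw [tri_fourier, this, ← tri_fourier]
    congr 1
    ext t
    rw [smul_eq_mul, mul_comm]
    congr 2
    push_cast; ring
  have hi : Integrable (fun t : ℝ => (tri t : ℂ)) :=
    (continuous_tri.integrable_of_hasCompactSupport hasCompactSupport_tri).ofReal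
  have hc : Continuous (fun t : ℝ => (tri t : ℂ)) := Complex.continuous_ofReal.comp continuous_tri
  have hp : (2 * Real.pi) ≠ 0 := by positivity
  have h2 := hc.fourierInv_fourier_eq hi (by
    rw [hF]
    exact (integrable_fej.comp_mul_left' hp).ofReal)
  have h3 := congrFun h2 θ
  rw [hF, Real.fourierInv_eq_fourier_neg, Real.fourier_real_eq_integral_exp_smul] at h3
  rw [← h3]
  have h4 := Measure.integral_comp_mul_left
    (fun s : ℝ => (fej s : ℂ) * Complex.exp (θ * s * Complex.I)) (2 * Real.pi)
  have h5 : ∫ (v : ℝ), Complex.exp (↑(-2 * Real.pi * v * -θ) * Complex.I) • (fej (2 * Real.pi * v) : ℂ)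
     = ∫ v : ℝ, (fej (2 * Real.pi * v) : ℂ) * Complex.exp (θ * ((2 * Real.pi * v : ℝ):ℂ) * Complex.I) := by
    congr 1
    ext v
    rw [smul_eq_mul, mul_comm]
    congr 2
    push_cast; ring
  rw [h5, h4, abs_of_nonneg (by positivity), Complex.real_smul]
  push_cast
  have hp' : (Real.pi : ℂ) ≠ 0 := by exact_mod_cast Real.pi_ne_zero
  rw [← mul_assoc, mul_inv_cancel₀ (by simp [hp']), one_mul]

noncomputable def kap (t : ℝ) : ℂ := tri t * (1 + Complex.exp (Real.pi * t * Complex.I))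

lemma continuous_kap : Continuous kap := by
  unfold kap
  exact (Complex.continuous_ofReal.comp continuous_tri).mul (by fun_prop)

lemma kap_zero : kap 0 = 2 := by simp [kap, tri]; norm_num

lemma norm_kap_le (t : ℝ) : ‖kap t‖ ≤ 2 * tri t := by
  unfold kap
  rw [norm_mul, Complex.norm_real, Real.norm_eq_abs, abs_of_nonneg (tri_nonneg t), mul_comm]
  refine mul_le_mul_of_nonneg_right ?_ (tri_nonneg t)
  refine (norm_add_le _ _).trans ?_
  have : ‖Complex.exp (Real.pi * t * Complex.I)‖ = 1 := by
    have := Complex.norm_exp_ofReal_mul_I (Real.pi * t)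
    push_cast at this; exact this
  rw [this]; norm_num

lemma integrable_tri : Integrable tri :=
  continuous_tri.integrable_of_hasCompactSupport hasCompactSupport_tri

lemma integrable_tri_mul (s : ℝ) :
    Integrable (fun t : ℝ => (tri t : ℂ) * Complex.exp (s * t * Complex.I)) := by
  apply Continuous.integrable_of_hasCompactSupport
  · exact (Complex.continuous_ofReal.comp continuous_tri).mul (by fun_prop)
  · apply HasCompactSupport.mul_right
    exact hasCompactSupport_tri.comp_left Complex.ofReal_zero

lemma kap_fourier (s : ℝ) :
    ∫ t : ℝ, kap t * Complex.exp (s * t * Complex.I) = (hh s : ℂ) := by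
  unfold hh
  push_cast
  rw [← tri_fourier s, ← tri_fourier (s + Real.pi), ← integral_add (integrable_tri_mul _)
    (integrable_tri_mul _)]
  congr 1
  ext t
  unfold kap
  rw [mul_assoc, add_mul, one_mul, ← Complex.exp_add, ← mul_add]
  congr 3
  push_cast; ring_nf

lemma hh_fourier (θ : ℝ) :
    ∫ s : ℝ, (hh s : ℂ) * Complex.exp (θ * s * Complex.I) = 2 * Real.pi * kap (-θ) := by
  have hi : ∀ g : ℝ → ℝ, Integrable g →
      Integrable (fun s : ℝ => (g s : ℂ) * Complex.exp (θ * s * Complex.I)) := by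
    intro g hg
    refine hg.ofReal.mul_bdd (c := 1) ?_ ?_
    · exact (Continuous.aestronglyMeasurable (by fun_prop))
    · refine ae_of_all _ fun s => ?_
      have := Complex.norm_exp_ofReal_mul_I (θ * s)
      push_cast at this; exact this.le
  have i2 : Integrable (fun s : ℝ => fej (s + Real.pi)) := integrable_fej.comp_add_right _
  unfold hh
  push_cast
  simp_rw [add_mul]
  rw [integral_add (hi _ integrable_fej) (hi _ i2), fej_fourier]
  have h2 := integral_add_right_eq_self (μ := volume)
    (fun s : ℝ => (fej s : ℂ) * Complex.exp (θ * ((s - Real.pi : ℝ) : ℂ) * Complex.I)) Real.pi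
  simp only [add_sub_cancel_right] at h2
  rw [h2]
  have h3 : ∀ s : ℝ, (fej s : ℂ) * Complex.exp (θ * ((s - Real.pi : ℝ) : ℂ) * Complex.I) =
      (fej s : ℂ) * Complex.exp (θ * s * Complex.I) * Complex.exp (Real.pi * (-θ : ℝ) * Complex.I) := by
    intro s
    rw [mul_assoc (fej s : ℂ), ← Complex.exp_add]
    congr 2
    push_cast; ring
  simp_rw [h3]
  rw [integral_mul_const, fej_fourier]
  unfold kap
  rw [tri_neg]
  ring

end Hog

namespace Hog

/-- The standard bilinear pairing on the plane. -/
def dt (t p : ℝ × ℝ) : ℝ := t.1 * p.1 + t.2 * p.2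

lemma continuous_dt : Continuous (fun x : (ℝ × ℝ) × (ℝ × ℝ) => dt x.1 x.2) := by
  unfold dt; fun_prop

@[fun_prop]
lemma continuous_dt_comp {X : Type*} [TopologicalSpace X] {f g : X → ℝ × ℝ} (hf : Continuous f)
    (hg : Continuous g) : Continuous (fun x => dt (f x) (g x)) :=
  continuous_dt.comp (hf.prodMk hg)

@[fun_prop]
lemma measurable_dt_comp {X : Type*} [MeasurableSpace X] {f g : X → ℝ × ℝ} (hf : Measurable f)
    (hg : Measurable g) : Measurable (fun x => dt (f x) (g x)) :=
  continuous_dt.measurable.comp (hf.prodMk hg)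

lemma dt_sub (t p q : ℝ × ℝ) : dt t (p - q) = dt t p - dt t q := by simp [dt]; ring
lemma dt_add (t p q : ℝ × ℝ) : dt t (p + q) = dt t p + dt t q := by simp [dt]; ring
lemma add_dt (t s p : ℝ × ℝ) : dt (t + s) p = dt t p + dt s p := by simp [dt]; ring
lemma smul_dt (r : ℝ) (t p : ℝ × ℝ) : dt (r • t) p = r * dt t p := by simp [dt]; ring
lemma dt_smul (r : ℝ) (t p : ℝ × ℝ) : dt t (r • p) = r * dt t p := by simp [dt]; ring
lemma neg_dt (t p : ℝ × ℝ) : dt (-t) p = - dt t p := by simp [dt]; ring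
lemma dt_neg (t p : ℝ × ℝ) : dt t (-p) = - dt t p := by simp [dt]; ring
lemma dt_zero (t : ℝ × ℝ) : dt t 0 = 0 := by simp [dt]

lemma abs_dt_le (t p : ℝ × ℝ) : |dt t p| ≤ ‖t‖ * (|p.1| + |p.2|) := by
  unfold dt
  have h1 : |t.1| ≤ ‖t‖ := norm_fst_le t
  have h2 : |t.2| ≤ ‖t‖ := norm_snd_le t
  calc |t.1 * p.1 + t.2 * p.2| ≤ |t.1| * |p.1| + |t.2| * |p.2| := by
        rw [← abs_mul, ← abs_mul]; exact abs_add_le _ _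
    _ ≤ ‖t‖ * |p.1| + ‖t‖ * |p.2| := by gcongr
    _ = _ := by ring

noncomputable def cf (Q : Measure (ℝ × ℝ)) (t : ℝ × ℝ) : ℂ :=
  ∫ p, Complex.exp (dt t p * Complex.I) ∂Q

structure Good (Q : Measure (ℝ × ℝ)) : Prop where
  prob : IsProbabilityMeasure Q
  int1 : Integrable (fun p => p.1 ^ 2) Q
  int2 : Integrable (fun p => p.2 ^ 2) Q
  nonlat : ∀ e : ℝ × ℝ, e ≠ 0 → ∀ L c : ℝ, ¬ ∀ᵐ p ∂Q, ∃ m : ℤ, dt e p = c + L * m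
  posS : 0 < ∫ p, p.1 ∂Q

lemma norm_cf_sq {Q : Measure (ℝ × ℝ)} [IsProbabilityMeasure Q] (t : ℝ × ℝ) :
    1 - ‖cf Q t‖ ^ 2 = ∫ x : (ℝ × ℝ) × (ℝ × ℝ), (dt t x.1 - dt t x.2) ^ 2 / 2 *
      Real.sinc ((dt t x.1 - dt t x.2) / 2) ^ 2 ∂(Q.prod Q) := by
  have h1 : ((‖cf Q t‖ ^ 2 : ℝ) : ℂ) = ∫ x : (ℝ × ℝ) × (ℝ × ℝ),
      Complex.exp (((dt t x.1 - dt t x.2 : ℝ) : ℂ) * Complex.I) ∂(Q.prod Q) := by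
    have : ((‖cf Q t‖ ^ 2 : ℝ) : ℂ) = cf Q t * (starRingEnd ℂ) (cf Q t) := by
      rw [Complex.mul_conj, Complex.normSq_eq_norm_sq]
    rw [this]
    unfold cf
    rw [← integral_conj, ← integral_prod_mul]
    congr 1
    ext x
    rw [← Complex.exp_conj, ← Complex.exp_add]
    congr 1
    simp
    ring
  have hi : Integrable (fun x : (ℝ × ℝ) × (ℝ × ℝ) =>
      Complex.exp (((dt t x.1 - dt t x.2 : ℝ) : ℂ) * Complex.I)) (Q.prod Q) := by
    refine Integrable.of_bound (C := 1) (Continuous.aestronglyMeasurable (by fun_prop))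
      (ae_of_all _ fun x => ?_)
    rw [Complex.norm_exp_ofReal_mul_I]
  have h2 : ‖cf Q t‖ ^ 2 = ∫ x : (ℝ × ℝ) × (ℝ × ℝ),
      Real.cos (dt t x.1 - dt t x.2) ∂(Q.prod Q) := by
    have h3 := congrArg Complex.re h1
    rw [Complex.ofReal_re] at h3
    rw [h3]
    have := integral_re hi
    simp only [Complex.exp_ofReal_mul_I_re, RCLike.re_to_complex] at this
    exact this.symm
  have hi2 : Integrable (fun x : (ℝ × ℝ) × (ℝ × ℝ) =>
      Real.cos (dt t x.1 - dt t x.2)) (Q.prod Q) := by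
    refine Integrable.of_bound (C := 1) (Continuous.aestronglyMeasurable (by fun_prop))
      (ae_of_all _ fun x => ?_)
    exact Real.abs_cos_le_one _
  have h4 : (1:ℝ) = ∫ x : (ℝ × ℝ) × (ℝ × ℝ), (1:ℝ) ∂(Q.prod Q) := by simp
  rw [h2]
  conv_lhs => rw [h4]
  rw [← integral_sub (integrable_const _) hi2]
  congr 1
  ext x
  set d := dt t x.1 - dt t x.2
  have h5 := fej_mul_sq d
  unfold fej at h5
  have h6 : Real.cos d = 1 - 2 * Real.sin (d / 2) ^ 2 := by
    have := Real.cos_two_mul (d / 2)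
    rw [show 2 * (d / 2) = d by ring] at this
    rw [this, Real.cos_sq']; ring
  rw [h6]; linarith

lemma int_sq_prod {Q : Measure (ℝ × ℝ)} (hQ : Good Q) :
    Integrable (fun x : (ℝ × ℝ) × (ℝ × ℝ) =>
      4 * (x.1.1 ^ 2 + x.1.2 ^ 2 + x.2.1 ^ 2 + x.2.2 ^ 2)) (Q.prod Q) := by
  have := hQ.prob
  refine Integrable.const_mul ?_ 4
  have a1 := hQ.int1.comp_fst Q
  have a2 := hQ.int2.comp_fst Q
  have b1 := hQ.int1.comp_snd Q
  have b2 := hQ.int2.comp_snd Q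
  exact ((a1.add a2).add b1).add b2

lemma sq_bound (t p q : ℝ × ℝ) : (dt t p - dt t q) ^ 2 ≤
    ‖t‖ ^ 2 * (4 * (p.1 ^ 2 + p.2 ^ 2 + q.1 ^ 2 + q.2 ^ 2)) := by
  rw [← dt_sub, ← sq_abs]
  have h := abs_dt_le t (p - q)
  have h2 : |dt t (p - q)| ^ 2 ≤ (‖t‖ * (|(p - q).1| + |(p - q).2|)) ^ 2 :=
    pow_le_pow_left₀ (abs_nonneg _) h 2
  refine h2.trans ?_
  rw [mul_pow]
  refine mul_le_mul_of_nonneg_left ?_ (by positivity)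
  simp only [Prod.fst_sub, Prod.snd_sub]
  have e1 : |p.1 - q.1| ^ 2 = (p.1 - q.1) ^ 2 := sq_abs _
  have e2 : |p.2 - q.2| ^ 2 = (p.2 - q.2) ^ 2 := sq_abs _
  nlinarith [sq_nonneg (|p.1 - q.1| - |p.2 - q.2|), sq_nonneg (p.1 + q.1), sq_nonneg (p.2 + q.2)]

noncomputable def Phi (Q : Measure (ℝ × ℝ)) (y : ℝ × (ℝ × ℝ)) : ℝ :=
  ∫ x : (ℝ × ℝ) × (ℝ × ℝ), (dt y.2 x.1 - dt y.2 x.2) ^ 2 / 2 *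
      Real.sinc (y.1 * (dt y.2 x.1 - dt y.2 x.2) / 2) ^ 2 ∂(Q.prod Q)

lemma phi_bound (y : ℝ × (ℝ × ℝ)) (x : (ℝ × ℝ) × (ℝ × ℝ)) (hy : ‖y.2‖ = 1) :
    ‖(dt y.2 x.1 - dt y.2 x.2) ^ 2 / 2 *
      Real.sinc (y.1 * (dt y.2 x.1 - dt y.2 x.2) / 2) ^ 2‖ ≤
      4 * (x.1.1 ^ 2 + x.1.2 ^ 2 + x.2.1 ^ 2 + x.2.2 ^ 2) := by
  have h1 := sq_bound y.2 x.1 x.2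
  rw [hy] at h1
  have h2 : Real.sinc (y.1 * (dt y.2 x.1 - dt y.2 x.2) / 2) ^ 2 ≤ 1 := by
    rw [← sq_abs]
    exact pow_le_one₀ (abs_nonneg _) (Real.abs_sinc_le_one _)
  rw [Real.norm_eq_abs, abs_of_nonneg (by positivity)]
  have h3 : 0 ≤ Real.sinc (y.1 * (dt y.2 x.1 - dt y.2 x.2) / 2) ^ 2 := sq_nonneg _
  nlinarith [sq_nonneg (dt y.2 x.1 - dt y.2 x.2)]

lemma continuousOn_Phi {Q : Measure (ℝ × ℝ)} (hQ : Good Q) :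
    ContinuousOn (Phi Q) (Set.univ ×ˢ Metric.sphere 0 1) := by
  have := hQ.prob
  unfold Phi
  refine continuousOn_of_dominated (bound := fun x : (ℝ × ℝ) × (ℝ × ℝ) =>
      4 * (x.1.1 ^ 2 + x.1.2 ^ 2 + x.2.1 ^ 2 + x.2.2 ^ 2)) ?_ ?_ (int_sq_prod hQ) ?_
  · intro y _
    refine Continuous.aestronglyMeasurable ?_
    have := Real.continuous_sinc
    fun_prop
  · intro y hy
    have : ‖y.2‖ = 1 := by simpa using hy.2
    exact ae_of_all _ fun x => phi_bound y x this
  · refine ae_of_all _ fun x => ?_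
    have := Real.continuous_sinc
    apply Continuous.continuousOn
    fun_prop

lemma Phi_pos {Q : Measure (ℝ × ℝ)} (hQ : Good Q) (y : ℝ × (ℝ × ℝ)) (hy : ‖y.2‖ = 1) :
    0 < Phi Q y := by
  have := hQ.prob
  have hnn : 0 ≤ Phi Q y := integral_nonneg fun x => by positivity
  refine lt_of_le_of_ne hnn fun h0 => ?_
  have hi : Integrable (fun x : (ℝ × ℝ) × (ℝ × ℝ) => (dt y.2 x.1 - dt y.2 x.2) ^ 2 / 2 *
      Real.sinc (y.1 * (dt y.2 x.1 - dt y.2 x.2) / 2) ^ 2) (Q.prod Q) := by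
    refine (int_sq_prod hQ).mono' ?_ (ae_of_all _ fun x => phi_bound y x hy)
    have := Real.continuous_sinc
    exact Continuous.aestronglyMeasurable (by fun_prop)
  have h1 := (integral_eq_zero_iff_of_nonneg (fun x => by positivity) hi).1 h0.symm
  have h2 := Measure.ae_ae_of_ae_prod h1
  obtain ⟨p0, hp0⟩ := h2.exists
  have he : y.2 ≠ 0 := by
    intro h; rw [h] at hy; simp at hy
  apply hQ.nonlat y.2 he (2 * Real.pi / y.1) (dt y.2 p0)
  filter_upwards [hp0] with p hp
  simp only [Pi.zero_apply, mul_eq_zero, _root_.div_eq_zero_iff, OfNat.ofNat_ne_zero, or_false, ne_eq,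
    not_false_eq_true, pow_eq_zero_iff] at hp
  by_cases hd : dt y.2 p0 - dt y.2 p = 0
  · exact ⟨0, by simp; linarith⟩
  have hp := hp.resolve_left hd
  by_cases h1 : y.1 = 0
  · rw [h1] at hp; simp at hp
  rw [Real.sinc_of_ne_zero (by positivity), _root_.div_eq_zero_iff] at hp
  have hp := hp.resolve_right (by positivity)
  obtain ⟨m, hm⟩ := Real.sin_eq_zero_iff.1 hp
  refine ⟨-m, ?_⟩
  push_cast
  field_simp
  field_simp at hm
  linarith

lemma cf_bound {Q : Measure (ℝ × ℝ)} (hQ : Good Q) (A : ℝ) :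
    ∃ c > 0, ∀ t : ℝ × ℝ, ‖t‖ ≤ A → ‖cf Q t‖ ≤ Real.exp (-c * ‖t‖ ^ 2) := by
  have := hQ.prob
  have hK : IsCompact (Set.Icc 0 A ×ˢ Metric.sphere (0 : ℝ × ℝ) 1) :=
    isCompact_Icc.prod (isCompact_sphere _ _)
  rcases lt_or_ge A 0 with hA | hA
  · exact ⟨1, one_pos, fun t ht => absurd (norm_nonneg t) (by linarith)⟩
  have hne : (Set.Icc 0 A ×ˢ Metric.sphere (0 : ℝ × ℝ) 1).Nonempty :=
    ⟨(0, (1, 0)), ⟨⟨le_rfl, hA⟩, by simp⟩⟩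
  obtain ⟨y0, hy0, hmin⟩ := hK.exists_isMinOn hne
    ((continuousOn_Phi hQ).mono (Set.prod_mono (Set.subset_univ _) subset_rfl))
  have hpos : 0 < Phi Q y0 := Phi_pos hQ y0 (by simpa using hy0.2)
  refine ⟨Phi Q y0 / 2, by positivity, fun t ht => ?_⟩
  by_cases ht0 : t = 0
  · subst ht0
    have : cf Q 0 = 1 := by simp [cf, dt]
    simp [this]
  have hn : ‖t‖ ≠ 0 := norm_ne_zero_iff.2 ht0
  have hmem : (‖t‖, ‖t‖⁻¹ • t) ∈ Set.Icc 0 A ×ˢ Metric.sphere (0 : ℝ × ℝ) 1 := by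
    refine ⟨⟨norm_nonneg _, ht⟩, ?_⟩
    simp [norm_smul, hn]
  have h1 := isMinOn_iff.1 hmin _ hmem
  have h2 := norm_cf_sq (Q := Q) t
  have h3 : 1 - ‖cf Q t‖ ^ 2 = ‖t‖ ^ 2 * Phi Q (‖t‖, ‖t‖⁻¹ • t) := by
    rw [h2]
    unfold Phi
    rw [← integral_const_mul]
    congr 1
    ext x
    simp only [smul_dt]
    have e : ‖t‖ * (‖t‖⁻¹ * dt t x.1 - ‖t‖⁻¹ * dt t x.2) / 2 = (dt t x.1 - dt t x.2) / 2 := by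
      field_simp
    rw [e]
    field_simp
  have h4 : ‖cf Q t‖ ^ 2 ≤ Real.exp (-(Phi Q y0 / 2) * ‖t‖ ^ 2) ^ 2 := by
    rw [← Real.exp_nat_mul]
    have := Real.add_one_le_exp ((2:ℕ) * (-(Phi Q y0 / 2) * ‖t‖ ^ 2))
    push_cast at this ⊢
    nlinarith [sq_nonneg ‖t‖]
  exact le_of_sq_le_sq h4 (Real.exp_pos _).le

end Hog

namespace Hog

lemma mconv_eq (μ ν : Measure (ℝ × ℝ)) : mconv μ ν = Measure.conv μ ν := rfl

lemma iterConv_prob {Q : Measure (ℝ × ℝ)} [IsProbabilityMeasure Q] (n : ℕ) :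
    IsProbabilityMeasure (iterConv Q n) := by
  induction n with
  | zero => unfold iterConv; infer_instance
  | succ n ih =>
    unfold iterConv mconv
    exact Measure.isProbabilityMeasure_map (by fun_prop)

lemma iterConv_sfin {Q : Measure (ℝ × ℝ)} [SFinite Q] (n : ℕ) :
    SFinite (iterConv Q n) := by
  induction n with
  | zero => unfold iterConv; infer_instance
  | succ n ih =>
    unfold iterConv mconv
    infer_instance

lemma iterConv_add {Q : Measure (ℝ × ℝ)} [SFinite Q] (m n : ℕ) :
    iterConv Q (m + n) = mconv (iterConv Q m) (iterConv Q n) := by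
  have h := fun n => iterConv_sfin (Q := Q) n
  induction n with
  | zero => simp only [mconv_eq, iterConv, add_zero]; rw [Measure.conv_dirac_zero]
  | succ n ih =>
    rw [← add_assoc]
    simp only [iterConv, ih, mconv_eq]
    rw [Measure.conv_assoc]

lemma lintegral_mconv {μ ν : Measure (ℝ × ℝ)} [SFinite ν] {g : ℝ × ℝ → ℝ≥0∞}
    (hg : Measurable g) : ∫⁻ p, g p ∂(mconv μ ν) = ∫⁻ p, ∫⁻ q, g (p + q) ∂ν ∂μ := by
  unfold mconv
  rw [lintegral_map hg (by fun_prop), lintegral_prod _ (by fun_prop)]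

lemma cf_iterConv {Q : Measure (ℝ × ℝ)} [IsProbabilityMeasure Q] (n : ℕ) (t : ℝ × ℝ) :
    cf (iterConv Q n) t = cf Q t ^ n := by
  have h := fun n => iterConv_prob (Q := Q) n
  induction n with
  | zero => simp [cf, iterConv, dt]
  | succ n ih =>
    rw [pow_succ, ← ih]
    unfold cf
    rw [← integral_prod_mul]
    simp only [iterConv, mconv]
    rw [integral_map (by fun_prop) (Continuous.aestronglyMeasurable (by fun_prop))]
    congr 1
    ext x
    rw [dt_add, ← Complex.exp_add]
    congr 1
    push_cast; ring

/-- centred second moments of the walk -/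
lemma moments {Q : Measure (ℝ × ℝ)} [IsProbabilityMeasure Q] (l : ℝ × ℝ → ℝ) (hl : Continuous l)
    (hadd : ∀ p q, l (p + q) = l p + l q) (hL : MemLp l 2 Q) (n : ℕ) :
    MemLp (fun p => l p - n * ∫ q, l q ∂Q) 2 (iterConv Q n) ∧
    ∫ p, (l p - n * ∫ q, l q ∂Q) ∂(iterConv Q n) = 0 ∧
    ∫ p, (l p - n * ∫ q, l q ∂Q) ^ 2 ∂(iterConv Q n) =
      n * ∫ p, (l p - ∫ q, l q ∂Q) ^ 2 ∂Q := by
  have hpr := fun n => iterConv_prob (Q := Q) n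
  set m := ∫ q, l q ∂Q with hm
  have hLm : MemLp (fun p => l p - m) 2 Q := hL.sub (memLp_const m)
  have h1m : ∫ p, (l p - m) ∂Q = 0 := by
    rw [integral_sub (hL.integrable (by norm_num)) (integrable_const _)]
    simp [hm]
  induction n with
  | zero =>
    have l0 : l 0 = 0 := by have := hadd 0 0; simp at this; exact this
    simp only [iterConv]
    refine ⟨?_, ?_, ?_⟩
    · refine MemLp.of_bound (by fun_prop) |l 0 - (0:ℕ) * m| ?_
      rw [ae_dirac_eq]
      simp
    · simp [l0]
    · simp [l0]
  | succ n ih =>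
    obtain ⟨i1, i2, i3⟩ := ih
    simp only [iterConv, mconv]
    have a1 : MemLp (fun x : (ℝ × ℝ) × (ℝ × ℝ) => l x.1 - n * m) 2 ((iterConv Q n).prod Q) :=
      i1.comp_fst Q
    have a2 : MemLp (fun x : (ℝ × ℝ) × (ℝ × ℝ) => l x.2 - m) 2 ((iterConv Q n).prod Q) :=
      hLm.comp_snd _
    have e : ∀ x : (ℝ × ℝ) × (ℝ × ℝ), l (x.1 + x.2) - ((n + 1 : ℕ) : ℝ) * m =
        (l x.1 - n * m) + (l x.2 - m) := by
      intro x; rw [hadd]; push_cast; ring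
    refine ⟨?_, ?_, ?_⟩
    · rw [memLp_map_measure_iff (by fun_prop) (by fun_prop)]
      refine (a1.add a2).ae_eq (ae_of_all _ fun x => ?_)
      simp only [Function.comp, e, Pi.add_apply]
    · rw [integral_map (by fun_prop) (by fun_prop)]
      simp only [e]
      rw [integral_add (a1.integrable (by norm_num)) (a2.integrable (by norm_num)),
        integral_fun_fst (fun p => l p - n * m), integral_fun_snd (fun p => l p - m)]
      simp [i2, h1m]
    · rw [integral_map (by fun_prop) (by fun_prop)]
      simp only [e]
      have e2 : ∀ x : (ℝ × ℝ) × (ℝ × ℝ), ((l x.1 - n * m) + (l x.2 - m)) ^ 2 =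
        (l x.1 - n * m) ^ 2 + 2 * ((l x.1 - n * m) * (l x.2 - m)) + (l x.2 - m) ^ 2 := by
        intro x; ring
      simp only [e2]
      have b1 := a1.integrable_sq
      have b2 := a2.integrable_sq
      have b3 := (a1.integrable_mul a2).const_mul 2
      have b13 := b1.add b3
      rw [integral_add, integral_add, integral_const_mul,
        integral_prod_mul (fun p => l p - n * m) (fun p => l p - m),
        integral_fun_fst (fun p => (l p - n * m) ^ 2), integral_fun_snd (fun p => (l p - m) ^ 2)]
      · simp [i2, h1m, i3]; ring
      · exact b1
      · exact b3
      · exact b13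
      · exact b2

end Hog

namespace Hog
open scoped Topology

noncomputable def ak (Q : Measure (ℝ × ℝ)) (g : ℝ × ℝ → ℂ) (k : ℕ) (z : ℝ × ℝ) : ℂ :=
  ∫ t, g t * Complex.exp (dt t z * Complex.I) * cf Q (-t) ^ k

lemma continuous_cf {Q : Measure (ℝ × ℝ)} [IsProbabilityMeasure Q] : Continuous (cf Q) := by
  unfold cf
  refine continuous_of_dominated (bound := fun _ => 1) ?_ ?_ (integrable_const _) ?_
  · intro t; exact Continuous.aestronglyMeasurable (by fun_prop)
  · intro t
    refine ae_of_all _ fun p => ?_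
    rw [Complex.norm_exp_ofReal_mul_I]
  · refine ae_of_all _ fun p => ?_
    fun_prop

lemma ak_eq {Q : Measure (ℝ × ℝ)} [IsProbabilityMeasure Q] {g : ℝ × ℝ → ℂ} (hg : Integrable g)
    (hgc : Continuous g) (k : ℕ) (z : ℝ × ℝ) :
    ak Q g k z = ∫ p, (∫ t, g t * Complex.exp (dt t (z - p) * Complex.I)) ∂(iterConv Q k) := by
  have := iterConv_prob (Q := Q) k
  rw [integral_integral_swap]
  · unfold ak
    congr 1
    ext t
    rw [← cf_iterConv]
    unfold cf
    rw [← integral_const_mul]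
    congr 1
    ext p
    rw [mul_assoc, ← Complex.exp_add]
    congr 2
    rw [dt_sub, neg_dt]; push_cast; ring
  · have h1 : Integrable (fun x : (ℝ × ℝ) × (ℝ × ℝ) => g x.2) ((iterConv Q k).prod volume) :=
      hg.comp_snd _
    refine h1.mono (Continuous.aestronglyMeasurable (by unfold Function.uncurry; fun_prop)) ?_
    refine ae_of_all _ fun x => ?_
    simp only [Function.uncurry, norm_mul, Complex.norm_exp_ofReal_mul_I, mul_one, le_refl]

lemma gauss_le (c : ℝ) (hc : 0 ≤ c) (t : ℝ × ℝ) : Real.exp (-c * ‖t‖ ^ 2) ≤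
    Real.exp (-(c / 2) * t.1 ^ 2) * Real.exp (-(c / 2) * t.2 ^ 2) := by
  rw [← Real.exp_add]
  apply Real.exp_le_exp.2
  have h1 : |t.1| ≤ ‖t‖ := norm_fst_le t
  have h2 : |t.2| ≤ ‖t‖ := norm_snd_le t
  have h3 : t.1 ^ 2 ≤ ‖t‖ ^ 2 := by rw [← sq_abs]; exact pow_le_pow_left₀ (abs_nonneg _) h1 2
  have h4 : t.2 ^ 2 ≤ ‖t‖ ^ 2 := by rw [← sq_abs]; exact pow_le_pow_left₀ (abs_nonneg _) h2 2
  nlinarith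

lemma integrable_gauss2 (c : ℝ) (hc : 0 < c) : Integrable (fun t : ℝ × ℝ =>
    Real.exp (-c * t.1 ^ 2) * Real.exp (-c * t.2 ^ 2)) :=
  (integrable_exp_neg_mul_sq hc).mul_prod (integrable_exp_neg_mul_sq hc)

lemma integral_gauss2 (c : ℝ) (hc : 0 < c) : ∫ t : ℝ × ℝ,
    Real.exp (-c * t.1 ^ 2) * Real.exp (-c * t.2 ^ 2) = Real.pi / c := by
  have := integral_prod_mul (μ := (volume : Measure ℝ)) (ν := (volume : Measure ℝ))
    (fun t : ℝ => Real.exp (-c * t ^ 2)) (fun t : ℝ => Real.exp (-c * t ^ 2))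
  rw [← Measure.volume_eq_prod] at this
  rw [this, integral_gaussian, Real.mul_self_sqrt (by positivity)]

lemma cpt_bounds {g : ℝ × ℝ → ℂ} (hgc : Continuous g) (hgs : HasCompactSupport g) :
    ∃ B A : ℝ, 0 ≤ B ∧ (∀ t, ‖g t‖ ≤ B) ∧ (∀ t, A < ‖t‖ → g t = 0) := by
  obtain ⟨B, hB⟩ := hgs.exists_bound_of_continuous hgc
  obtain ⟨A, hA⟩ := hgs.isCompact.isBounded.exists_norm_le
  refine ⟨B, A, (norm_nonneg _).trans (hB 0), hB, fun t ht => ?_⟩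
  by_contra h
  exact absurd (hA t (subset_tsupport _ h)) (not_le.2 ht)

/-- pointwise domination of the Fourier integrand -/
lemma dom_bound {Q : Measure (ℝ × ℝ)} (hQ : Good Q) {g : ℝ × ℝ → ℂ} (hgc : Continuous g)
    (hgs : HasCompactSupport g) : ∃ B c : ℝ, 0 ≤ B ∧ 0 < c ∧ ∀ (k : ℕ) (z t : ℝ × ℝ),
    ‖g t * Complex.exp (dt t z * Complex.I) * cf Q (-t) ^ k‖ ≤
      B * (Real.exp (-(c * k) * t.1 ^ 2) * Real.exp (-(c * k) * t.2 ^ 2)) := by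
  obtain ⟨B, A, hB, hgB, hgA⟩ := cpt_bounds hgc hgs
  obtain ⟨c, hc, hcf⟩ := cf_bound hQ A
  refine ⟨B, c / 2, hB, by positivity, fun k z t => ?_⟩
  rw [norm_mul, norm_mul, Complex.norm_exp_ofReal_mul_I, mul_one, norm_pow]
  by_cases ht : A < ‖t‖
  · rw [hgA t ht]; simp; positivity
  have h1 := hcf (-t) (by rw [norm_neg]; exact not_lt.1 ht)
  rw [norm_neg] at h1
  have h2 := pow_le_pow_left₀ (norm_nonneg _) h1 k
  rw [← Real.exp_nat_mul] at h2
  have h3 := gauss_le (c * k) (by positivity) t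
  refine mul_le_mul (hgB t) (h2.trans ?_) (by positivity) hB
  have e1 : c / 2 * k = c * k / 2 := by ring
  have e2 : (k : ℝ) * (-c * ‖t‖ ^ 2) = -(c * k) * ‖t‖ ^ 2 := by ring
  rw [e1, e2]
  exact h3

lemma ak_bound {Q : Measure (ℝ × ℝ)} (hQ : Good Q) {g : ℝ × ℝ → ℂ} (hgc : Continuous g)
    (hgs : HasCompactSupport g) : ∃ C : ℝ, 0 ≤ C ∧ ∀ (k : ℕ) (z : ℝ × ℝ), k * ‖ak Q g k z‖ ≤ C := by
  obtain ⟨B, c, hB, hc, h⟩ := dom_bound hQ hgc hgs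
  refine ⟨B * Real.pi / c, by positivity, fun k z => ?_⟩
  by_cases hk : k = 0
  · subst hk; simp; positivity
  have hk' : (0:ℝ) < k := by positivity
  have h1 := norm_integral_le_of_norm_le ((integrable_gauss2 (c * k) (by positivity)).const_mul B)
    (ae_of_all _ fun t => h k z t)
  rw [integral_const_mul, integral_gauss2 _ (by positivity)] at h1
  unfold ak
  calc (k : ℝ) * _ ≤ k * (B * (Real.pi / (c * k))) := by gcongr
    _ = _ := by field_simp

/-- mean vector -/
noncomputable def mv (Q : Measure (ℝ × ℝ)) : ℝ × ℝ := (∫ p, p.1 ∂Q, ∫ p, p.2 ∂Q)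

/-- covariance quadratic form -/
noncomputable def qf (Q : Measure (ℝ × ℝ)) (t : ℝ × ℝ) : ℝ := ∫ p, (dt t p - dt t (mv Q)) ^ 2 ∂Q

lemma Good.memLp1 {Q : Measure (ℝ × ℝ)} (hQ : Good Q) : MemLp (fun p : ℝ × ℝ => p.1) 2 Q :=
  (memLp_two_iff_integrable_sq (by fun_prop)).2 hQ.int1
lemma Good.memLp2 {Q : Measure (ℝ × ℝ)} (hQ : Good Q) : MemLp (fun p : ℝ × ℝ => p.2) 2 Q :=
  (memLp_two_iff_integrable_sq (by fun_prop)).2 hQ.int2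
lemma Good.memLp {Q : Measure (ℝ × ℝ)} (hQ : Good Q) (t : ℝ × ℝ) :
    MemLp (fun p : ℝ × ℝ => dt t p) 2 Q :=
  (hQ.memLp1.const_mul t.1).add (hQ.memLp2.const_mul t.2)

lemma Good.mean_dt {Q : Measure (ℝ × ℝ)} (hQ : Good Q) (t : ℝ × ℝ) :
    ∫ p, dt t p ∂Q = dt t (mv Q) := by
  have := hQ.prob
  unfold dt mv
  rw [integral_add, integral_const_mul, integral_const_mul]
  · exact (hQ.memLp1.integrable (by norm_num)).const_mul _
  · exact (hQ.memLp2.integrable (by norm_num)).const_mul _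

lemma Good.qf_pos {Q : Measure (ℝ × ℝ)} (hQ : Good Q) {t : ℝ × ℝ} (ht : t ≠ 0) : 0 < qf Q t := by
  have := hQ.prob
  have hnn : 0 ≤ qf Q t := integral_nonneg fun p => by positivity
  refine lt_of_le_of_ne hnn fun h0 => ?_
  have hi := ((hQ.memLp t).sub (memLp_const (dt t (mv Q)))).integrable_sq
  have h1 := (integral_eq_zero_iff_of_nonneg (fun x => by positivity) hi).1 h0.symm
  apply hQ.nonlat t ht 0 (dt t (mv Q))
  filter_upwards [h1] with p hp
  refine ⟨0, ?_⟩
  have : dt t p - dt t (mv Q) = 0 := by simpa using hp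
  simp; linarith

lemma clt_pow {Q : Measure (ℝ × ℝ)} (hQ : Good Q) (t : ℝ × ℝ) :
    Tendsto (fun k : ℕ => (Complex.exp (dt ((√(k:ℝ))⁻¹ • t) (mv Q) * Complex.I) *
      cf Q (-((√(k:ℝ))⁻¹ • t))) ^ k) atTop (𝓝 (Complex.exp (-(qf Q t : ℂ) / 2))) := by
  have := hQ.prob
  by_cases ht : t = 0
  · subst ht
    simp [cf, dt, qf]
  have hq := hQ.qf_pos ht
  set σ := √(qf Q t) with hσ
  have hσ0 : 0 < σ := Real.sqrt_pos.2 hq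
  have hσ2 : σ ^ 2 = qf Q t := Real.sq_sqrt hq.le
  have hM := (hQ.memLp t).sub (memLp_const (dt t (mv Q)))
  let X : ℝ × ℝ → ℝ := fun p => -((dt t p - dt t (mv Q)) / σ)
  have hX : AEMeasurable X Q := by
    refine Continuous.aemeasurable ?_
    simp only [X]; fun_prop
  have h0 : ∫ p, X p ∂Q = 0 := by
    simp only [X]
    rw [integral_neg, integral_div, integral_sub ((hQ.memLp t).integrable (by norm_num))
      (integrable_const _), hQ.mean_dt]
    simp
  have h1 : ∫ p, (X ^ 2) p ∂Q = 1 := by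
    have : ∀ p, (X ^ 2) p = (dt t p - dt t (mv Q)) ^ 2 / σ ^ 2 := by
      intro p; simp only [X, Pi.pow_apply]; rw [neg_sq, div_pow]
    simp_rw [this]
    rw [integral_div, hσ2]
    exact div_self hq.ne'
  have key := ProbabilityTheory.tendsto_charFun_inv_sqrt_mul_pow hX h0 h1 σ
  have e1 : (Complex.exp (-(σ:ℂ) ^ 2 / 2)) = Complex.exp (-(qf Q t : ℂ) / 2) := by
    rw [← hσ2]; push_cast; rfl
  rw [e1] at key
  refine key.congr fun k => ?_
  congr 1
  rw [charFun_apply_real, integral_map hX (Continuous.aestronglyMeasurable (by fun_prop))]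
  unfold cf
  rw [← integral_const_mul]
  congr 1
  ext p
  rw [← Complex.exp_add]
  congr 1
  simp only [X, smul_dt, neg_dt]
  have : (σ : ℂ) ≠ 0 := by exact_mod_cast hσ0.ne'
  push_cast
  field_simp
  ring

lemma integrable_dom (B c : ℝ) (hc : 0 < c) : Integrable (fun t : ℝ × ℝ =>
    B * (Real.exp (-c * t.1 ^ 2) * Real.exp (-c * t.2 ^ 2))) :=
  (integrable_gauss2 c hc).const_mul B

/-- The local limit theorem in Fourier form. -/
lemma ak_limit {Q : Measure (ℝ × ℝ)} (hQ : Good Q) {g : ℝ × ℝ → ℂ} (hgc : Continuous g)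
    (hgs : HasCompactSupport g) (k : ℕ → ℕ) (z : ℕ → ℝ × ℝ) (w : ℝ × ℝ)
    (hk : Tendsto k atTop atTop)
    (hz : Tendsto (fun j => (√(k j : ℝ))⁻¹ • (z j - (k j : ℝ) • mv Q)) atTop (𝓝 w)) :
    Tendsto (fun j => (k j : ℂ) * ak Q g (k j) (z j)) atTop
      (𝓝 (g 0 * ∫ t, Complex.exp (-(qf Q t : ℂ) / 2 + dt t w * Complex.I))) := by
  have := hQ.prob
  obtain ⟨B, c, hB, hc, hbd⟩ := dom_bound hQ hgc hgs
  have hscale : ∀ᶠ j in atTop, (k j : ℂ) * ak Q g (k j) (z j) =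
      ∫ t : ℝ × ℝ, g ((√(k j : ℝ))⁻¹ • t) *
        Complex.exp (dt ((√(k j : ℝ))⁻¹ • t) (z j) * Complex.I) *
        cf Q (-((√(k j : ℝ))⁻¹ • t)) ^ (k j) := by
    filter_upwards [hk.eventually_gt_atTop 0] with j hj
    have hj' : (0:ℝ) < k j := by exact_mod_cast hj
    have := Measure.integral_comp_smul (volume : Measure (ℝ × ℝ))
      (fun t => g t * Complex.exp (dt t (z j) * Complex.I) * cf Q (-t) ^ (k j)) (√(k j : ℝ))⁻¹
    rw [this]
    unfold ak
    have e : |(((√(k j : ℝ))⁻¹) ^ Module.finrank ℝ (ℝ × ℝ))⁻¹| = (k j : ℝ) := by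
      rw [Module.finrank_prod, Module.finrank_self]
      norm_num
    rw [e, Complex.real_smul]
    norm_cast
  rw [← integral_const_mul]
  refine (tendsto_integral_filter_of_dominated_convergence
    (fun t : ℝ × ℝ => B * (Real.exp (-c * t.1 ^ 2) * Real.exp (-c * t.2 ^ 2)))
    (F := fun j (t : ℝ × ℝ) => g ((√(k j : ℝ))⁻¹ • t) *
        Complex.exp (dt ((√(k j : ℝ))⁻¹ • t) (z j) * Complex.I) *
        cf Q (-((√(k j : ℝ))⁻¹ • t)) ^ (k j)) ?_ ?_ (integrable_dom B c hc) ?_).congr' ?_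
  · refine Eventually.of_forall fun j => Continuous.aestronglyMeasurable ?_
    have := continuous_cf (Q := Q)
    fun_prop
  · filter_upwards [hk.eventually_gt_atTop 0] with j h0
    refine ae_of_all _ fun t => ?_
    · have hb := hbd (k j) (z j) ((√(k j : ℝ))⁻¹ • t)
      refine hb.trans (le_of_eq ?_)
      have h0' : (0:ℝ) < k j := by exact_mod_cast h0
      have e : ((√(k j : ℝ))⁻¹) ^ 2 = (k j : ℝ)⁻¹ := by
        rw [inv_pow, Real.sq_sqrt h0'.le]
      simp only [Prod.smul_fst, Prod.smul_snd, smul_eq_mul, mul_pow, e]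
      congr 3 <;> field_simp
  · refine ae_of_all _ fun t => ?_
    have h1 : Tendsto (fun j => (√(k j : ℝ))⁻¹ • t) atTop (𝓝 0) := by
      rw [← zero_smul ℝ t]
      refine Tendsto.smul_const ?_ t
      exact tendsto_inv_atTop_zero.comp (Real.tendsto_sqrt_atTop.comp
        (tendsto_natCast_atTop_atTop.comp hk))
    have h2 : Tendsto (fun j => g ((√(k j : ℝ))⁻¹ • t)) atTop (𝓝 (g 0)) :=
      (hgc.tendsto 0).comp h1
    have h3 := (clt_pow hQ t).comp hk
    have h4 : Tendsto (fun j => Complex.exp (dt t ((√(k j : ℝ))⁻¹ • (z j - (k j : ℝ) • mv Q)) *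
        Complex.I)) atTop (𝓝 (Complex.exp (dt t w * Complex.I))) := by
      have hc : Continuous (fun w : ℝ × ℝ => Complex.exp (dt t w * Complex.I)) := by fun_prop
      exact (hc.tendsto w).comp hz
    have h5 := h2.mul (h3.mul h4)
    rw [← Complex.exp_add] at h5
    refine h5.congr fun j => ?_
    simp only [Function.comp]
    rw [mul_pow, mul_assoc (g _)]
    congr 1
    rw [mul_right_comm]
    congr 1
    rw [← Complex.exp_nat_mul, ← Complex.exp_add]
    congr 1
    simp only [smul_dt, dt_smul, dt_sub]
    push_cast
    ring
  · filter_upwards [hscale] with j hj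
    rw [hj]

end Hog

namespace Hog
open scoped Topology

noncomputable def ff (z : ℝ × ℝ) : ℝ := hh z.1 * hh z.2
noncomputable def KK (t : ℝ × ℝ) : ℂ := kap t.1 * kap t.2

lemma continuous_ff : Continuous ff := by
  have := continuous_hh
  unfold ff; fun_prop
lemma continuous_KK : Continuous KK := by
  have := continuous_kap
  unfold KK; fun_prop

lemma ff_pos (z : ℝ × ℝ) : 0 < ff z := mul_pos (hh_pos _) (hh_pos _)

lemma hh_le (s : ℝ) : hh s ≤ 100 := by
  have := hh_upper s
  nlinarith [hh_nonneg s, sq_nonneg s, mul_nonneg (hh_nonneg s) (sq_nonneg s)]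

lemma ff_le (z : ℝ × ℝ) : ff z ≤ 10000 := by
  unfold ff
  nlinarith [hh_le z.1, hh_le z.2, hh_nonneg z.1, hh_nonneg z.2]

lemma ff_sq1 (z : ℝ × ℝ) : z.1 ^ 2 * ff z ≤ 10000 := by
  unfold ff
  have h : z.1 ^ 2 * hh z.1 ≤ 100 := by nlinarith [hh_upper z.1, hh_nonneg z.1]
  have h0 : 0 ≤ z.1 ^ 2 * hh z.1 := mul_nonneg (sq_nonneg _) (hh_nonneg _)
  nlinarith [hh_le z.2, hh_nonneg z.2]
lemma ff_sq2 (z : ℝ × ℝ) : z.2 ^ 2 * ff z ≤ 10000 := by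
  unfold ff
  have h : z.2 ^ 2 * hh z.2 ≤ 100 := by nlinarith [hh_upper z.2, hh_nonneg z.2]
  have h0 : 0 ≤ z.2 ^ 2 * hh z.2 := mul_nonneg (sq_nonneg _) (hh_nonneg _)
  nlinarith [hh_le z.1, hh_nonneg z.1]

lemma kap_zero_of {t : ℝ} (h : 1 ≤ |t|) : kap t = 0 := by
  unfold kap; rw [tri_zero_of h]; simp

lemma hasCompactSupport_KK : HasCompactSupport KK := by
  refine HasCompactSupport.of_support_subset_isCompact
    (isCompact_closedBall (0 : ℝ × ℝ) 1) ?_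
  intro t ht
  by_contra hc
  apply ht
  rw [mem_closedBall_zero_iff, not_le, Prod.norm_def, lt_max_iff] at hc
  unfold KK
  rcases hc with h | h
  · rw [kap_zero_of (t := t.1) (by simpa using h.le)]; simp
  · rw [kap_zero_of (t := t.2) (by simpa using h.le)]; simp

lemma integrable_KK : Integrable KK :=
  continuous_KK.integrable_of_hasCompactSupport hasCompactSupport_KK

lemma KK_fourier0 (z : ℝ × ℝ) : ∫ t, KK t * Complex.exp (dt t z * Complex.I) = (ff z : ℂ) := by
  have h := integral_prod_mul (μ := (volume : Measure ℝ)) (ν := (volume : Measure ℝ))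
    (fun t => kap t * Complex.exp (z.1 * t * Complex.I))
    (fun t => kap t * Complex.exp (z.2 * t * Complex.I))
  rw [← Measure.volume_eq_prod, kap_fourier, kap_fourier] at h
  unfold ff
  push_cast
  rw [← h]
  congr 1
  ext t
  unfold KK dt
  rw [mul_mul_mul_comm, ← Complex.exp_add]
  congr 2
  push_cast; ring

lemma KK_fourier (θ z : ℝ × ℝ) : ∫ t, KK (t - θ) * Complex.exp (dt t z * Complex.I) =
    (ff z : ℂ) * Complex.exp (dt θ z * Complex.I) := by
  rw [← KK_fourier0, ← integral_mul_const]
  rw [← integral_sub_right_eq_self (μ := volume) (fun t => KK t * Complex.exp (dt t z * Complex.I) *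
    Complex.exp (dt θ z * Complex.I)) θ]
  congr 1
  ext t
  rw [mul_assoc, ← Complex.exp_add]
  congr 2
  have : dt t z = dt (t - θ) z + dt θ z := by rw [← add_dt]; simp
  rw [this]; push_cast; ring

lemma integrable_ff : Integrable ff := integrable_hh.mul_prod integrable_hh

lemma ff_fourier (θ : ℝ × ℝ) : ∫ z, (ff z : ℂ) * Complex.exp (dt θ z * Complex.I) =
    (2 * Real.pi) ^ 2 * KK (-θ) := by
  have h := integral_prod_mul (μ := (volume : Measure ℝ)) (ν := (volume : Measure ℝ))
    (fun t => (hh t : ℂ) * Complex.exp (θ.1 * t * Complex.I))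
    (fun t => (hh t : ℂ) * Complex.exp (θ.2 * t * Complex.I))
  rw [← Measure.volume_eq_prod, hh_fourier, hh_fourier] at h
  unfold KK
  simp only [Prod.fst_neg, Prod.snd_neg]
  have e : (2 * (Real.pi:ℂ)) ^ 2 * (kap (-θ.1) * kap (-θ.2)) =
    2 * Real.pi * kap (-θ.1) * (2 * Real.pi * kap (-θ.2)) := by ring
  rw [e, ← h]
  congr 1
  ext t
  unfold ff dt
  push_cast
  rw [mul_mul_mul_comm, ← Complex.exp_add]
  congr 2
  ring

/-- expectation of the kernel -/
noncomputable def ek (Q : Measure (ℝ × ℝ)) (k : ℕ) (z : ℝ × ℝ) : ℝ :=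
  ∫ p, ff (z - p) ∂(iterConv Q k)

lemma integrable_ffk {P : Measure (ℝ × ℝ)} [IsFiniteMeasure P] (z : ℝ × ℝ) :
    Integrable (fun p => ff (z - p)) P := by
  refine Integrable.of_bound (C := 10000) (Continuous.aestronglyMeasurable ?_)
    (ae_of_all _ fun p => ?_)
  · exact continuous_ff.comp (by fun_prop)
  · rw [Real.norm_eq_abs, abs_of_nonneg (ff_pos _).le]; exact ff_le _

lemma ak_KK {Q : Measure (ℝ × ℝ)} [IsProbabilityMeasure Q] (θ : ℝ × ℝ) (k : ℕ) (z : ℝ × ℝ) :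
    ak Q (fun t => KK (t - θ)) k z =
      ∫ p, (ff (z - p) : ℂ) * Complex.exp (dt θ (z - p) * Complex.I) ∂(iterConv Q k) := by
  rw [ak_eq (integrable_KK.comp_sub_right θ) (continuous_KK.comp (by fun_prop))]
  simp_rw [KK_fourier]

lemma ak_le_ek {Q : Measure (ℝ × ℝ)} [IsProbabilityMeasure Q] (θ : ℝ × ℝ) (k : ℕ) (z : ℝ × ℝ) :
    ‖ak Q (fun t => KK (t - θ)) k z‖ ≤ ek Q k z := by
  have := iterConv_prob (Q := Q) k
  rw [ak_KK]
  refine norm_integral_le_of_norm_le (integrable_ffk z) (ae_of_all _ fun p => ?_)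
  rw [norm_mul, Complex.norm_exp_ofReal_mul_I, mul_one, Complex.norm_real, Real.norm_eq_abs,
    abs_of_nonneg (ff_pos _).le]

lemma ek_eq_ak {Q : Measure (ℝ × ℝ)} [IsProbabilityMeasure Q] (k : ℕ) (z : ℝ × ℝ) :
    (ek Q k z : ℂ) = ak Q (fun t => KK (t - 0)) k z := by
  rw [ak_KK]
  unfold ek
  rw [← integral_complex_ofReal]
  congr 1
  ext p
  simp [dt]

lemma ek_nonneg {Q : Measure (ℝ × ℝ)} (k : ℕ) (z : ℝ × ℝ) : 0 ≤ ek Q k z :=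
  integral_nonneg fun p => (ff_pos _).le

lemma ek_bound1 {Q : Measure (ℝ × ℝ)} (hQ : Good Q) : ∃ C : ℝ, 0 ≤ C ∧ ∀ (k : ℕ) (z : ℝ × ℝ),
    k * ek Q k z ≤ C := by
  have := hQ.prob
  obtain ⟨C, hC, h⟩ := ak_bound hQ (g := fun t => KK (t - 0)) (by simpa using continuous_KK)
    (by simpa using hasCompactSupport_KK)
  refine ⟨C, hC, fun k z => ?_⟩
  have := h k z
  rwa [← ek_eq_ak, Complex.norm_real, Real.norm_eq_abs, abs_of_nonneg (ek_nonneg _ _)] at this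

/-- one half of the splitting estimate -/
lemma split_half {P ρ : Measure (ℝ × ℝ)} [IsProbabilityMeasure P] [IsProbabilityMeasure ρ]
    (u : ℝ × ℝ → ℝ) (hu : MemLp u 2 P) (z : ℝ × ℝ) (D : ℝ)
    (hD : ∀ w, ∫ q, ff (w - q) ∂ρ ≤ D) :
    Integrable (fun x : (ℝ × ℝ) × (ℝ × ℝ) => u x.1 ^ 2 * ff (z - (x.1 + x.2))) (P.prod ρ) ∧
    ∫ x : (ℝ × ℝ) × (ℝ × ℝ), u x.1 ^ 2 * ff (z - (x.1 + x.2)) ∂(P.prod ρ) ≤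
      (∫ p, u p ^ 2 ∂P) * D := by
  have hi : Integrable (fun x : (ℝ × ℝ) × (ℝ × ℝ) => u x.1 ^ 2 * ff (z - (x.1 + x.2)))
      (P.prod ρ) := by
    refine (hu.integrable_sq.comp_fst ρ).mul_bdd (c := 10000) ?_ (ae_of_all _ fun p => ?_)
    · exact (continuous_ff.comp (by fun_prop)).aestronglyMeasurable
    · rw [Real.norm_eq_abs, abs_of_nonneg (ff_pos _).le]; exact ff_le _
  refine ⟨hi, ?_⟩
  rw [integral_prod _ hi, ← integral_mul_const]
  refine integral_mono hi.integral_prod_left (hu.integrable_sq.mul_const D) fun p => ?_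
  simp only
  rw [integral_const_mul]
  refine mul_le_mul_of_nonneg_left ?_ (sq_nonneg _)
  simp only [← sub_sub]
  exact hD (z - p)

lemma ek_aux {Q : Measure (ℝ × ℝ)} (hQ : Good Q) (l : ℝ × ℝ → ℝ) (hl : Continuous l)
    (hadd : ∀ p q, l (p + q) = l p + l q) (hL : MemLp l 2 Q) :
    ∃ C : ℝ, 0 ≤ C ∧ ∀ (k : ℕ) (z : ℝ × ℝ),
      ∫ p, (l p - k * ∫ q, l q ∂Q) ^ 2 * ff (z - p) ∂(iterConv Q k) ≤ C := by
  have := hQ.prob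
  have hpr := fun n => iterConv_prob (Q := Q) n
  obtain ⟨C, hC, hb⟩ := ek_bound1 hQ
  set m := ∫ q, l q ∂Q with hm
  set σ := ∫ p, (l p - m) ^ 2 ∂Q with hσ
  have hσ0 : 0 ≤ σ := integral_nonneg fun p => sq_nonneg _
  refine ⟨10000 * σ + 20 * σ * C, by positivity, fun k z => ?_⟩
  rcases Nat.lt_or_ge k 2 with hk | hk
  · obtain ⟨i1, i2, i3⟩ := moments l hl hadd hL k
    have : ∫ p, (l p - k * m) ^ 2 * ff (z - p) ∂(iterConv Q k) ≤
        ∫ p, (l p - k * m) ^ 2 * 10000 ∂(iterConv Q k) := by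
      refine integral_mono ?_ (i1.integrable_sq.mul_const _) fun p => ?_
      · refine i1.integrable_sq.mul_bdd (c := 10000) ?_ (ae_of_all _ fun p => ?_)
        · exact (continuous_ff.comp (by fun_prop)).aestronglyMeasurable
        · rw [Real.norm_eq_abs, abs_of_nonneg (ff_pos _).le]; exact ff_le _
      · exact mul_le_mul_of_nonneg_left (ff_le _) (sq_nonneg _)
    rw [integral_mul_const, i3] at this
    have hk1 : (k : ℝ) ≤ 1 := by exact_mod_cast Nat.lt_succ_iff.1 hk
    nlinarith [mul_nonneg hσ0 hC, mul_le_mul_of_nonneg_right hk1 hσ0]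
  · obtain ⟨a, b, hab, ha, hba, hab2⟩ : ∃ a b : ℕ, k = a + b ∧ 1 ≤ a ∧ b ≤ 2 * a ∧ a ≤ b :=
      ⟨k / 2, k - k / 2, by omega, by omega, by omega, by omega⟩
    obtain ⟨i1, -, i3⟩ := moments l hl hadd hL a
    obtain ⟨j1, -, j3⟩ := moments l hl hadd hL b
    have ha' : (1:ℝ) ≤ a := by exact_mod_cast ha
    have hab' : (a:ℝ) ≤ b := by exact_mod_cast hab2
    have hba' : (b:ℝ) ≤ 2 * a := by exact_mod_cast hba
    have hA := split_half (P := iterConv Q a) (ρ := iterConv Q b) _ i1 z (C / b) (fun w => by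
      have := hb b w
      rw [le_div_iff₀ (by linarith), mul_comm]; exact this)
    have hB := split_half (P := iterConv Q b) (ρ := iterConv Q a) _ j1 z (C / a) (fun w => by
      have := hb a w
      rw [le_div_iff₀ (by linarith), mul_comm]; exact this)
    rw [i3] at hA
    rw [j3] at hB
    rw [hab, iterConv_add]
    unfold mconv
    rw [integral_map (by fun_prop) (by
      have := continuous_ff
      exact Continuous.aestronglyMeasurable (by fun_prop))]
    have hB1 : Integrable (fun x : (ℝ × ℝ) × (ℝ × ℝ) => (l x.2 - b * m) ^ 2 *
        ff (z - (x.1 + x.2))) ((iterConv Q a).prod (iterConv Q b)) := by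
      have := hB.1.swap
      refine this.congr (ae_of_all _ fun x => ?_)
      simp [Function.comp, add_comm x.1 x.2, hm]
    have hB2 : ∫ x : (ℝ × ℝ) × (ℝ × ℝ), (l x.2 - b * m) ^ 2 *
        ff (z - (x.1 + x.2)) ∂((iterConv Q a).prod (iterConv Q b)) ≤ b * σ * (C / a) := by
      have h2 := hB.2
      rw [← integral_prod_swap] at h2
      refine le_trans (le_of_eq ?_) h2
      congr 1
      ext x
      simp [add_comm x.1 x.2, hm]
    have hsum := integral_mono (μ := (iterConv Q a).prod (iterConv Q b))
      (f := fun x : (ℝ × ℝ) × (ℝ × ℝ) => (l (x.1 + x.2) - ((a + b : ℕ) : ℝ) * m) ^ 2 *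
        ff (z - (x.1 + x.2)))
      (g := fun x => 2 * ((l x.1 - a * m) ^ 2 * ff (z - (x.1 + x.2))) +
        2 * ((l x.2 - b * m) ^ 2 * ff (z - (x.1 + x.2)))) ?_ ((hA.1.const_mul 2).add (hB1.const_mul 2)) ?_
    · refine hsum.trans ?_
      rw [integral_add (hA.1.const_mul 2) (hB1.const_mul 2), integral_const_mul, integral_const_mul]
      have e1 : (a : ℝ) * σ * (C / b) ≤ σ * C := by
        rw [mul_div_assoc', div_le_iff₀ (by linarith)]
        nlinarith [mul_nonneg hσ0 hC]
      have e2 : (b : ℝ) * σ * (C / a) ≤ 2 * (σ * C) := by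
        rw [mul_div_assoc', div_le_iff₀ (by linarith)]
        nlinarith [mul_nonneg hσ0 hC]
      have := hA.2
      nlinarith [mul_nonneg hσ0 hC]
    · refine (((hA.1.const_mul 2).add (hB1.const_mul 2))).mono' ?_ (ae_of_all _ fun x => ?_)
      · have := continuous_ff
        exact Continuous.aestronglyMeasurable (by fun_prop)
      · rw [Real.norm_eq_abs, abs_of_nonneg (mul_nonneg (sq_nonneg _) (ff_pos _).le)]
        simp only [Pi.add_apply, hadd]
        push_cast
        have := (ff_pos (z - (x.1 + x.2))).le
        rw [← mul_assoc, ← mul_assoc, ← add_mul]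
        refine mul_le_mul_of_nonneg_right ?_ this
        nlinarith [sq_nonneg ((l x.1 - a * m) - (l x.2 - b * m))]
    · intro x
      simp only [hadd]
      push_cast
      have := (ff_pos (z - (x.1 + x.2))).le
      rw [← mul_assoc, ← mul_assoc, ← add_mul]
      refine mul_le_mul_of_nonneg_right ?_ this
      nlinarith [sq_nonneg ((l x.1 - a * m) - (l x.2 - b * m))]

lemma ek_bound2' {Q : Measure (ℝ × ℝ)} (hQ : Good Q) (l : ℝ × ℝ → ℝ) (hl : Continuous l)
    (hadd : ∀ p q, l (p - q) = l p - l q) (hL : MemLp l 2 Q)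
    (hff : ∀ z, l z ^ 2 * ff z ≤ 10000) : ∃ C : ℝ, 0 ≤ C ∧ ∀ (k : ℕ) (z : ℝ × ℝ),
    (l z - k * ∫ q, l q ∂Q) ^ 2 * ek Q k z ≤ C := by
  have := hQ.prob
  have hpr := fun n => iterConv_prob (Q := Q) n
  have hadd' : ∀ p q, l (p + q) = l p + l q := by
    intro p q
    have := hadd (p + q) q
    simp at this; linarith
  obtain ⟨C, hC, h⟩ := ek_aux hQ l hl hadd' hL
  refine ⟨20000 + 2 * C, by positivity, fun k z => ?_⟩
  set m := ∫ q, l q ∂Q with hm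
  obtain ⟨i1, -, -⟩ := moments l hl hadd' hL k
  have hintg : Integrable (fun p => (l p - k * m) ^ 2 * ff (z - p)) (iterConv Q k) := by
    refine i1.integrable_sq.mul_bdd (c := 10000) ?_ (ae_of_all _ fun p => ?_)
    · exact (continuous_ff.comp (by fun_prop)).aestronglyMeasurable
    · rw [Real.norm_eq_abs, abs_of_nonneg (ff_pos _).le]; exact ff_le _
  unfold ek
  rw [← integral_const_mul]
  have h2 : ∫ p, (l z - k * m) ^ 2 * ff (z - p) ∂(iterConv Q k) ≤
      ∫ p, (20000 + 2 * ((l p - k * m) ^ 2 * ff (z - p))) ∂(iterConv Q k) := by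
    refine integral_mono ((integrable_ffk z).const_mul _)
      ((integrable_const _).add (hintg.const_mul 2)) fun p => ?_
    simp only
    have h3 := hff (z - p)
    rw [hadd] at h3
    have h4 := (ff_pos (z - p)).le
    have h5 : (l z - k * m) ^ 2 ≤ 2 * (l z - l p) ^ 2 + 2 * (l p - k * m) ^ 2 := by
      nlinarith [sq_nonneg ((l z - l p) - (l p - k * m))]
    nlinarith [mul_le_mul_of_nonneg_right h5 h4]
  refine h2.trans ?_
  rw [integral_add (integrable_const _) (hintg.const_mul 2), integral_const_mul]
  have := h k z
  simp
  linarith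

/-- main domination bound -/
lemma ek_bound2 {Q : Measure (ℝ × ℝ)} (hQ : Good Q) : ∃ C : ℝ, 0 ≤ C ∧ ∀ (k : ℕ) (z : ℝ × ℝ),
    ‖z - (k : ℝ) • mv Q‖ ^ 2 * ek Q k z ≤ C := by
  obtain ⟨C1, h1, H1⟩ := ek_bound2' hQ (fun p => p.1) (by fun_prop) (by simp) hQ.memLp1 ff_sq1
  obtain ⟨C2, h2, H2⟩ := ek_bound2' hQ (fun p => p.2) (by fun_prop) (by simp) hQ.memLp2 ff_sq2
  refine ⟨max C1 C2, h1.trans (le_max_left _ _), fun k z => ?_⟩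
  rw [Prod.norm_def]
  rcases max_choice ‖(z - (k : ℝ) • mv Q).1‖ ‖(z - (k : ℝ) • mv Q).2‖ with h | h <;> rw [h]
  · refine le_trans ?_ ((H1 k z).trans (le_max_left _ _))
    simp [mv]
  · refine le_trans ?_ ((H2 k z).trans (le_max_right _ _))
    simp [mv]

end Hog

namespace Hog
open scoped Topology

lemma map_floor : Measure.map (fun s : ℝ => ⌊s⌋₊) (volume.restrict (Ici 0)) = Measure.count := by
  refine Measure.ext_of_singleton fun n => ?_
  rw [Measure.map_apply Nat.measurable_floor (measurableSet_singleton n),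
    Measure.restrict_apply (Nat.measurable_floor (measurableSet_singleton n)),
    Measure.count_singleton]
  have : (fun s : ℝ => ⌊s⌋₊) ⁻¹' {n} ∩ Ici 0 = Ico (n:ℝ) (n+1) := by
    ext s
    simp only [mem_inter_iff, mem_preimage, mem_singleton_iff, mem_Ici, mem_Ico]
    constructor
    · rintro ⟨h, hs⟩
      exact (Nat.floor_eq_iff hs).1 h
    · intro h
      have hs : 0 ≤ s := le_trans (Nat.cast_nonneg _) h.1
      exact ⟨(Nat.floor_eq_iff hs).2 h, hs⟩
  rw [this]; simp

lemma sum_floor (a : ℕ → ℂ) (ha : Summable a) : ∫ s in Ici (0:ℝ), a ⌊s⌋₊ = ∑' k, a k := by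
  have h := integral_map (μ := volume.restrict (Ici (0:ℝ))) (φ := fun s : ℝ => ⌊s⌋₊)
    Nat.measurable_floor.aemeasurable (f := a) (by exact (measurable_of_countable a).aestronglyMeasurable)
  rw [← h, map_floor, integral_countable (integrable_count_iff.2 ha.norm)]
  simp

lemma sum_floor' (a : ℕ → ℂ) (ha : Summable a) (N : ℝ) (hN : 0 < N) :
    (√N : ℂ) * ∑' k, a k =
      ∫ u : ℝ, (Ici (0:ℝ)).indicator (fun s => (N : ℂ) * a ⌊s⌋₊) (u * √N + N) := by
  have hs : 0 < √N := Real.sqrt_pos.2 hN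
  have h1 := Measure.integral_comp_mul_right (fun s : ℝ =>
    (Ici (0:ℝ)).indicator (fun s => (N : ℂ) * a ⌊s⌋₊) (s + N)) (√N)
  rw [h1, integral_add_right_eq_self (fun s => (Ici (0:ℝ)).indicator (fun s => (N : ℂ) * a ⌊s⌋₊) s),
    integral_indicator measurableSet_Ici, integral_const_mul, sum_floor a ha,
    abs_of_pos (by positivity), Complex.real_smul, ← mul_assoc]
  congr 1
  rw [← Complex.ofReal_mul]
  congr 1
  field_simp
  rw [Real.sq_sqrt hN.le]

lemma mv_pos {Q : Measure (ℝ × ℝ)} (hQ : Good Q) : 0 < ‖mv Q‖ := by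
  rw [norm_pos_iff]
  intro h
  have := congrArg Prod.fst h
  simp [mv] at this
  linarith [hQ.posS]

lemma ek_summable {Q : Measure (ℝ × ℝ)} (hQ : Good Q) (z : ℝ × ℝ) :
    Summable (fun k => ek Q k z) := by
  obtain ⟨C, hC, h⟩ := ek_bound2 hQ
  have hm := mv_pos hQ
  have hs : Summable (fun k : ℕ => (4 * C / ‖mv Q‖ ^ 2) * (1 / (k:ℝ) ^ 2)) :=
    (Real.summable_one_div_nat_pow.2 (by norm_num)).mul_left _
  refine Summable.of_norm_bounded_eventually_nat hs ?_
  have hlim : ∀ᶠ k : ℕ in atTop, 2 * ‖z‖ / ‖mv Q‖ ≤ k :=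
    (tendsto_natCast_atTop_atTop).eventually_ge_atTop _
  filter_upwards [hlim, eventually_gt_atTop 0] with k hk hk0
  have hk0' : (0:ℝ) < k := by exact_mod_cast hk0
  rw [Real.norm_eq_abs, abs_of_nonneg (ek_nonneg _ _)]
  rw [div_le_iff₀ hm] at hk
  have h2 : k * ‖mv Q‖ / 2 ≤ ‖z - (k:ℝ) • mv Q‖ := by
    have h3 := norm_sub_norm_le ((k:ℝ) • mv Q) z
    rw [norm_smul, Real.norm_eq_abs, abs_of_pos hk0', norm_sub_rev] at h3
    linarith
  have h4 := h k z
  have h5 : (k * ‖mv Q‖ / 2) ^ 2 * ek Q k z ≤ C :=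
    (mul_le_mul_of_nonneg_right (pow_le_pow_left₀ (by positivity) h2 2) (ek_nonneg _ _)).trans h4
  rw [div_mul_div_comm, mul_one, le_div_iff₀ (by positivity)]
  nlinarith

lemma ek_dom {Q : Measure (ℝ × ℝ)} (hQ : Good Q) : ∃ D N₀ : ℝ, 0 ≤ D ∧ 1 ≤ N₀ ∧ ∀ N, N₀ ≤ N →
    ∀ z : ℝ × ℝ, ‖z - N • mv Q‖ ≤ √N → ∀ u : ℝ, 0 ≤ u * √N + N →
      N * ek Q ⌊u * √N + N⌋₊ z ≤ D * (1 + u ^ 2)⁻¹ := by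
  obtain ⟨C1, hC1, h1⟩ := ek_bound1 hQ
  obtain ⟨C2, hC2, h2⟩ := ek_bound2 hQ
  have hm := mv_pos hQ
  set M := ‖mv Q‖ with hM
  obtain ⟨K, hK⟩ : ∃ K, K = 2 * (1 + M) / M := ⟨_, rfl⟩
  have hKM : K * M = 2 * (1 + M) := by rw [hK]; field_simp
  have hK2 : 2 ≤ K := by
    rw [hK, le_div_iff₀ hm]; linarith
  refine ⟨2 * C1 * (1 + K ^ 2) + 8 * C2 / M ^ 2, 16 * K ^ 2, by positivity, by nlinarith, ?_⟩
  intro N hN z hz u hu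
  have hN1 : 1 ≤ N := by nlinarith
  have hN0 : 0 < N := by linarith
  have hs0 : 1 ≤ √N := by rw [Real.one_le_sqrt]; exact hN1
  have hs2 : √N ^ 2 = N := Real.sq_sqrt hN0.le
  have hsK : 4 * K ≤ √N := by
    apply Real.le_sqrt_of_sq_le; nlinarith
  have f1 := Nat.floor_le hu
  have f2 := Nat.lt_floor_add_one (u * √N + N)
  set k := ⌊u * √N + N⌋₊ with hk
  have he := ek_nonneg (Q := Q) k z
  rcases lt_or_ge |u| K with hu1 | hu1
  · have hu2 : -K < u := (abs_lt.1 hu1).1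
    have hkN : N / 2 ≤ k := by
      have : -K * √N ≤ u * √N := mul_le_mul_of_nonneg_right hu2.le (by linarith)
      nlinarith
    have h3 : N * ek Q k z ≤ 2 * C1 := by
      have := h1 k z
      nlinarith [mul_le_mul_of_nonneg_right hkN he]
    rw [← div_eq_mul_inv, le_div_iff₀ (by positivity)]
    have hu3 : u ^ 2 ≤ K ^ 2 := by
      rw [← sq_abs]; exact pow_le_pow_left₀ (abs_nonneg _) hu1.le 2
    have h4 : 0 ≤ 8 * C2 / M ^ 2 := by positivity
    have h5 : 0 ≤ N * ek Q k z := by positivity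
    nlinarith [mul_le_mul h3 (add_le_add_right hu3 1) (by positivity) (by positivity)]
  · have hdist : |u| * √N * M / 2 ≤ ‖z - (k:ℝ) • mv Q‖ := by
      have e : z - (k:ℝ) • mv Q = (z - N • mv Q) - ((u * √N) + (k - (u * √N + N))) • mv Q := by
        module
      have h3 : ‖(u * √N) • mv Q‖ ≤ ‖z - (k:ℝ) • mv Q‖ + ‖z - N • mv Q‖ +
          ‖((u * √N + N) - k) • mv Q‖ := by
        have : (u * √N) • mv Q = -(z - (k:ℝ) • mv Q) + (z - N • mv Q) +
          ((u * √N + N) - k) • mv Q := by module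
        rw [this]
        refine (norm_add_le _ _).trans (add_le_add_left ((norm_add_le _ _).trans ?_) _)
        rw [norm_neg]
      rw [norm_smul, norm_smul, Real.norm_eq_abs, Real.norm_eq_abs, abs_mul,
        abs_of_nonneg (Real.sqrt_nonneg N), abs_of_nonneg (a := u * √N + N - k) (by linarith),
        ← hM] at h3
      have h4 : (u * √N + N - k) * M ≤ √N * M := mul_le_mul_of_nonneg_right (by linarith) hm.le
      have h5 : K * M * √N ≤ |u| * M * √N := by gcongr
      rw [hKM] at h5
      nlinarith
    have h3 := h2 k z
    have h5 : (|u| * √N * M / 2) ^ 2 * ek Q k z ≤ C2 :=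
      (mul_le_mul_of_nonneg_right (pow_le_pow_left₀ (by positivity) hdist 2) he).trans h3
    have h6 : (|u| * √N * M / 2) ^ 2 = u ^ 2 * N * M ^ 2 / 4 := by
      rw [div_pow, mul_pow, mul_pow, hs2, sq_abs]; norm_num
    rw [h6] at h5
    rw [← div_eq_mul_inv, le_div_iff₀ (by positivity)]
    have hu3 : 1 ≤ u ^ 2 := by
      rw [← sq_abs]; nlinarith
    have h7 : N * ek Q k z * (1 + u ^ 2) ≤ 8 * C2 / M ^ 2 := by
      rw [le_div_iff₀ (by positivity)]
      have h8 : 0 ≤ N * ek Q k z * M ^ 2 := by positivity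
      nlinarith [mul_le_mul_of_nonneg_left hu3 h8]
    have : 0 ≤ 2 * C1 * (1 + K ^ 2) := by positivity
    linarith

lemma floor_lims (N : ℕ → ℝ) (hN : Tendsto N atTop atTop) (u : ℝ) :
    Tendsto (fun j => ⌊u * √(N j) + N j⌋₊) atTop atTop ∧
    Tendsto (fun j => (⌊u * √(N j) + N j⌋₊ : ℝ) / N j) atTop (𝓝 1) ∧
    Tendsto (fun j => ((⌊u * √(N j) + N j⌋₊ : ℝ) - N j) / √(N j)) atTop (𝓝 u) ∧
    ∀ᶠ j in atTop, 0 ≤ u * √(N j) + N j := by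
  have hs : Tendsto (fun j => √(N j)) atTop atTop := Real.tendsto_sqrt_atTop.comp hN
  have hge : ∀ᶠ j in atTop, 0 < N j ∧ 0 ≤ u * √(N j) + N j := by
    filter_upwards [hs.eventually_ge_atTop (-u), hN.eventually_gt_atTop 0] with j h1 h2
    refine ⟨h2, ?_⟩
    nlinarith [Real.sq_sqrt h2.le, Real.sqrt_nonneg (N j)]
  have h3 : Tendsto (fun j => ((⌊u * √(N j) + N j⌋₊ : ℝ) - N j) / √(N j)) atTop (𝓝 u) := by
    have l1 : Tendsto (fun j => u - (√(N j))⁻¹) atTop (𝓝 u) := by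
      simpa using tendsto_const_nhds.sub hs.inv_tendsto_atTop
    refine tendsto_of_tendsto_of_tendsto_of_le_of_le' l1 tendsto_const_nhds ?_ ?_
    · filter_upwards [hge] with j hj
      have hp := Real.sqrt_pos.2 hj.1
      have := Nat.lt_floor_add_one (u * √(N j) + N j)
      rw [le_div_iff₀ hp, sub_mul, inv_mul_cancel₀ hp.ne']
      linarith
    · filter_upwards [hge] with j hj
      have hp := Real.sqrt_pos.2 hj.1
      have := Nat.floor_le hj.2
      rw [div_le_iff₀ hp]
      linarith
  have h2 : Tendsto (fun j => (⌊u * √(N j) + N j⌋₊ : ℝ) / N j) atTop (𝓝 1) := by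
    have := (h3.mul hs.inv_tendsto_atTop).const_add 1
    simp only [mul_zero, add_zero] at this
    refine this.congr' ?_
    filter_upwards [hge] with j hj
    have hp := Real.sqrt_pos.2 hj.1
    simp only [Pi.inv_apply]
    rw [← div_eq_mul_inv, div_div, Real.mul_self_sqrt hj.1.le]
    have := hj.1.ne'
    field_simp
    ring
  refine ⟨?_, h2, h3, hge.mono fun _ h => h.2⟩
  have := (h2.pos_mul_atTop one_pos hN)
  rw [← tendsto_natCast_atTop_iff (R := ℝ)]
  refine this.congr' ?_
  filter_upwards [hge] with j hj
  rw [div_mul_cancel₀ _ hj.1.ne']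

end Hog

namespace Hog
open scoped Topology

noncomputable def JJ (Q : Measure (ℝ × ℝ)) : ℂ :=
  ∫ u : ℝ, ∫ t, Complex.exp (-(qf Q t : ℂ) / 2 + dt t (-u • mv Q) * Complex.I)

lemma ak_summable {Q : Measure (ℝ × ℝ)} (hQ : Good Q) (θ z : ℝ × ℝ) :
    Summable (fun k => ak Q (fun t => KK (t - θ)) k z) := by
  have := hQ.prob
  exact Summable.of_norm_bounded (ek_summable hQ z) fun k => ak_le_ek θ k z

lemma sum_limit {Q : Measure (ℝ × ℝ)} (hQ : Good Q) (θ : ℝ × ℝ) (N : ℕ → ℝ) (z : ℕ → ℝ × ℝ)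
    (hN : Tendsto N atTop atTop)
    (hz : Tendsto (fun j => (√(N j))⁻¹ • (z j - N j • mv Q)) atTop (𝓝 0)) :
    Tendsto (fun j => (√(N j) : ℂ) * ∑' k, ak Q (fun t => KK (t - θ)) k (z j)) atTop
      (𝓝 (KK (-θ) * JJ Q)) := by
  have := hQ.prob
  obtain ⟨D, N₀, hD, hN₀, hdom⟩ := ek_dom hQ
  have hev : ∀ᶠ j in atTop, N₀ ≤ N j ∧ ‖z j - N j • mv Q‖ ≤ √(N j) := by
    have h1 := (tendsto_zero_iff_norm_tendsto_zero.1 hz).eventually_le_const (u := 1) one_pos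
    filter_upwards [h1, hN.eventually_ge_atTop N₀] with j h1 h2
    refine ⟨h2, ?_⟩
    have hp : 0 < √(N j) := Real.sqrt_pos.2 (by linarith)
    rw [norm_smul, norm_inv, Real.norm_eq_abs, abs_of_pos hp, inv_mul_le_iff₀ hp] at h1
    linarith
  have hmain : Tendsto (fun j => ∫ u : ℝ, (Ici (0:ℝ)).indicator
      (fun s => (N j : ℂ) * ak Q (fun t => KK (t - θ)) ⌊s⌋₊ (z j)) (u * √(N j) + N j)) atTop
      (𝓝 (∫ u : ℝ, KK (-θ) *
        ∫ t, Complex.exp (-(qf Q t : ℂ) / 2 + dt t (-u • mv Q) * Complex.I))) := by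
    refine tendsto_integral_filter_of_dominated_convergence (fun u => D * (1 + u ^ 2)⁻¹) ?_ ?_
      (integrable_inv_one_add_sq.const_mul D) (ae_of_all _ fun u => ?_)
    · refine Eventually.of_forall fun j => Measurable.aestronglyMeasurable ?_
      refine Measurable.comp (g := (Ici (0:ℝ)).indicator
        (fun s => (N j : ℂ) * ak Q (fun t => KK (t - θ)) ⌊s⌋₊ (z j))) ?_ (by fun_prop)
      refine Measurable.indicator ?_ measurableSet_Ici
      exact ((measurable_of_countable (fun k : ℕ => (N j : ℂ) *
        ak Q (fun t => KK (t - θ)) k (z j))).comp Nat.measurable_floor)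
    · filter_upwards [hev] with j hj
      refine ae_of_all _ fun u => ?_
      by_cases hu : 0 ≤ u * √(N j) + N j
      · rw [indicator_of_mem (by exact hu), norm_mul, Complex.norm_real, Real.norm_eq_abs,
          abs_of_nonneg (by linarith)]
        exact (mul_le_mul_of_nonneg_left (ak_le_ek θ _ _) (by linarith)).trans
          (hdom _ hj.1 _ hj.2 u hu)
      · rw [indicator_of_notMem (by exact hu), norm_zero]; positivity
    · obtain ⟨f1, f2, f3, f4⟩ := floor_lims N hN u
      have hw : Tendsto (fun j => (√(⌊u * √(N j) + N j⌋₊ : ℝ))⁻¹ •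
          (z j - (⌊u * √(N j) + N j⌋₊ : ℝ) • mv Q)) atTop (𝓝 (-u • mv Q)) := by
        have g1 : Tendsto (fun j => (√((⌊u * √(N j) + N j⌋₊ : ℝ) / N j))⁻¹) atTop (𝓝 1) := by
          have := (Real.continuous_sqrt.tendsto 1).comp f2
          simpa using this.inv₀ (by simp)
        have g2 := g1.smul (hz.sub (f3.smul_const (mv Q)))
        simp only [one_smul, zero_sub] at g2
        rw [neg_smul]
        refine g2.congr' ?_
        filter_upwards [hN.eventually_gt_atTop 0] with j hj
        have hp := Real.sqrt_pos.2 hj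
        rw [Real.sqrt_div (by positivity), inv_div, div_eq_mul_inv, mul_comm, mul_smul]
        congr 1
        rw [smul_sub, smul_smul, smul_smul, mul_inv_cancel₀ hp.ne', mul_div_cancel₀ _ hp.ne']
        module
      have hl := ak_limit hQ (g := fun t => KK (t - θ)) (continuous_KK.comp (by fun_prop))
        (hasCompactSupport_KK.comp_homeomorph (Homeomorph.subRight θ)) _ z _ f1 hw
      simp only [zero_sub] at hl
      have f2' : Tendsto (fun j => (((⌊u * √(N j) + N j⌋₊ : ℝ) / N j : ℝ) : ℂ)⁻¹) atTop (𝓝 1) := by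
        have := ((Complex.continuous_ofReal.tendsto 1).comp f2).inv₀ (by simp)
        simpa using this
      have hl2 := f2'.mul hl
      rw [one_mul] at hl2
      refine hl2.congr' ?_
      filter_upwards [f4, hN.eventually_gt_atTop 0, f1.eventually_gt_atTop 0] with j h4 h5 h6
      rw [indicator_of_mem (by exact h4)]
      have h7 : ((⌊u * √(N j) + N j⌋₊ : ℕ) : ℂ) ≠ 0 := by exact_mod_cast h6.ne'
      have h8 : (N j : ℂ) ≠ 0 := by exact_mod_cast h5.ne'
      push_cast
      field_simp
  rw [integral_const_mul] at hmain
  refine hmain.congr' ?_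
  filter_upwards [hN.eventually_gt_atTop 0] with j hj
  rw [sum_floor' (fun k => ak Q (fun t => KK (t - θ)) k (z j)) (ak_summable hQ θ (z j)) _ hj]

end Hog

namespace Hog
open scoped Topology

lemma qf_expand {Q : Measure (ℝ × ℝ)} (hQ : Good Q) : ∃ A B D : ℝ, ∀ t : ℝ × ℝ,
    qf Q t = A * t.1 ^ 2 + 2 * B * (t.1 * t.2) + D * t.2 ^ 2 := by
  have := hQ.prob
  have l1 := hQ.memLp1.sub (memLp_const (mv Q).1)
  have l2 := hQ.memLp2.sub (memLp_const (mv Q).2)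
  have i1 := l1.integrable_sq
  have i2 := l2.integrable_sq
  have i3 := l1.integrable_mul l2
  refine ⟨∫ p, (p.1 - (mv Q).1) ^ 2 ∂Q, ∫ p, (p.1 - (mv Q).1) * (p.2 - (mv Q).2) ∂Q,
    ∫ p, (p.2 - (mv Q).2) ^ 2 ∂Q, fun t => ?_⟩
  unfold qf
  have e : (fun p => (dt t p - dt t (mv Q)) ^ 2) = fun p => (t.1 ^ 2 * (p.1 - (mv Q).1) ^ 2 +
    (2 * (t.1 * t.2)) * ((p.1 - (mv Q).1) * (p.2 - (mv Q).2))) + t.2 ^ 2 * (p.2 - (mv Q).2) ^ 2 := by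
    ext p; unfold dt; ring
  have j1 := i1.const_mul (t.1 ^ 2)
  have j3 := i3.const_mul (2 * (t.1 * t.2))
  have j2 := i2.const_mul (t.2 ^ 2)
  simp only [Pi.mul_apply, Pi.sub_apply] at j1 j2 j3
  have j13 : Integrable (fun p : ℝ × ℝ => t.1 ^ 2 * (p.1 - (mv Q).1) ^ 2 +
    (2 * (t.1 * t.2)) * ((p.1 - (mv Q).1) * (p.2 - (mv Q).2))) Q := j1.add j3
  rw [e, integral_add j13 j2, integral_add j1 j3, integral_const_mul, integral_const_mul,
    integral_const_mul]
  ring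

lemma gauss1 (a : ℝ) (ha : 0 < a) (c d : ℂ) :
    ∫ x : ℝ, Complex.exp (-(a : ℂ) / 2 * x ^ 2 + c * x + d) =
      (√(2 * Real.pi / a) : ℂ) * Complex.exp (d + c ^ 2 / (2 * a)) := by
  have hb : (-(a : ℂ) / 2).re < 0 := by
    have : (-(a : ℂ) / 2) = ((-a / 2 : ℝ) : ℂ) := by push_cast; ring
    rw [this, Complex.ofReal_re]; linarith
  rw [integral_cexp_quadratic hb]
  have ha' : (a : ℂ) ≠ 0 := by exact_mod_cast ha.ne'
  congr 1
  · have : (Real.pi : ℂ) / -(-(a : ℂ) / 2) = ((2 * Real.pi / a : ℝ) : ℂ) := by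
      push_cast; field_simp
    rw [this, Real.sqrt_eq_rpow, Complex.ofReal_cpow (by positivity)]
    norm_num
  · congr 1
    field_simp
    ring

lemma gauss2 (A B D : ℝ) (hA : 0 < A) (hdet : 0 < A * D - B ^ 2) (m : ℝ × ℝ) (u : ℝ) :
    ∫ t : ℝ × ℝ, Complex.exp (-((A * t.1 ^ 2 + 2 * B * (t.1 * t.2) + D * t.2 ^ 2 : ℝ) : ℂ) / 2 +
      dt t (-u • m) * Complex.I) =
      (√(2 * Real.pi / A) : ℂ) * ((√(2 * Real.pi / (D - B ^ 2 / A)) : ℂ) * Complex.exp (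
        -((m.1 ^ 2 / A + (B * m.1 / A - m.2) ^ 2 / (D - B ^ 2 / A) : ℝ) : ℂ) / 2 * (u : ℂ) ^ 2)) := by
  have hE : 0 < D - B ^ 2 / A := by
    rw [sub_pos, div_lt_iff₀ hA]; linarith
  have hD : 0 < D := by
    have : 0 ≤ B ^ 2 / A := by positivity
    linarith
  have hintg : Integrable (fun t : ℝ × ℝ => Complex.exp (-((A * t.1 ^ 2 + 2 * B * (t.1 * t.2) +
      D * t.2 ^ 2 : ℝ) : ℂ) / 2 + dt t (-u • m) * Complex.I)) := by
    refine (integrable_gauss2 ((A * D - B ^ 2) / (2 * (A + D))) (by positivity)).mono'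
      (Continuous.aestronglyMeasurable (by fun_prop)) (ae_of_all _ fun t => ?_)
    rw [Complex.norm_exp, ← Real.exp_add]
    apply Real.exp_le_exp.2
    have : (-((A * t.1 ^ 2 + 2 * B * (t.1 * t.2) +
      D * t.2 ^ 2 : ℝ) : ℂ) / 2 + dt t (-u • m) * Complex.I).re =
      -(A * t.1 ^ 2 + 2 * B * (t.1 * t.2) + D * t.2 ^ 2) / 2 := by
      rw [Complex.add_re, Complex.re_ofReal_mul, Complex.I_re, mul_zero, add_zero]
      rw [← Complex.ofReal_neg]
      have : ∀ x : ℝ, ((x : ℂ) / 2).re = x / 2 := by intro x; simp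
      rw [this]
    rw [this, ← sub_nonneg]
    have : -((A * D - B ^ 2) / (2 * (A + D))) * t.1 ^ 2 + -((A * D - B ^ 2) / (2 * (A + D))) * t.2 ^ 2
      - -(A * t.1 ^ 2 + 2 * B * (t.1 * t.2) + D * t.2 ^ 2) / 2 =
      ((A * t.1 + B * t.2) ^ 2 + (B * t.1 + D * t.2) ^ 2) / (2 * (A + D)) := by
      have : A + D ≠ 0 := by positivity
      field_simp
      ring
    rw [this]
    positivity
  rw [Measure.volume_eq_prod] at hintg ⊢
  rw [integral_prod_symm _ hintg]
  have hA' : (A : ℂ) ≠ 0 := by exact_mod_cast hA.ne'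
  have hE' : ((D - B ^ 2 / A : ℝ) : ℂ) ≠ 0 := by exact_mod_cast hE.ne'
  have h1 : ∀ y : ℝ, ∫ x : ℝ, Complex.exp (-((A * x ^ 2 + 2 * B * (x * y) + D * y ^ 2 : ℝ) : ℂ) / 2 +
      dt (x, y) (-u • m) * Complex.I) = (√(2 * Real.pi / A) : ℂ) *
      Complex.exp (-((D - B ^ 2 / A : ℝ) : ℂ) / 2 * y ^ 2 +
        (((B * m.1 / A - m.2 : ℝ) : ℂ) * u * Complex.I) * y + ((-(u ^ 2 * m.1 ^ 2 / (2 * A)) : ℝ) : ℂ)) := by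
    intro y
    refine Eq.trans ?_ ((gauss1 A hA (-B * y - u * m.1 * Complex.I)
      (-D / 2 * y ^ 2 - u * y * m.2 * Complex.I)).trans ?_)
    · congr 1
      ext x
      congr 1
      simp [dt]
      ring
    · congr 2
      push_cast
      field_simp
      ring_nf
      simp only [Complex.I_sq]
      ring
  simp_rw [h1]
  rw [integral_const_mul, gauss1 _ hE]
  congr 3
  have hE'' : (D : ℂ) - B ^ 2 / A ≠ 0 := by exact_mod_cast hE.ne'
  rw [mul_pow, Complex.I_sq]
  push_cast
  generalize (D : ℂ) - B ^ 2 / A = E at *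
  field_simp
  ring

lemma JJ_eq {Q : Measure (ℝ × ℝ)} (hQ : Good Q) :
    0 < qf Q (-(mv Q).2, (mv Q).1) ∧
    JJ Q = (((2 * Real.pi) ^ 2 / √(2 * Real.pi * qf Q (-(mv Q).2, (mv Q).1)) : ℝ) : ℂ) := by
  have hm1 : 0 < (mv Q).1 := hQ.posS
  have hW : 0 < qf Q (-(mv Q).2, (mv Q).1) := by
    apply hQ.qf_pos
    intro h
    have := congrArg Prod.snd h
    simp at this
    linarith
  refine ⟨hW, ?_⟩
  obtain ⟨A, B, D, hq⟩ := qf_expand hQ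
  have hA : 0 < A := by
    have := hQ.qf_pos (t := (1, 0)) (by simp)
    rw [hq] at this
    simpa using this
  have hdet : 0 < A * D - B ^ 2 := by
    have := hQ.qf_pos (t := (-B, A)) (by simp [hA.ne'])
    rw [hq] at this
    simp only at this
    have h2 : 0 < A * (A * D - B ^ 2) := by nlinarith
    exact (mul_pos_iff_of_pos_left hA).1 h2
  have hE : 0 < D - B ^ 2 / A := by
    rw [sub_pos, div_lt_iff₀ hA]; linarith
  unfold JJ
  simp_rw [hq, gauss2 A B D hA hdet (mv Q)]
  set m := mv Q
  rw [integral_const_mul, integral_const_mul]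
  obtain ⟨G, hG⟩ : ∃ G, G = m.1 ^ 2 / A + (B * m.1 / A - m.2) ^ 2 / (D - B ^ 2 / A) := ⟨_, rfl⟩
  have hGp : 0 < G := by
    rw [hG]; positivity
  have hAEG : A * (D - B ^ 2 / A) * G = A * (-m.2) ^ 2 + 2 * B * (-m.2 * m.1) + D * m.1 ^ 2 := by
    rw [hG]
    generalize hEE : D - B ^ 2 / A = E at *
    have : D = E + B ^ 2 / A := by rw [← hEE]; ring
    rw [this]
    field_simp
    ring
  rw [← hG, ← hAEG]
  have h := gauss1 G hGp 0 0
  simp only [zero_mul, add_zero, ne_eq, OfNat.ofNat_ne_zero, not_false_eq_true, zero_pow, zero_div,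
    Complex.exp_zero, mul_one] at h
  rw [h, ← Complex.ofReal_mul, ← Complex.ofReal_mul]
  congr 1
  rw [← Real.sqrt_mul (by positivity), ← Real.sqrt_mul (by positivity)]
  rw [_root_.eq_div_iff (by positivity), ← Real.sqrt_mul (by positivity)]
  rw [Real.sqrt_eq_iff_mul_self_eq (by positivity) (by positivity)]
  field_simp

end Hog

namespace Hog
open scoped Topology

lemma levy2 (μ : ℕ → ProbabilityMeasure (ℝ × ℝ)) (μ₀ : ProbabilityMeasure (ℝ × ℝ))
    (h : ∀ θ, Tendsto (fun j => cf (μ j : Measure (ℝ × ℝ)) θ) atTop (𝓝 (cf (μ₀ : Measure (ℝ × ℝ)) θ))) :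
    Tendsto μ atTop (𝓝 μ₀) := by
  have hc : Continuous (fun p : ℝ × ℝ => WithLp.toLp 2 p) := WithLp.prod_continuous_toLp 2 ℝ ℝ
  have hc' : Continuous (fun p : WithLp 2 (ℝ × ℝ) => WithLp.ofLp p) := WithLp.prod_continuous_ofLp 2 ℝ ℝ
  have key : ∀ (ρ : ProbabilityMeasure (ℝ × ℝ)) (t : WithLp 2 (ℝ × ℝ)),
      charFun ((ρ.map hc.measurable.aemeasurable : ProbabilityMeasure (WithLp 2 (ℝ × ℝ))) :
        Measure (WithLp 2 (ℝ × ℝ))) t = cf (ρ : Measure (ℝ × ℝ)) (WithLp.ofLp t) := by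
    intro ρ t
    rw [charFun_apply, ProbabilityMeasure.toMeasure_map,
      integral_map hc.measurable.aemeasurable (Continuous.aestronglyMeasurable (by fun_prop))]
    unfold cf dt
    congr 1
  have h1 : Tendsto (fun j => (μ j).map hc.measurable.aemeasurable) atTop
      (𝓝 (μ₀.map hc.measurable.aemeasurable)) := by
    refine ProbabilityMeasure.tendsto_of_tendsto_charFun fun t => ?_
    simp only [key]
    exact h _
  have h2 := ProbabilityMeasure.tendsto_map_of_tendsto_of_continuous _ _ h1 hc'
  have key2 : ∀ ρ : ProbabilityMeasure (ℝ × ℝ), (ρ.map hc.measurable.aemeasurable).map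
      hc'.measurable.aemeasurable = ρ := by
    intro ρ
    apply Subtype.ext
    change Measure.map _ (Measure.map _ _) = _
    rw [Measure.map_map hc'.measurable hc.measurable]
    exact Measure.map_id
  simpa only [key2] using h2

lemma weak_ae (μ : ℕ → ProbabilityMeasure (ℝ × ℝ)) (μ₀ : ProbabilityMeasure (ℝ × ℝ))
    (h : Tendsto μ atTop (𝓝 μ₀)) (G : ℝ × ℝ → ℝ) (hGm : Measurable G) (M : ℝ)
    (hG0 : ∀ p, 0 ≤ G p) (hGM : ∀ p, G p ≤ M)
    (hGc : ∀ᵐ p ∂(μ₀ : Measure (ℝ × ℝ)), ContinuousAt G p) :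
    Tendsto (fun j => ∫⁻ p, ENNReal.ofReal (G p) ∂(μ j : Measure (ℝ × ℝ))) atTop
      (𝓝 (∫⁻ p, ENNReal.ofReal (G p) ∂(μ₀ : Measure (ℝ × ℝ)))) := by
  have lc : ∀ ρ : ProbabilityMeasure (ℝ × ℝ), ∫⁻ p, ENNReal.ofReal (G p) ∂(ρ : Measure (ℝ × ℝ)) =
      ∫⁻ t in Ioi (0:ℝ), (ρ : Measure (ℝ × ℝ)) {p | t ≤ G p} := fun ρ =>
    lintegral_eq_lintegral_meas_le _ (ae_of_all _ hG0) hGm.aemeasurable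
  simp only [lc]
  refine tendsto_lintegral_of_dominated_convergence' ((Iic M).indicator fun _ => 1) ?_ ?_ ?_ ?_
  · intro j
    apply Antitone.measurable _ |>.aemeasurable
    intro s t hst
    exact measure_mono fun p hp => le_trans hst hp
  · intro j
    refine ae_of_all _ fun t => ?_
    by_cases ht : t ≤ M
    · rw [indicator_of_mem (by exact ht)]; exact prob_le_one
    · have : {p | t ≤ G p} = ∅ := by
        ext p; simp; linarith [hGM p]
      simp only [this]; simp
  · rw [lintegral_indicator measurableSet_Iic, Measure.restrict_restrict measurableSet_Iic,
      Iic_inter_Ioi]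
    simp
  · have hcount : Set.Countable {t : ℝ | 0 < (μ₀ : Measure (ℝ × ℝ)) {p | G p = t}} :=
      Measure.countable_meas_level_set_pos hGm
    have h0 : ∀ᵐ t : ℝ, t ∉ {t : ℝ | 0 < (μ₀ : Measure (ℝ × ℝ)) {p | G p = t}} :=
      measure_eq_zero_iff_ae_notMem.1 (hcount.measure_zero volume)
    filter_upwards [ae_restrict_of_ae h0] with t ht
    apply ProbabilityMeasure.tendsto_measure_of_null_frontier_of_tendsto' h
    simp only [mem_ofPred_eq, not_lt, nonpos_iff_eq_zero] at ht
    have hd : (μ₀ : Measure (ℝ × ℝ)) {p | ¬ ContinuousAt G p} = 0 := hGc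
    refine measure_mono_null ?_ (measure_union_null ht hd)
    intro p hp
    by_contra hc
    simp only [mem_union, mem_ofPred_eq, not_or, not_not] at hc
    obtain ⟨h1, h2⟩ := hc
    rcases lt_or_gt_of_ne h1 with h3 | h3
    · have : ∀ᶠ q in 𝓝 p, G q < t := h2.eventually_lt_const h3
      have h4 : p ∉ closure {p | t ≤ G p} := by
        rw [mem_closure_iff_frequently]
        intro hf
        obtain ⟨q, hq1, hq2⟩ := (hf.and_eventually this).exists
        simp at hq1; linarith
      exact h4 hp.1
    · have : ∀ᶠ q in 𝓝 p, t < G q := h2.eventually_const_lt h3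
      have h4 : p ∈ interior {p | t ≤ G p} := by
        rw [mem_interior_iff_mem_nhds]
        filter_upwards [this] with q hq using hq.le
      exact hp.2 h4

lemma fin_lim (ν : ℕ → FiniteMeasure (ℝ × ℝ)) (ν₀ : FiniteMeasure (ℝ × ℝ)) (h0 : ν₀ ≠ 0)
    (h : ∀ θ, Tendsto (fun j => cf (ν j : Measure (ℝ × ℝ)) θ) atTop (𝓝 (cf (ν₀ : Measure (ℝ × ℝ)) θ)))
    (G : ℝ × ℝ → ℝ) (hGm : Measurable G) (M : ℝ)
    (hG0 : ∀ p, 0 ≤ G p) (hGM : ∀ p, G p ≤ M)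
    (hGc : ∀ᵐ p ∂(ν₀ : Measure (ℝ × ℝ)), ContinuousAt G p) :
    Tendsto (fun j => ∫⁻ p, ENNReal.ofReal (G p) ∂(ν j : Measure (ℝ × ℝ))) atTop
      (𝓝 (∫⁻ p, ENNReal.ofReal (G p) ∂(ν₀ : Measure (ℝ × ℝ)))) := by
  have cf0 : ∀ ρ : FiniteMeasure (ℝ × ℝ), cf (ρ : Measure (ℝ × ℝ)) 0 = ((ρ.mass : ℝ) : ℂ) := by
    intro ρ
    have e : (fun p : ℝ × ℝ => Complex.exp (dt 0 p * Complex.I)) = fun _ => (1:ℂ) := by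
      ext p; simp [dt]
    unfold cf
    rw [e, integral_const]
    simp only [Complex.real_smul, mul_one]
    rfl
  have hmass : Tendsto (fun j => (ν j).mass) atTop (𝓝 ν₀.mass) := by
    have := h 0
    simp only [cf0] at this
    have := (Complex.continuous_re.tendsto _).comp this
    simp only [Complex.ofReal_re, Function.comp_def] at this
    exact_mod_cast this
  have hm0 : ν₀.mass ≠ 0 := (FiniteMeasure.mass_nonzero_iff ν₀).2 h0
  have hev : ∀ᶠ j in atTop, (ν j) ≠ 0 := by
    filter_upwards [hmass.eventually_ne hm0] with j hj
    exact (FiniteMeasure.mass_nonzero_iff _).1 hj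
  have cfn : ∀ ρ : FiniteMeasure (ℝ × ℝ), ρ ≠ 0 → ∀ θ, cf (ρ.normalize : Measure (ℝ × ℝ)) θ =
      ((ρ.mass : ℝ) : ℂ)⁻¹ * cf (ρ : Measure (ℝ × ℝ)) θ := by
    intro ρ hρ θ
    rw [FiniteMeasure.toMeasure_normalize_eq_of_nonzero ρ hρ]
    unfold cf
    rw [integral_smul_nnreal_measure]
    simp [NNReal.smul_def]
  have hw : Tendsto (fun j => (ν j).normalize) atTop (𝓝 ν₀.normalize) := by
    apply levy2
    intro θ
    rw [cfn _ h0]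
    have h1 : Tendsto (fun j => (((ν j).mass : ℝ) : ℂ)⁻¹) atTop (𝓝 ((ν₀.mass : ℝ) : ℂ)⁻¹) := by
      refine Tendsto.inv₀ ?_ (by exact_mod_cast hm0)
      simpa only [cf0] using h 0
    refine (h1.mul (h θ)).congr' ?_
    filter_upwards [hev] with j hj
    rw [cfn _ hj]
  have key : ∀ ρ : FiniteMeasure (ℝ × ℝ), ∫⁻ p, ENNReal.ofReal (G p) ∂(ρ : Measure (ℝ × ℝ)) =
      (ρ.mass : ℝ≥0∞) * ∫⁻ p, ENNReal.ofReal (G p) ∂(ρ.normalize : Measure (ℝ × ℝ)) := by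
    intro ρ
    conv_lhs => rw [FiniteMeasure.self_eq_mass_smul_normalize ρ]
    rw [FiniteMeasure.toMeasure_smul]
    rw [lintegral_smul_measure]
    rfl
  simp only [key]
  refine ENNReal.Tendsto.mul (ENNReal.tendsto_coe.2 hmass) (Or.inr ?_)
    (weak_ae _ _ hw G hGm M hG0 hGM ?_) (Or.inr (by simp))
  · refine (lintegral_mono fun p => ENNReal.ofReal_le_ofReal (hGM p)).trans_lt ?_ |>.ne
    simp
  · rw [FiniteMeasure.toMeasure_normalize_eq_of_nonzero ν₀ h0]
    exact (Measure.smul_absolutelyContinuous) hGc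

end Hog

namespace Hog
open scoped Topology

noncomputable def nuM (Q : Measure (ℝ × ℝ)) (N : ℝ) (z : ℝ × ℝ) : Measure (ℝ × ℝ) :=
  Measure.sum (fun k => ENNReal.ofReal √N • (((iterConv Q k).map (fun p => z - p)).withDensity
    (fun w => ENNReal.ofReal (ff w))))

lemma measurable_ff : Measurable ff := continuous_ff.measurable

lemma lintegral_nuM (Q : Measure (ℝ × ℝ)) (N : ℝ) (z : ℝ × ℝ) (h : ℝ × ℝ → ℝ≥0∞)
    (hh : Measurable h) : ∫⁻ w, h w ∂(nuM Q N z) =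
      ENNReal.ofReal √N * ∑' k, ∫⁻ p, ENNReal.ofReal (ff (z - p)) * h (z - p) ∂(iterConv Q k) := by
  have hm := measurable_ff
  unfold nuM
  rw [lintegral_sum_measure, ← ENNReal.tsum_mul_left]
  congr 1
  ext k
  rw [lintegral_smul_measure, lintegral_withDensity_eq_lintegral_mul _ (by fun_prop) hh,
    lintegral_map (by fun_prop) (by fun_prop)]
  rfl

lemma ofReal_ek {Q : Measure (ℝ × ℝ)} [IsProbabilityMeasure Q] (k : ℕ) (z : ℝ × ℝ) :
    ∫⁻ p, ENNReal.ofReal (ff (z - p)) ∂(iterConv Q k) = ENNReal.ofReal (ek Q k z) := by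
  have := iterConv_prob (Q := Q) k
  unfold ek
  rw [ofReal_integral_eq_lintegral_ofReal (integrable_ffk z) (ae_of_all _ fun p => (ff_pos _).le)]

lemma nuM_finite {Q : Measure (ℝ × ℝ)} (hQ : Good Q) (N : ℝ) (z : ℝ × ℝ) :
    IsFiniteMeasure (nuM Q N z) := by
  have := hQ.prob
  constructor
  rw [← lintegral_one, lintegral_nuM _ _ _ _ measurable_const]
  simp only [mul_one, ofReal_ek]
  rw [← ENNReal.ofReal_tsum_of_nonneg (fun k => ek_nonneg _ _) (ek_summable hQ z)]
  exact ENNReal.mul_lt_top ENNReal.ofReal_lt_top ENNReal.ofReal_lt_top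

lemma cf_nuM {Q : Measure (ℝ × ℝ)} (hQ : Good Q) (N : ℝ) (z θ : ℝ × ℝ) :
    cf (nuM Q N z) θ = (√N : ℂ) * ∑' k, ak Q (fun t => KK (t - θ)) k z := by
  have := hQ.prob
  have hfin := nuM_finite hQ N z
  have hm := measurable_ff
  have hi : Integrable (fun p => Complex.exp (dt θ p * Complex.I)) (nuM Q N z) := by
    refine Integrable.of_bound (C := 1) (Continuous.aestronglyMeasurable (by fun_prop))
      (ae_of_all _ fun p => ?_)
    rw [Complex.norm_exp_ofReal_mul_I]
  unfold cf
  unfold nuM at hi ⊢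
  rw [integral_sum_measure hi, ← tsum_mul_left]
  congr 1
  ext k
  rw [ak_KK, integral_smul_measure, integral_withDensity_eq_integral_toReal_smul (by fun_prop)
    (ae_of_all _ fun p => ENNReal.ofReal_lt_top), integral_map (by fun_prop)]
  · rw [ENNReal.toReal_ofReal (Real.sqrt_nonneg _), Complex.real_smul]
    congr 2
    ext p
    rw [ENNReal.toReal_ofReal (ff_pos _).le, Complex.real_smul]
  · have := continuous_ff
    refine Measurable.aestronglyMeasurable ?_
    fun_prop

theorem renewal {Q : Measure (ℝ × ℝ)} (hQ : Good Q) (N : ℕ → ℝ) (z : ℕ → ℝ × ℝ)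
    (hN : Tendsto N atTop atTop)
    (hz : Tendsto (fun j => (√(N j))⁻¹ • (z j - N j • mv Q)) atTop (𝓝 0))
    (g : ℝ × ℝ → ℝ) (hgm : Measurable g) (hg0 : ∀ p, 0 ≤ g p) (M : ℝ) (hgM : ∀ p, g p ≤ M * ff p)
    (hgc : ∀ᵐ p : ℝ × ℝ, ContinuousAt g p) :
    Tendsto (fun j => ENNReal.ofReal √(N j) *
      ∑' k, ∫⁻ p, ENNReal.ofReal (g (z j - p)) ∂(iterConv Q k)) atTop
      (𝓝 (ENNReal.ofReal (1 / √(2 * Real.pi * qf Q (-(mv Q).2, (mv Q).1))) *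
        ∫⁻ p, ENNReal.ofReal (g p))) := by
  have := hQ.prob
  have hm := measurable_ff
  obtain ⟨hW, hJ⟩ := JJ_eq hQ
  obtain ⟨c, hc⟩ : ∃ c, c = 1 / √(2 * Real.pi * qf Q (-(mv Q).2, (mv Q).1)) := ⟨_, rfl⟩
  have hcp : 0 < c := by rw [hc]; positivity
  have hJ' : JJ Q = ((c * (2 * Real.pi) ^ 2 : ℝ) : ℂ) := by rw [hJ, hc]; congr 1; ring
  rw [← hc]
  have hν0 : IsFiniteMeasure (ENNReal.ofReal c •
      (volume : Measure (ℝ × ℝ)).withDensity (fun w => ENNReal.ofReal (ff w))) := by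
    have : IsFiniteMeasure ((volume : Measure (ℝ × ℝ)).withDensity
      (fun w => ENNReal.ofReal (ff w))) :=
      isFiniteMeasure_withDensity_ofReal integrable_ff.2
    exact Measure.smul_finite _ ENNReal.ofReal_ne_top
  have hcf0 : ∀ θ, cf (ENNReal.ofReal c •
      (volume : Measure (ℝ × ℝ)).withDensity (fun w => ENNReal.ofReal (ff w))) θ =
      KK (-θ) * JJ Q := by
    intro θ
    unfold cf
    rw [integral_smul_measure, integral_withDensity_eq_integral_toReal_smul (by fun_prop)
      (ae_of_all _ fun p => ENNReal.ofReal_lt_top), ENNReal.toReal_ofReal hcp.le, hJ',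
      Complex.real_smul]
    have := ff_fourier θ
    rw [show (∫ z, (ENNReal.ofReal (ff z)).toReal • Complex.exp (dt θ z * Complex.I)) =
      ∫ z, (ff z : ℂ) * Complex.exp (dt θ z * Complex.I) from ?_, this]
    · push_cast; ring
    · congr 1
      ext p
      rw [ENNReal.toReal_ofReal (ff_pos _).le, Complex.real_smul]
  have hne : (id ⟨_, hν0⟩ : FiniteMeasure (ℝ × ℝ)) ≠ 0 := by
    intro h
    have h1 := congrArg (fun ρ : FiniteMeasure (ℝ × ℝ) => cf (ρ : Measure (ℝ × ℝ)) 0) h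
    simp only [id, FiniteMeasure.toMeasure_mk, FiniteMeasure.toMeasure_zero] at h1
    rw [hcf0, hJ'] at h1
    simp [cf, KK, kap_zero, hcp.ne', Real.pi_ne_zero] at h1
  have key := fin_lim (fun j => ⟨nuM Q (N j) (z j), nuM_finite hQ _ _⟩) (id ⟨_, hν0⟩) hne ?_
    (fun p => g p / ff p) (by fun_prop) M (fun p => div_nonneg (hg0 p) (ff_pos p).le)
    (fun p => by rw [div_le_iff₀ (ff_pos p)]; exact hgM p) ?_
  · simp only [id, FiniteMeasure.toMeasure_mk] at key
    have e1 : ∀ p, ENNReal.ofReal (ff p) * ENNReal.ofReal (g p / ff p) = ENNReal.ofReal (g p) := by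
      intro p
      rw [← ENNReal.ofReal_mul (ff_pos p).le, mul_div_cancel₀ _ (ff_pos p).ne']
    have e2 : ∀ j, ∫⁻ p, ENNReal.ofReal (g p / ff p) ∂(nuM Q (N j) (z j)) = ENNReal.ofReal √(N j) *
      ∑' k, ∫⁻ p, ENNReal.ofReal (g (z j - p)) ∂(iterConv Q k) := by
      intro j
      rw [lintegral_nuM _ _ _ _ (by fun_prop)]
      simp only [e1]
    rw [lintegral_smul_measure, lintegral_withDensity_eq_lintegral_mul _ (by fun_prop)
      (by fun_prop)] at key
    simp only [e2, Pi.mul_apply, e1, smul_eq_mul] at key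
    exact key
  · intro θ
    simp only [id, FiniteMeasure.toMeasure_mk]
    rw [hcf0]
    simp only [cf_nuM hQ]
    exact sum_limit hQ θ N z hN hz
  · have hac : (ENNReal.ofReal c •
      (volume : Measure (ℝ × ℝ)).withDensity (fun w => ENNReal.ofReal (ff w))) ≪ volume :=
      Measure.smul_absolutelyContinuous.trans (withDensity_absolutelyContinuous _ _)
    refine hac.ae_le ?_
    filter_upwards [hgc] with p hp
    exact hp.div continuous_ff.continuousAt (ff_pos p).ne'

end Hog

namespace Hog
open scoped Topology

/-- tilting density -/
noncomputable def rho (ξ η : ℝ) (p : ℝ × ℝ) : ℝ≥0∞ :=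
  ENNReal.ofReal (Real.exp (-(ξ * p.1 + η * p.2)))

@[fun_prop]
lemma measurable_rho (ξ η : ℝ) : Measurable (rho ξ η) := by unfold rho; fun_prop

lemma rho_ne_zero (ξ η : ℝ) (p : ℝ × ℝ) : rho ξ η p ≠ 0 := by
  unfold rho; simp [Real.exp_pos]

lemma rho_add (ξ η : ℝ) (p q : ℝ × ℝ) : rho ξ η (p + q) = rho ξ η p * rho ξ η q := by
  unfold rho
  rw [← ENNReal.ofReal_mul (Real.exp_nonneg _), ← Real.exp_add]
  congr 2
  simp; ring

lemma lintegral_tilt (F : Measure (ℝ × ℝ)) (ξ η : ℝ) {h : ℝ × ℝ → ℝ≥0∞} (hh : Measurable h) :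
    ∫⁻ p, h p ∂(F.withDensity (rho ξ η)) = ∫⁻ p, rho ξ η p * h p ∂F := by
  rw [lintegral_withDensity_eq_lintegral_mul _ (by fun_prop) hh]
  rfl

lemma tilt_iter (F : Measure (ℝ × ℝ)) [IsFiniteMeasure F] (ξ η : ℝ)
    [IsFiniteMeasure (F.withDensity (rho ξ η))] (n : ℕ) :
    ∀ {h : ℝ × ℝ → ℝ≥0∞}, Measurable h →
    ∫⁻ p, h p ∂(iterConv (F.withDensity (rho ξ η)) n) = ∫⁻ p, rho ξ η p * h p ∂(iterConv F n) := by
  induction n with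
  | zero =>
    intro h hh
    unfold iterConv
    rw [lintegral_dirac, lintegral_dirac]
    simp [rho]
  | succ n ih =>
    intro h hh
    unfold iterConv
    rw [lintegral_mconv hh, lintegral_mconv (by fun_prop), ih]
    · congr 1
      ext p
      rw [lintegral_tilt _ _ _ (by fun_prop), ← lintegral_const_mul _ (by fun_prop)]
      congr 1
      ext q
      rw [rho_add, mul_assoc]
    · exact Measurable.lintegral_prod_right' (f := fun x : (ℝ × ℝ) × (ℝ × ℝ) => h (x.1 + x.2))
        (by fun_prop)

lemma exp_moment (F : Measure (ℝ × ℝ)) (ξ η u w : ℝ) (h : biLaplace F u w < ⊤) :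
    Integrable (fun p : ℝ × ℝ => Real.exp ((ξ - u) * p.1 + (η - w) * p.2))
      (F.withDensity (rho ξ η)) := by
  refine ⟨Measurable.aestronglyMeasurable (by fun_prop), ?_⟩
  rw [hasFiniteIntegral_iff_ofReal (ae_of_all _ fun p => (Real.exp_nonneg _)),
    lintegral_tilt _ _ _ (by fun_prop)]
  refine lt_of_le_of_lt (le_of_eq ?_) h
  unfold biLaplace rho
  congr 1
  ext p
  rw [← ENNReal.ofReal_mul (Real.exp_nonneg _), ← Real.exp_add]
  congr 2
  ring

lemma tilt_ae (F : Measure (ℝ × ℝ)) (ξ η : ℝ) {P : ℝ × ℝ → Prop} :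
    (∀ᵐ p ∂(F.withDensity (rho ξ η)), P p) ↔ ∀ᵐ p ∂F, P p := by
  rw [ae_withDensity_iff (by fun_prop)]
  simp [rho_ne_zero]

lemma closed_lat (e : ℝ × ℝ) (L c : ℝ) : IsClosed {p : ℝ × ℝ | ∃ m : ℤ, dt e p = c + L * m} := by
  have h1 : IsClosed (range (fun m : ℤ => c + L * (m : ℝ))) := by
    by_cases hL : L = 0
    · subst hL
      simp only [zero_mul, add_zero, range_const]
      exact isClosed_singleton
    · have := (Int.isClosedEmbedding_coe_real.isClosedMap.isClosed_range)
      have h2 := ((Homeomorph.mulLeft₀ L hL).trans (Homeomorph.addLeft c)).isClosedMap _ this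
      rw [← range_comp] at h2
      exact h2
  have h2 := h1.preimage (f := fun p => dt e p) (by fun_prop)
  convert h2 using 1
  ext p
  simp [eq_comm]

lemma nonlat_of (F : Measure (ℝ × ℝ)) (hG : {p : ℝ × ℝ | 0 ≤ p.1 ∧ 0 ≤ p.2} ⊆
      (AddSubgroup.closure (msupport F) : Set (ℝ × ℝ))) (e : ℝ × ℝ) (he : e ≠ 0) (L c : ℝ) :
    ¬ ∀ᵐ p ∂F, ∃ m : ℤ, dt e p = c + L * m := by
  intro h
  have hs : msupport F ⊆ {p : ℝ × ℝ | ∃ m : ℤ, dt e p = c + L * m} := by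
    intro p hp
    by_contra hc
    have := hp _ (closed_lat e L c).isOpen_compl hc
    exact this.ne' h
  have hcl : ∀ p ∈ AddSubgroup.closure (msupport F), ∃ a b : ℤ, dt e p = a * c + b * L := by
    intro p hp
    induction hp using AddSubgroup.closure_induction with
    | mem x hx =>
      obtain ⟨m, hm⟩ := hs hx
      exact ⟨1, m, by rw [hm]; push_cast; ring⟩
    | zero => exact ⟨0, 0, by simp [dt_zero]⟩
    | add x y _ _ hx hy =>
      obtain ⟨a, b, h1⟩ := hx
      obtain ⟨a', b', h2⟩ := hy
      exact ⟨a + a', b + b', by rw [dt_add, h1, h2]; push_cast; ring⟩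
    | neg x _ hx =>
      obtain ⟨a, b, h1⟩ := hx
      exact ⟨-a, -b, by rw [dt_neg, h1]; push_cast; ring⟩
  have hcount : (range (fun ab : ℤ × ℤ => (ab.1 : ℝ) * c + ab.2 * L)).Countable :=
    countable_range _
  have key : ∀ r : ℝ, r ≠ 0 → ¬ ∀ s : ℝ, 0 ≤ s →
      r * s ∈ range (fun ab : ℤ × ℤ => (ab.1 : ℝ) * c + ab.2 * L) := by
    intro r hr hall
    have h1 : ((fun s => r * s) '' Ici 0).Countable := hcount.mono (by
      rintro _ ⟨s, hs, rfl⟩; exact hall s hs)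
    have h2 : (Ici (0:ℝ)).Countable :=
      (Set.countable_of_injective_of_countable_image (mul_right_injective₀ hr).injOn h1)
    have h3 := h2.measure_zero volume
    simp at h3
  by_cases h1 : e.1 = 0
  · have h2 : e.2 ≠ 0 := fun h2 => he (Prod.ext h1 h2)
    apply key _ h2
    intro s hs
    obtain ⟨a, b, hab⟩ := hcl (0, s) (hG ⟨le_rfl, hs⟩)
    exact ⟨(a, b), by simp [dt] at hab; exact hab.symm⟩
  · apply key _ h1
    intro s hs
    obtain ⟨a, b, hab⟩ := hcl (s, 0) (hG ⟨hs, le_rfl⟩)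
    exact ⟨(a, b), by simp [dt] at hab; exact hab.symm⟩

lemma sq_le_exp {δ x : ℝ} (hδ : 0 < δ) (hx : 0 ≤ x) : x ^ 2 ≤ 2 / δ ^ 2 * Real.exp (δ * x) := by
  have := Real.quadratic_le_exp_of_nonneg (mul_nonneg hδ.le hx)
  rw [div_mul_eq_mul_div, le_div_iff₀ (by positivity)]
  nlinarith [mul_nonneg hδ.le hx]

lemma good_tilt (F : Measure (ℝ × ℝ))
    (hFsupp : F {p : ℝ × ℝ | p.1 < 0 ∨ p.2 < 0} = 0)
    (hG : {p : ℝ × ℝ | 0 ≤ p.1 ∧ 0 ≤ p.2} ⊆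
      (AddSubgroup.closure (msupport F) : Set (ℝ × ℝ)))
    (ξ η : ℝ) (hζ : biLaplace F ξ η = 1)
    (hnbd : ∃ ε > 0, ∀ u w : ℝ, |u - ξ| < ε → |w - η| < ε → biLaplace F u w < ⊤) :
    Good (F.withDensity (rho ξ η)) ∧ 0 < ∫ p, p.2 ∂(F.withDensity (rho ξ η)) ∧
      ∀ᵐ p ∂(F.withDensity (rho ξ η)), 0 ≤ p.1 ∧ 0 ≤ p.2 := by
  have hnn : ∀ᵐ p ∂(F.withDensity (rho ξ η)), 0 ≤ p.1 ∧ 0 ≤ p.2 := by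
    rw [tilt_ae]
    refine measure_mono_null ?_ hFsupp
    intro p hp
    by_contra hc
    simp only [mem_ofPred_eq, not_or, not_lt] at hc
    exact hp hc
  have hprob : IsProbabilityMeasure (F.withDensity (rho ξ η)) := by
    constructor
    rw [← lintegral_one, lintegral_tilt _ _ _ measurable_const]
    simp only [mul_one]
    exact hζ
  obtain ⟨ε, hε, hfin⟩ := hnbd
  have he : |ε / 2| < ε := by rw [abs_of_pos (by linarith)]; linarith
  have m1 := exp_moment F ξ η (ξ - ε / 2) η (hfin _ _ (by simpa using he) (by simpa using hε))
  have m2 := exp_moment F ξ η ξ (η - ε / 2) (hfin _ _ (by simpa using hε) (by simpa using he))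
  have i1 : Integrable (fun p : ℝ × ℝ => p.1 ^ 2) (F.withDensity (rho ξ η)) := by
    refine (m1.const_mul (2 / (ε / 2) ^ 2)).mono' (Measurable.aestronglyMeasurable (by fun_prop)) ?_
    filter_upwards [hnn] with p hp
    rw [Real.norm_eq_abs, abs_of_nonneg (by positivity)]
    convert sq_le_exp (half_pos hε) hp.1 using 3
    ring
  have i2 : Integrable (fun p : ℝ × ℝ => p.2 ^ 2) (F.withDensity (rho ξ η)) := by
    refine (m2.const_mul (2 / (ε / 2) ^ 2)).mono' (Measurable.aestronglyMeasurable (by fun_prop)) ?_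
    filter_upwards [hnn] with p hp
    rw [Real.norm_eq_abs, abs_of_nonneg (by positivity)]
    convert sq_le_exp (half_pos hε) hp.2 using 3
    ring
  have hnl : ∀ e : ℝ × ℝ, e ≠ 0 → ∀ L c : ℝ, ¬ ∀ᵐ p ∂(F.withDensity (rho ξ η)),
      ∃ m : ℤ, dt e p = c + L * m := by
    intro e he L c
    rw [tilt_ae]
    exact nonlat_of F hG e he L c
  have pos : ∀ e : ℝ × ℝ, e ≠ 0 → (∀ᵐ p ∂(F.withDensity (rho ξ η)), 0 ≤ dt e p) →
      Integrable (fun p => dt e p) (F.withDensity (rho ξ η)) →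
      0 < ∫ p, dt e p ∂(F.withDensity (rho ξ η)) := by
    intro e he h0 hi
    refine lt_of_le_of_ne (integral_nonneg_of_ae h0) fun h => ?_
    have := (integral_eq_zero_iff_of_nonneg_ae h0 hi).1 h.symm
    apply hnl e he 0 0
    filter_upwards [this] with p hp
    exact ⟨0, by simpa using hp⟩
  have l1 := ((memLp_two_iff_integrable_sq (f := fun p : ℝ × ℝ => p.1) (by fun_prop)).2 i1).integrable
    (by norm_num)
  have l2 := ((memLp_two_iff_integrable_sq (f := fun p : ℝ × ℝ => p.2) (by fun_prop)).2 i2).integrable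
    (by norm_num)
  refine ⟨⟨hprob, i1, i2, hnl, ?_⟩, ?_, hnn⟩
  · have := pos (1, 0) (by simp) (by simpa [dt] using hnn.mono fun p hp => hp.1) (by simpa [dt] using l1)
    simpa [dt] using this
  · have := pos (0, 1) (by simp) (by simpa [dt] using hnn.mono fun p hp => hp.2) (by simpa [dt] using l2)
    simpa [dt] using this

end Hog

namespace Hog
open scoped Topology

/-- the integrand of the overshoot kernel -/
noncomputable def gi (ξ η a b : ℝ) (z q : ℝ × ℝ) : ℝ :=
  {x : (ℝ × ℝ) × (ℝ × ℝ) | 0 ≤ x.1.1 ∧ x.1.1 + a < x.2.1 ∧ x.2.2 ≤ x.1.2 + b}.indicator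
    (fun x => Real.exp (ξ * (x.2.1 - x.1.1) + η * (x.2.2 - x.1.2))) (z, q)

lemma measurableSet_gi (a b : ℝ) : MeasurableSet
    {x : (ℝ × ℝ) × (ℝ × ℝ) | 0 ≤ x.1.1 ∧ x.1.1 + a < x.2.1 ∧ x.2.2 ≤ x.1.2 + b} := by
  have h1 : MeasurableSet {x : (ℝ × ℝ) × (ℝ × ℝ) | 0 ≤ x.1.1} :=
    measurableSet_le (by fun_prop) (by fun_prop)
  have h2 : MeasurableSet {x : (ℝ × ℝ) × (ℝ × ℝ) | x.1.1 + a < x.2.1} :=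
    measurableSet_lt (by fun_prop) (by fun_prop)
  have h3 : MeasurableSet {x : (ℝ × ℝ) × (ℝ × ℝ) | x.2.2 ≤ x.1.2 + b} :=
    measurableSet_le (by fun_prop) (by fun_prop)
  convert h1.inter (h2.inter h3) using 1
  ext x; simp

lemma measurable_gi (ξ η a b : ℝ) :
    Measurable (fun x : (ℝ × ℝ) × (ℝ × ℝ) => gi ξ η a b x.1 x.2) := by
  unfold gi
  exact Measurable.indicator (by fun_prop) (measurableSet_gi a b)

@[fun_prop]
lemma measurable_gi_comp {X : Type*} [MeasurableSpace X] (ξ η a b : ℝ) {f h : X → ℝ × ℝ}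
    (hf : Measurable f) (hg : Measurable h) : Measurable (fun x => gi ξ η a b (f x) (h x)) :=
  (measurable_gi ξ η a b).comp (hf.prodMk hg)

lemma gi_nonneg (ξ η a b : ℝ) (z q : ℝ × ℝ) : 0 ≤ gi ξ η a b z q :=
  indicator_nonneg (fun _ _ => Real.exp_nonneg _) _

lemma gi_of {ξ η a b : ℝ} {z q : ℝ × ℝ} (h : 0 ≤ z.1 ∧ z.1 + a < q.1 ∧ q.2 ≤ z.2 + b) :
    gi ξ η a b z q = Real.exp (ξ * (q.1 - z.1) + η * (q.2 - z.2)) := by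
  unfold gi; rw [indicator_of_mem (by exact h)]

lemma gi_of_not {ξ η a b : ℝ} {z q : ℝ × ℝ} (h : ¬ (0 ≤ z.1 ∧ z.1 + a < q.1 ∧ q.2 ≤ z.2 + b)) :
    gi ξ η a b z q = 0 := by
  unfold gi; rw [indicator_of_notMem (by exact h)]

/-- the overshoot kernel -/
noncomputable def gg (Q : Measure (ℝ × ℝ)) (ξ η a b : ℝ) (z : ℝ × ℝ) : ℝ :=
  ∫ q, gi ξ η a b z q ∂Q

lemma gi_bound {ξ η a b ε : ℝ} (ha : 0 ≤ a) (hε : 0 < ε) (hεη : ε ≤ η) (z q : ℝ × ℝ) :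
    gi ξ η a b z q ≤ Real.exp ((η - ε) * b) * Real.exp (-ε * z.1 - ε * z.2) *
      Real.exp ((max ξ 0 + ε) * q.1 + ε * q.2) := by
  by_cases h : 0 ≤ z.1 ∧ z.1 + a < q.1 ∧ q.2 ≤ z.2 + b
  · rw [gi_of h, ← Real.exp_add, ← Real.exp_add]
    apply Real.exp_le_exp.2
    obtain ⟨h1, h2, h3⟩ := h
    have e1 : ξ * (q.1 - z.1) ≤ (max ξ 0) * (q.1 - z.1) :=
      mul_le_mul_of_nonneg_right (le_max_left _ _) (by linarith)
    have e2 : 0 ≤ ε * (q.1 - z.1) := mul_nonneg hε.le (by linarith)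
    have e3 : 0 ≤ max ξ 0 * z.1 := mul_nonneg (le_max_right _ _) h1
    have e4 : (η - ε) * (q.2 - z.2) ≤ (η - ε) * b :=
      mul_le_mul_of_nonneg_left (by linarith) (by linarith)
    nlinarith
  · rw [gi_of_not h]; positivity

structure Hyp (Q : Measure (ℝ × ℝ)) (ξ η ε : ℝ) : Prop where
  prob : IsProbabilityMeasure Q
  hε : 0 < ε
  hεη : ε ≤ η
  nn : ∀ᵐ p ∂Q, 0 ≤ p.1 ∧ 0 ≤ p.2
  mom : Integrable (fun q : ℝ × ℝ => Real.exp ((max ξ 0 + ε) * q.1 + ε * q.2)) Q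

lemma gi_integrable {Q : Measure (ℝ × ℝ)} {ξ η ε : ℝ} (H : Hyp Q ξ η ε) {a : ℝ} (ha : 0 ≤ a) (b : ℝ)
    (z : ℝ × ℝ) : Integrable (fun q => gi ξ η a b z q) Q := by
  have := H.prob
  refine (H.mom.const_mul (Real.exp ((η - ε) * b) * Real.exp (-ε * z.1 - ε * z.2))).mono'
    (Measurable.aestronglyMeasurable (by fun_prop)) (ae_of_all _ fun q => ?_)
  rw [Real.norm_eq_abs, abs_of_nonneg (gi_nonneg _ _ _ _ _ _)]
  exact gi_bound ha H.hε H.hεη z q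

lemma gg_eq {Q : Measure (ℝ × ℝ)} {ξ η ε : ℝ} (H : Hyp Q ξ η ε) {a : ℝ} (ha : 0 ≤ a) (b : ℝ)
    (z : ℝ × ℝ) : ENNReal.ofReal (gg Q ξ η a b z) = ∫⁻ q, ENNReal.ofReal (gi ξ η a b z q) ∂Q :=
  ofReal_integral_eq_lintegral_ofReal (gi_integrable H ha b z)
    (ae_of_all _ fun q => gi_nonneg _ _ _ _ _ _)

lemma gg_nonneg (Q : Measure (ℝ × ℝ)) (ξ η a b : ℝ) (z : ℝ × ℝ) : 0 ≤ gg Q ξ η a b z :=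
  integral_nonneg fun q => gi_nonneg _ _ _ _ _ _

lemma measurable_gg {Q : Measure (ℝ × ℝ)} [SFinite Q] (ξ η a b : ℝ) :
    Measurable (gg Q ξ η a b) := by
  unfold gg
  exact (StronglyMeasurable.integral_prod_right
    (f := fun z q => gi ξ η a b z q) (measurable_gi ξ η a b).stronglyMeasurable).measurable

lemma hh_dom {ε B : ℝ} (hε : 0 < ε) (hB : 0 ≤ B) : ∃ K : ℝ, 0 ≤ K ∧ ∀ s, -B ≤ s →
    Real.exp (-ε * s) ≤ K * hh s := by
  obtain ⟨c, hc, h⟩ := hh_lower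
  refine ⟨Real.exp (ε * B) * (1 + 2 * B ^ 2 + 4 / ε ^ 2) / c, by positivity, fun s hs => ?_⟩
  have h1 := sq_le_exp hε (x := s + B) (by linarith)
  have h2 : 1 ≤ Real.exp (ε * (s + B)) := Real.one_le_exp (mul_nonneg hε.le (by linarith))
  have h3 : 1 + s ^ 2 ≤ (1 + 2 * B ^ 2 + 4 / ε ^ 2) * Real.exp (ε * (s + B)) := by
    have e : 1 + s ^ 2 ≤ 1 + 2 * B ^ 2 + 2 * (s + B) ^ 2 := by nlinarith [sq_nonneg (s + 2 * B)]
    have e2 : (4 / ε ^ 2) * Real.exp (ε * (s + B)) = 2 * (2 / ε ^ 2 * Real.exp (ε * (s + B))) := by ring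
    nlinarith [mul_le_mul_of_nonneg_left h2 (by positivity : 0 ≤ 1 + 2 * B ^ 2)]
  have h4 : Real.exp (-ε * s) = Real.exp (ε * B) / Real.exp (ε * (s + B)) := by
    rw [← Real.exp_sub]; congr 1; ring
  have h5 := h s
  rw [h4, div_le_iff₀ (Real.exp_pos _), div_mul_eq_mul_div, div_mul_eq_mul_div, le_div_iff₀ hc]
  have h6 : c ≤ hh s * ((1 + 2 * B ^ 2 + 4 / ε ^ 2) * Real.exp (ε * (s + B))) :=
    h5.trans (mul_le_mul_of_nonneg_left h3 (hh_nonneg s))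
  nlinarith [mul_le_mul_of_nonneg_left h6 (Real.exp_nonneg (ε * B))]

lemma gg_bound {Q : Measure (ℝ × ℝ)} {ξ η ε : ℝ} (H : Hyp Q ξ η ε) {a : ℝ} (ha : 0 ≤ a) (b : ℝ) :
    ∃ M : ℝ, ∀ z, gg Q ξ η a b z ≤ M * ff z := by
  have := H.prob
  obtain ⟨K1, hK1, h1⟩ := hh_dom H.hε (le_refl (0:ℝ))
  obtain ⟨K2, hK2, h2⟩ := hh_dom H.hε (abs_nonneg b)
  set I := ∫ q, Real.exp ((max ξ 0 + ε) * q.1 + ε * q.2) ∂Q with hI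
  have hI0 : 0 ≤ I := integral_nonneg fun q => Real.exp_nonneg _
  refine ⟨Real.exp ((η - ε) * b) * (K1 * K2) * I, fun z => ?_⟩
  have hp := (ff_pos z).le
  by_cases hz : 0 ≤ z.1 ∧ -|b| ≤ z.2
  · have e1 : gg Q ξ η a b z ≤ Real.exp ((η - ε) * b) * Real.exp (-ε * z.1 - ε * z.2) * I := by
      unfold gg
      rw [hI, ← integral_const_mul]
      exact integral_mono (gi_integrable H ha b z) (H.mom.const_mul _)
        fun q => gi_bound ha H.hε H.hεη z q
    refine e1.trans ?_
    have e2 : Real.exp (-ε * z.1 - ε * z.2) ≤ (K1 * hh z.1) * (K2 * hh z.2) := by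
      rw [show -ε * z.1 - ε * z.2 = -ε * z.1 + -ε * z.2 by ring, Real.exp_add]
      exact mul_le_mul (h1 _ (by linarith)) (h2 _ hz.2) (Real.exp_nonneg _)
        (mul_nonneg hK1 (hh_nonneg _))
    calc Real.exp ((η - ε) * b) * Real.exp (-ε * z.1 - ε * z.2) * I ≤
        Real.exp ((η - ε) * b) * ((K1 * hh z.1) * (K2 * hh z.2)) * I := by gcongr
      _ = _ := by unfold ff; ring
  · have : gg Q ξ η a b z = 0 := by
      unfold gg
      rw [integral_eq_zero_of_ae]
      filter_upwards [H.nn] with q hq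
      apply gi_of_not
      rintro ⟨h3, h4, h5⟩
      apply hz
      refine ⟨h3, ?_⟩
      have := neg_abs_le b
      have := le_abs_self b
      linarith [hq.2]
    rw [this]
    positivity

lemma gg_cont {Q : Measure (ℝ × ℝ)} {ξ η ε : ℝ} (H : Hyp Q ξ η ε) {a : ℝ} (ha : 0 ≤ a) (b : ℝ) :
    ∀ᵐ z : ℝ × ℝ, ContinuousAt (gg Q ξ η a b) z := by
  have := H.prob
  have hae : ∀ (f : ℝ × ℝ → ℝ), Measurable f → ∀ᵐ s : ℝ, Q {q | f q = s} = 0 := by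
    intro f hf
    have hcount : Set.Countable {t : ℝ | 0 < Q {p | f p = t}} :=
      Measure.countable_meas_level_set_pos hf
    have h0 := measure_eq_zero_iff_ae_notMem.1 (hcount.measure_zero volume)
    filter_upwards [h0] with t ht
    simpa using ht
  have h1 : ∀ᵐ z : ℝ × ℝ, Q {q | q.1 - a = z.1} = 0 :=
    Measure.quasiMeasurePreserving_fst.ae (hae (fun q => q.1 - a) (by fun_prop))
  have h2 : ∀ᵐ z : ℝ × ℝ, Q {q | q.2 - b = z.2} = 0 :=
    Measure.quasiMeasurePreserving_snd.ae (hae (fun q => q.2 - b) (by fun_prop))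
  have h3 : ∀ᵐ z : ℝ × ℝ, z.1 ≠ 0 :=
    Measure.quasiMeasurePreserving_fst.ae (p := fun s : ℝ => s ≠ 0)
      (by simp [ae_iff])
  filter_upwards [h1, h2, h3] with z h1 h2 h3
  unfold gg
  obtain ⟨R, hR⟩ : ∃ R, R = Real.exp ((η - ε) * b) * Real.exp (-ε * z.1 - ε * z.2) + 1 := ⟨_, rfl⟩
  have hcR : ∀ᶠ w in 𝓝 z, Real.exp ((η - ε) * b) * Real.exp (-ε * w.1 - ε * w.2) < R := by
    have hc : ContinuousAt (fun w : ℝ × ℝ => Real.exp ((η - ε) * b) *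
      Real.exp (-ε * w.1 - ε * w.2)) z := by fun_prop
    apply hc.eventually_lt_const
    rw [hR]; linarith
  refine continuousAt_of_dominated
    (bound := fun q => R * Real.exp ((max ξ 0 + ε) * q.1 + ε * q.2)) ?_ ?_ (H.mom.const_mul R) ?_
  · exact Eventually.of_forall fun w => Measurable.aestronglyMeasurable (by fun_prop)
  · filter_upwards [hcR] with w hw
    refine ae_of_all _ fun q => ?_
    rw [Real.norm_eq_abs, abs_of_nonneg (gi_nonneg _ _ _ _ _ _)]
    exact (gi_bound ha H.hε H.hεη w q).trans
      (mul_le_mul_of_nonneg_right hw.le (Real.exp_nonneg _))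
  · have a1 : ∀ᵐ q ∂Q, q.1 - a ≠ z.1 := by rw [ae_iff]; simpa using h1
    have a2 : ∀ᵐ q ∂Q, q.2 - b ≠ z.2 := by rw [ae_iff]; simpa using h2
    filter_upwards [a1, a2] with q a1 a2
    have c1 : ContinuousAt (fun w : ℝ × ℝ => w.1) z := by fun_prop
    have c2 : ContinuousAt (fun w : ℝ × ℝ => w.2) z := by fun_prop
    by_cases hz : 0 < z.1 ∧ z.1 < q.1 - a ∧ q.2 - b < z.2
    · have : (fun w => gi ξ η a b w q) =ᶠ[𝓝 z]
          fun w => Real.exp (ξ * (q.1 - w.1) + η * (q.2 - w.2)) := by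
        filter_upwards [c1.eventually_const_lt hz.1, c1.eventually_lt_const hz.2.1,
          c2.eventually_const_lt hz.2.2] with w w1 w2 w3
        exact gi_of ⟨w1.le, by linarith, by linarith⟩
      exact ContinuousAt.congr (by fun_prop) this.symm
    · have hz' : z.1 < 0 ∨ q.1 - a < z.1 ∨ z.2 < q.2 - b := by
        by_contra hc
        push Not at hc
        exact hz ⟨lt_of_le_of_ne hc.1 h3.symm, lt_of_le_of_ne hc.2.1 a1.symm,
          lt_of_le_of_ne hc.2.2 a2⟩
      have : (fun w => gi ξ η a b w q) =ᶠ[𝓝 z] fun w => 0 := by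
        rcases hz' with h | h | h
        · filter_upwards [c1.eventually_lt_const h] with w w1
          exact gi_of_not (by rintro ⟨e1, e2, e3⟩; linarith)
        · filter_upwards [c1.eventually_const_lt h] with w w1
          exact gi_of_not (by rintro ⟨e1, e2, e3⟩; linarith)
        · filter_upwards [c2.eventually_lt_const h] with w w1
          exact gi_of_not (by rintro ⟨e1, e2, e3⟩; linarith)
      exact ContinuousAt.congr (by fun_prop) this.symm

end Hog

namespace Hog
open scoped Topology

lemma hoglund_term {F : Measure (ℝ × ℝ)} {ξ η ε : ℝ}
    (H : Hyp (F.withDensity (rho ξ η)) ξ η ε) {a : ℝ} (ha : 0 ≤ a) (b x y : ℝ) (p : ℝ × ℝ) :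
    rho ξ η p * ENNReal.ofReal (gg (F.withDensity (rho ξ η)) ξ η a b ((x, y) - p)) =
      ENNReal.ofReal (Real.exp (-(x * ξ + y * η))) * {p : ℝ × ℝ | p.1 ≤ x}.indicator
        (fun p => F {q : ℝ × ℝ | x + a < p.1 + q.1 ∧ p.2 + q.2 ≤ y + b}) p := by
  have hm := measurable_rho ξ η
  rw [gg_eq H ha, lintegral_tilt F ξ η (by fun_prop), ← lintegral_const_mul _ (by fun_prop)]
  have hS : MeasurableSet {q : ℝ × ℝ | x + a < p.1 + q.1 ∧ p.2 + q.2 ≤ y + b} := by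
    have h1 : MeasurableSet {q : ℝ × ℝ | x + a < p.1 + q.1} :=
      measurableSet_lt (by fun_prop) (by fun_prop)
    have h2 : MeasurableSet {q : ℝ × ℝ | p.2 + q.2 ≤ y + b} :=
      measurableSet_le (by fun_prop) (by fun_prop)
    convert h1.inter h2 using 1
    ext q; simp
  by_cases hp : p.1 ≤ x
  · rw [indicator_of_mem (by exact hp), ← lintegral_indicator_one hS,
      ← lintegral_const_mul _ (measurable_one.indicator hS)]
    refine lintegral_congr fun q => ?_
    by_cases hq : x + a < p.1 + q.1 ∧ p.2 + q.2 ≤ y + b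
    · rw [indicator_of_mem (by exact hq), gi_of ⟨by simpa using hp, by simp; linarith [hq.1],
        by simp; linarith [hq.2]⟩]
      unfold rho
      rw [← ENNReal.ofReal_mul (Real.exp_nonneg _), ← Real.exp_add,
        ← ENNReal.ofReal_mul (Real.exp_nonneg _), ← Real.exp_add, Pi.one_apply, mul_one]
      congr 2
      simp; ring
    · rw [indicator_of_notMem (by exact hq), gi_of_not]
      · simp
      · rintro ⟨h1, h2, h3⟩
        simp at h2 h3
        exact hq ⟨by linarith, by linarith⟩
  · rw [indicator_of_notMem (by exact hp), mul_zero]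
    refine (lintegral_congr fun q => ?_).trans lintegral_zero
    rw [gi_of_not]
    · simp
    · rintro ⟨h1, h2, h3⟩
      exact hp (by simpa using h1)

lemma hoglund_sum {F : Measure (ℝ × ℝ)} [IsFiniteMeasure F] {ξ η ε : ℝ}
    (H : Hyp (F.withDensity (rho ξ η)) ξ η ε) {a : ℝ} (ha : 0 ≤ a) (b x y : ℝ) :
    ∑' k, ∫⁻ p, ENNReal.ofReal (gg (F.withDensity (rho ξ η)) ξ η a b ((x, y) - p))
      ∂(iterConv (F.withDensity (rho ξ η)) k) =
      ENNReal.ofReal (Real.exp (-(x * ξ + y * η))) * hoglundG F a b x y := by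
  have := H.prob
  have hg := measurable_gg (Q := F.withDensity (rho ξ η)) ξ η a b
  unfold hoglundG
  rw [← ENNReal.tsum_mul_left]
  refine tsum_congr fun k => ?_
  rw [tilt_iter F ξ η k (by fun_prop)]
  have hS : MeasurableSet {p : ℝ × ℝ | p.1 ≤ x} := measurableSet_le (by fun_prop) (by fun_prop)
  rw [← lintegral_indicator hS, ← lintegral_const_mul' _ _ ENNReal.ofReal_ne_top]
  exact lintegral_congr fun p => hoglund_term H ha b x y p

lemma lint_exp {η : ℝ} (hη : 0 < η) (b : ℝ) :
    ∫⁻ u, (Iic b).indicator (fun u => ENNReal.ofReal (Real.exp (η * u))) u =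
      ENNReal.ofReal (Real.exp (b * η) / η) := by
  rw [lintegral_indicator measurableSet_Iic, ← ofReal_integral_eq_lintegral_ofReal
    (integrableOn_exp_mul_Iic hη b) (ae_of_all _ fun _ => Real.exp_nonneg _),
    integral_exp_mul_Iic hη, mul_comm]

end Hog

namespace Hog
open scoped Topology

lemma gi_prod (ξ η a b : ℝ) (z q : ℝ × ℝ) : ENNReal.ofReal (gi ξ η a b z q) =
    (Ioc a q.1).indicator (fun u => ENNReal.ofReal (Real.exp (ξ * u))) (q.1 - z.1) *
    (Iic b).indicator (fun u => ENNReal.ofReal (Real.exp (η * u))) (q.2 - z.2) := by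
  by_cases h : 0 ≤ z.1 ∧ z.1 + a < q.1 ∧ q.2 ≤ z.2 + b
  · rw [gi_of h, indicator_of_mem, indicator_of_mem, ← ENNReal.ofReal_mul (Real.exp_nonneg _),
      ← Real.exp_add]
    · rw [mem_Iic]; linarith [h.2.2]
    · rw [mem_Ioc]; constructor <;> linarith [h.1, h.2.1]
  · rw [gi_of_not h, ENNReal.ofReal_zero, eq_comm, _root_.mul_eq_zero]
    by_contra hc
    push Not at hc
    have h1 := mem_of_indicator_ne_zero hc.1
    have h2 := mem_of_indicator_ne_zero hc.2
    rw [mem_Ioc] at h1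
    rw [mem_Iic] at h2
    exact h ⟨by linarith, by linarith, by linarith⟩

lemma gg_lint {Q : Measure (ℝ × ℝ)} {ξ η ε : ℝ} (H : Hyp Q ξ η ε) {a : ℝ} (ha : 0 ≤ a) (b : ℝ) :
    ∫⁻ z, ENNReal.ofReal (gg Q ξ η a b z) = ENNReal.ofReal (Real.exp (b * η) / η) *
      ∫⁻ s in Ioi a, Q {p | s ≤ p.1} * ENNReal.ofReal (Real.exp (ξ * s)) := by
  have := H.prob
  have hη : 0 < η := H.hε.trans_le H.hεη
  simp_rw [gg_eq H ha b]
  rw [lintegral_lintegral_swap (by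
    refine Measurable.aemeasurable ?_
    show Measurable (fun x : (ℝ × ℝ) × (ℝ × ℝ) => ENNReal.ofReal (gi ξ η a b x.1 x.2))
    fun_prop)]
  have m1 : ∀ c : ℝ, Measurable
      ((Ioc a c).indicator (fun u => ENNReal.ofReal (Real.exp (ξ * u)))) := fun c =>
    Measurable.indicator (by fun_prop) measurableSet_Ioc
  have m2 : Measurable
      ((Iic b).indicator (fun u => ENNReal.ofReal (Real.exp (η * u)))) :=
    Measurable.indicator (by fun_prop) measurableSet_Iic
  have e1 : ∀ q : ℝ × ℝ, ∫⁻ z, ENNReal.ofReal (gi ξ η a b z q) =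
      ENNReal.ofReal (Real.exp (b * η) / η) *
      ∫⁻ u in Ioi a, {x : ℝ × (ℝ × ℝ) | x.1 ≤ x.2.1}.indicator
        (fun x => ENNReal.ofReal (Real.exp (ξ * x.1))) (u, q) := by
    intro q
    simp_rw [gi_prod]
    rw [Measure.volume_eq_prod, lintegral_prod_mul
      (f := fun s => (Ioc a q.1).indicator (fun u => ENNReal.ofReal (Real.exp (ξ * u))) (q.1 - s))
      (g := fun s => (Iic b).indicator (fun u => ENNReal.ofReal (Real.exp (η * u))) (q.2 - s))
      ((m1 q.1).comp (by fun_prop)).aemeasurable (m2.comp (by fun_prop)).aemeasurable,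
      lintegral_sub_left_eq_self, lintegral_sub_left_eq_self, lint_exp hη, mul_comm]
    congr 1
    rw [← lintegral_indicator measurableSet_Ioi]
    refine lintegral_congr fun u => ?_
    simp only [indicator, mem_Ioc, mem_Ioi, mem_ofPred_eq]
    split_ifs <;> simp_all
  simp_rw [e1]
  have mS : MeasurableSet {x : ℝ × (ℝ × ℝ) | x.1 ≤ x.2.1} :=
    measurableSet_le (by fun_prop) (by fun_prop)
  have mI : Measurable ({x : ℝ × (ℝ × ℝ) | x.1 ≤ x.2.1}.indicator
        (fun x => ENNReal.ofReal (Real.exp (ξ * x.1)))) :=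
    Measurable.indicator (by fun_prop) mS
  rw [lintegral_const_mul' _ _ ENNReal.ofReal_ne_top]
  congr 1
  rw [lintegral_lintegral_swap
    (f := fun (q : ℝ × ℝ) (u : ℝ) => {x : ℝ × (ℝ × ℝ) | x.1 ≤ x.2.1}.indicator
        (fun x => ENNReal.ofReal (Real.exp (ξ * x.1))) (u, q))
    (mI.comp (measurable_snd.prodMk measurable_fst)).aemeasurable]
  refine lintegral_congr fun u => ?_
  have hS : MeasurableSet {p : ℝ × ℝ | u ≤ p.1} := measurableSet_le (by fun_prop) (by fun_prop)
  rw [mul_comm, ← lintegral_indicator_const hS]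
  rfl

lemma gg_int {Q : Measure (ℝ × ℝ)} {ξ η ε : ℝ} (H : Hyp Q ξ η ε) {a : ℝ} (ha : 0 ≤ a) (b : ℝ) :
    ∫⁻ z, ENNReal.ofReal (gg Q ξ η a b z) ≠ ⊤ ∧
    (∫⁻ z, ENNReal.ofReal (gg Q ξ η a b z)).toReal = Real.exp (b * η) / η *
      ∫ s in Ioi a, (Q {p | s ≤ p.1}).toReal * Real.exp (ξ * s) := by
  have := H.prob
  have hη : 0 < η := H.hε.trans_le H.hεη
  constructor
  · obtain ⟨M, hM⟩ := gg_bound H ha b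
    refine ne_top_of_le_ne_top ?_ (lintegral_mono fun z => ENNReal.ofReal_le_ofReal (hM z))
    exact (integrable_ff.const_mul M).lintegral_lt_top.ne
  · rw [gg_lint H ha b, ENNReal.toReal_mul, ENNReal.toReal_ofReal (by positivity)]
    congr 1
    rw [integral_eq_lintegral_of_nonneg_ae]
    · congr 1
      refine lintegral_congr fun s => ?_
      rw [ENNReal.ofReal_mul ENNReal.toReal_nonneg, ENNReal.ofReal_toReal (measure_ne_top _ _)]
    · exact ae_of_all _ fun s => by positivity
    · have : Antitone (fun s : ℝ => (Q {p | s ≤ p.1}).toReal) := by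
        intro s t hst
        refine ENNReal.toReal_mono (measure_ne_top _ _) (measure_mono ?_)
        intro p hp
        exact hst.trans hp
      have := this.measurable
      exact Measurable.aestronglyMeasurable (by fun_prop)

lemma hyp_tilt (F : Measure (ℝ × ℝ)) (ξ η : ℝ) (hη : 0 < η)
    (hnbd : ∃ ε > 0, ∀ u w : ℝ, |u - ξ| < ε → |w - η| < ε → biLaplace F u w < ⊤)
    (hnbd0 : ∃ ε > 0, ∀ u w : ℝ, |u| < ε → |w - η| < ε → biLaplace F u w < ⊤)
    (hp : IsProbabilityMeasure (F.withDensity (rho ξ η)))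
    (hn : ∀ᵐ p ∂(F.withDensity (rho ξ η)), 0 ≤ p.1 ∧ 0 ≤ p.2) :
    ∃ ε, Hyp (F.withDensity (rho ξ η)) ξ η ε := by
  rcases le_total 0 ξ with h | h
  · obtain ⟨ε, hε, hf⟩ := hnbd0
    have h0 : 0 < min (ε / 2) η := lt_min (by linarith) hη
    have h1 : min (ε / 2) η < ε := (min_le_left _ _).trans_lt (by linarith)
    refine ⟨min (ε / 2) η, hp, h0, min_le_right _ _, hn, ?_⟩
    have := exp_moment F ξ η (-min (ε / 2) η) (η - min (ε / 2) η)
      (hf _ _ (by rwa [abs_neg, abs_of_pos h0]) (by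
        rw [sub_sub_cancel_left, abs_neg, abs_of_pos h0]; exact h1))
    rw [max_eq_left h]
    convert this using 4 <;> ring
  · obtain ⟨ε, hε, hf⟩ := hnbd
    have h0 : 0 < min (ε / 2) η := lt_min (by linarith) hη
    have h1 : min (ε / 2) η < ε := (min_le_left _ _).trans_lt (by linarith)
    refine ⟨min (ε / 2) η, hp, h0, min_le_right _ _, hn, ?_⟩
    have := exp_moment F ξ η (ξ - min (ε / 2) η) (η - min (ε / 2) η)
      (hf _ _ (by rw [sub_sub_cancel_left, abs_neg, abs_of_pos h0]; exact h1) (by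
        rw [sub_sub_cancel_left, abs_neg, abs_of_pos h0]; exact h1))
    rw [max_eq_right h]
    convert this using 4 <;> ring

/-- the asymptotics of the coordinates -/
lemma scaling {mS mR : ℝ} (hS : 0 < mS) (hR : 0 < mR) (x y : ℕ → ℝ) (hy : Tendsto y atTop atTop)
    (hx : Tendsto (fun n => (x n - mS / mR * y n) / √(y n)) atTop (𝓝 0)) :
    Tendsto (fun n => x n / mS) atTop atTop ∧
    Tendsto (fun n => (√(x n / mS))⁻¹ * (y n - x n / mS * mR)) atTop (𝓝 0) := by
  have hv : 0 < mS / mR := div_pos hS hR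
  have hsq : Tendsto (fun n => √(y n)) atTop atTop := Real.tendsto_sqrt_atTop.comp hy
  have h1 : Tendsto (fun n => x n / y n) atTop (𝓝 (mS / mR)) := by
    have := (hx.mul (tendsto_inv_atTop_zero.comp hsq)).add_const (mS / mR)
    rw [zero_mul, zero_add] at this
    refine this.congr' ?_
    filter_upwards [hy.eventually_gt_atTop 0] with n hn
    have e : √(y n) * √(y n) = y n := Real.mul_self_sqrt hn.le
    have e2 : √(y n) ≠ 0 := (Real.sqrt_pos.2 hn).ne'
    simp only [Function.comp]
    rw [← div_eq_mul_inv, div_div, e]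
    field_simp
    ring
  have h2 : Tendsto (fun n => x n / mS) atTop atTop := by
    have := (h1.pos_mul_atTop hv hy).atTop_div_const hS
    refine this.congr' ?_
    filter_upwards [hy.eventually_gt_atTop 0] with n hn
    field_simp
  refine ⟨h2, ?_⟩
  have h3 : Tendsto (fun n => √(y n) / √(x n / mS)) atTop (𝓝 (√(mR))) := by
    have := ((h1.inv₀ hv.ne').mul_const mS).sqrt
    have e : (mS / mR)⁻¹ * mS = mR := by field_simp
    rw [e] at this
    refine this.congr' ?_
    filter_upwards [hy.eventually_gt_atTop 0, h2.eventually_gt_atTop 0] with n hn hn2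
    rw [← Real.sqrt_div hn.le]
    congr 1
    rw [inv_div]
    have : x n ≠ 0 := by rintro h; rw [h] at hn2; simp at hn2
    field_simp
  have h4 := (hx.mul h3).const_mul (-(mR / mS))
  rw [zero_mul, mul_zero] at h4
  refine h4.congr' ?_
  filter_upwards [hy.eventually_gt_atTop 0, h2.eventually_gt_atTop 0] with n hn hn2
  have e2 : √(y n) ≠ 0 := (Real.sqrt_pos.2 hn).ne'
  have e3 : √(x n / mS) ≠ 0 := (Real.sqrt_pos.2 hn2).ne'
  obtain ⟨A, hA⟩ : ∃ A, A = √(x n / mS) := ⟨_, rfl⟩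
  rw [← hA] at e3 ⊢
  field_simp
  ring

end Hog

/-- Höglund's two-dimensional renewal theorem, upcrossing version (`η > 0`):
under condition (G), if `φ(ζ) = 1` for `ζ = (ξ,η)` with `η > 0`, `φ` finite near `ζ`
and near `(0,η)`, and `v = E_ζ[S₁]/E_ζ[R₁]`, then `V(ζ) > 0` and
`G_{a,b}(x_n,y_n) ∼ D(a,b) x_n^{-1/2} e^{x_n ξ + y_n η}` as `y_n → ∞`,
`x_n = v y_n + o(y_n^{1/2})`, where `D(a,b) = C(a,b) (2π V(ζ))^{-1/2}`. -/
theorem hoglund_renewal_G (F : Measure (ℝ × ℝ))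
    -- `F` is a subprobability measure on `[0,∞)²`
    (hFsupp : F {p : ℝ × ℝ | p.1 < 0 ∨ p.2 < 0} = 0)
    (hFmass : F Set.univ ≤ 1)
    -- condition (G)
    (hG : {p : ℝ × ℝ | 0 ≤ p.1 ∧ 0 ≤ p.2} ⊆
      (AddSubgroup.closure (msupport F) : Set (ℝ × ℝ)))
    (ξ η : ℝ) (hη : 0 < η)
    -- `φ(ζ) = 1`
    (hζ : biLaplace F ξ η = 1)
    -- `φ` finite in a neighbourhood of `ζ` and of `(0,η)`
    (hnbd : ∃ ε > 0, ∀ u w : ℝ, |u - ξ| < ε → |w - η| < ε → biLaplace F u w < ⊤)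
    (hnbd0 : ∃ ε > 0, ∀ u w : ℝ, |u| < ε → |w - η| < ε → biLaplace F u w < ⊤)
    -- the tilted step law `F_ζ(ds,dr) = e^{-ξs-ηr} F(ds,dr)` (using `φ(ζ) = 1`)
    (Fζ : Measure (ℝ × ℝ))
    (hFζ : Fζ = F.withDensity (fun p => ENNReal.ofReal (Real.exp (-(ξ * p.1 + η * p.2)))))
    -- `mS = E_ζ[S₁]`, `mR = E_ζ[R₁]`, `v = mS/mR`, `V = V(ζ)`
    (mS mR v V : ℝ)
    (hmS : mS = ∫ p, p.1 ∂Fζ) (hmR : mR = ∫ p, p.2 ∂Fζ)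
    (hv : v = mS / mR)
    (hV : V = (∫ p, (p.2 * mS - p.1 * mR) ^ 2 ∂Fζ) / mS ^ 3) :
    0 < V ∧
    ∀ a b : ℝ, 0 ≤ a → ∀ x y : ℕ → ℝ,
      Tendsto y atTop atTop → (∀ n, 0 < x n) →
      Tendsto (fun n => (x n - v * y n) / Real.sqrt (y n)) atTop (nhds 0) →
      Tendsto (fun n => (hoglundG F a b (x n) (y n)).toReal /
          (x n ^ (-(1:ℝ) / 2) * Real.exp (x n * ξ + y n * η))) atTop
        (nhds ((Real.exp (b * η) / (|η| * mS) *
            ∫ s in Set.Ioi a, (Fζ {p : ℝ × ℝ | s ≤ p.1}).toReal * Real.exp (ξ * s)) *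
          (Real.sqrt (2 * Real.pi * V))⁻¹)) := by
  have hfin : IsFiniteMeasure F := ⟨hFmass.trans_lt ENNReal.one_lt_top⟩
  have hFζ' : Fζ = F.withDensity (Hog.rho ξ η) := hFζ
  obtain ⟨hgood, hRpos, hnn⟩ := Hog.good_tilt F hFsupp hG ξ η hζ hnbd
  obtain ⟨ε, H⟩ := Hog.hyp_tilt F ξ η hη hnbd hnbd0 hgood.prob hnn
  have hsum := fun (a b : ℝ) (ha : 0 ≤ a) (x y : ℝ) => Hog.hoglund_sum H ha b x y
  rw [← hFζ'] at hgood hRpos hnn H hsum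
  clear hFζ hFζ'
  have hmS0 : 0 < mS := hmS ▸ hgood.posS
  have hmR0 : 0 < mR := hmR ▸ hRpos
  have hmv : Hog.mv Fζ = (mS, mR) := by unfold Hog.mv; rw [hmS, hmR]
  obtain ⟨hW, -⟩ := Hog.JJ_eq hgood
  rw [hmv] at hW
  have hWV : V = Hog.qf Fζ (-mR, mS) / mS ^ 3 := by
    rw [hV]
    congr 1
    unfold Hog.qf
    rw [hmv]
    refine integral_congr_ae (ae_of_all _ fun p => ?_)
    simp only [Hog.dt]
    ring
  obtain ⟨W, hWdef⟩ : ∃ W, W = Hog.qf Fζ (-mR, mS) := ⟨_, rfl⟩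
  rw [← hWdef] at hW hWV
  have hV0 : 0 < V := by rw [hWV]; positivity
  refine ⟨hV0, ?_⟩
  intro a b ha x y hy hx hxy
  rw [hv] at hxy
  obtain ⟨hN, hz⟩ := Hog.scaling hmS0 hmR0 x y hy hxy
  obtain ⟨M, hM⟩ := Hog.gg_bound H ha b
  have hprob := H.prob
  have key := Hog.renewal hgood (fun n => x n / mS) (fun n => (x n, y n)) hN (by
      rw [hmv]
      have : Tendsto (fun n => ((0:ℝ), (√(x n / mS))⁻¹ * (y n - x n / mS * mR))) atTop
          (nhds ((0:ℝ), (0:ℝ))) := tendsto_const_nhds.prodMk_nhds hz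
      refine this.congr fun n => ?_
      ext
      · simp [hmS0.ne']
      · simp)
    (Hog.gg Fζ ξ η a b) (Hog.measurable_gg ξ η a b) (Hog.gg_nonneg Fζ ξ η a b) M hM
    (Hog.gg_cont H ha b)
  simp_rw [hsum a b ha] at key
  rw [hmv] at key
  simp only [← hWdef] at key
  obtain ⟨hI, hI2⟩ := Hog.gg_int H ha b
  have key2 := (ENNReal.tendsto_toReal (ENNReal.mul_ne_top ENNReal.ofReal_ne_top hI)).comp key
  rw [ENNReal.toReal_mul, hI2, ENNReal.toReal_ofReal (by positivity)] at key2
  have key3 := key2.const_mul (√mS)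
  have hlim : √mS * (1 / √(2 * Real.pi * W) * (Real.exp (b * η) / η *
      ∫ s in Set.Ioi a, (Fζ {p : ℝ × ℝ | s ≤ p.1}).toReal * Real.exp (ξ * s))) =
      (Real.exp (b * η) / (|η| * mS) *
            ∫ s in Set.Ioi a, (Fζ {p : ℝ × ℝ | s ≤ p.1}).toReal * Real.exp (ξ * s)) *
          (Real.sqrt (2 * Real.pi * V))⁻¹ := by
    have e : √(2 * Real.pi * V) = √(2 * Real.pi * W) / (mS * √mS) := by
      have e0 : mS * √mS = √(mS ^ 3) := by
        rw [show mS ^ 3 = mS ^ 2 * mS by ring, Real.sqrt_mul (by positivity),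
          Real.sqrt_sq hmS0.le]
      rw [e0, ← Real.sqrt_div (by positivity), hWV, mul_div_assoc]
    have e1 : √(2 * Real.pi * W) ≠ 0 := (Real.sqrt_pos.2 (by positivity)).ne'
    rw [e, abs_of_pos hη]
    generalize (∫ s in Set.Ioi a, (Fζ {p : ℝ × ℝ | s ≤ p.1}).toReal * Real.exp (ξ * s)) = I
    generalize √(2 * Real.pi * W) = A at e1
    generalize √mS = B
    field_simp
  rw [hlim] at key3
  refine key3.congr fun n => ?_
  have hxn := hx n
  simp only [Function.comp]
  rw [ENNReal.toReal_mul, ENNReal.toReal_mul, ENNReal.toReal_ofReal (Real.sqrt_nonneg _),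
    ENNReal.toReal_ofReal (Real.exp_nonneg _), Real.sqrt_div hxn.le, Real.exp_neg,
    neg_div, Real.rpow_neg hxn.le, ← Real.sqrt_eq_rpow]
  have e1 : √(x n) ≠ 0 := (Real.sqrt_pos.2 hxn).ne'
  have e2 : √mS ≠ 0 := (Real.sqrt_pos.2 hmS0).ne'
  have e3 := (Real.exp_pos (x n * ξ + y n * η)).ne'
  field_simp
end
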